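/- For every integer d ≥ 1 there exists a constant C_d > 0, depending only on d, such that for every integer n ≥ 2, every degree-d polynomial threshold function f : {-1,1}^n → {-1,1} satisfies BSA[f] ≤ exp(C_d · √(log n)). -/

import Mathlib

open Finset
open scoped Classical

/-- The embedding of `Bool` into `{-1, 1} ⊆ ℝ`. -/
noncomputable def chi (b : Bool) : ℝ := if b then 1 else -1

/-- Flip the `i`-th coordinate of a point of the Boolean cube. -/
def flipAt {n : ℕ} (x : Fin n → Bool) (i : Fin n) : Fin n → Bool :=
  Function.update x i (!x i)

/-- The sensitivity of `f` at `x`: the number of coordinates whose flip changes `f`. -/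
noncomputable def sens {n : ℕ} (f : (Fin n → Bool) → ℝ) (x : Fin n → Bool) : ℕ :=
  (Finset.univ.filter (fun i => f (flipAt x i) ≠ f x)).card

/-- The Boolean surface area `BSA[f] = E_x √(s_f(x))`, `x` uniform on the cube. -/
noncomputable def BSA {n : ℕ} (f : (Fin n → Bool) → ℝ) : ℝ :=
  (∑ x : Fin n → Bool, Real.sqrt (sens f x)) / 2 ^ n

/-- Evaluation of a polynomial at a point of the cube `{-1,1}^n`. -/
noncomputable def pev {n : ℕ} (p : MvPolynomial (Fin n) ℝ) (x : Fin n → Bool) : ℝ :=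
  MvPolynomial.eval (fun i => chi (x i)) p

/-- `f` is a degree-`d` polynomial threshold function: `f = sgn p` for some multilinear
polynomial `p` of total degree at most `d` that is nonvanishing on the cube. -/
def IsPTF (d : ℕ) {n : ℕ} (f : (Fin n → Bool) → ℝ) : Prop :=
  ∃ p : MvPolynomial (Fin n) ℝ,
    (∀ m ∈ p.support, ∀ i, m i ≤ 1) ∧ p.totalDegree ≤ d ∧
    ∀ x, pev p x ≠ 0 ∧ f x = Real.sign (pev p x)

/-!
Let `β` be about `√(log n)` and `N = 4 ^ β`. A bound `BSA[sgn c] ≤ M * Var c / E[c²]` for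
polynomials in `N ^ (k + 2)` variables is transferred to `N ^ (k + 3)` variables at the cost of a
factor depending only on `d` and of an additive error polynomial in `N`. Starting from the trivial
bound, `β` such transfers reach all `n ≤ N ^ β` variables and give
`C ^ β * N ^ O(d) = exp (O_d (√(log n)))`.

The transfer first assumes that all influences are tiny compared to the variance. Fix all variables
outside a random set containing each variable with probability `ε` of order `1 / N²`. As `√` is
concave, `√(s_f(x))` is at most about `N` times the average of the square root of the sensitivity
inside the random set, to which the known bound applies, so one needs that the restricted
polynomial has on average a relative variance of order `(Var c / E[c²]) / N`. This average is
comparable to the mean of `(c x - c y)² / (c x² + c y²)` over `ε`-correlated points `x` and `y`. By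
the invariance principle, `x` and `y` may be replaced by two points at angle `2π / N` on a random
ellipse. There `c` is a trigonometric polynomial of degree `d`; its relative variation is controlled
by the distances to its roots, and the sum over all `N` steps around the ellipse is `O_d(1)`.

If some variables are influential, a decision tree queries them until all influences are tiny or the
mean dominates the variance, in which case hypercontractivity bounds the surface area directly. Few
paths survive long, since each query lowers the expected total influence, and the mean relative
variance at the leaves has increased by at most a constant factor since it has a harmonic majorant.
-/

section Expectation

variable {ι Ω Ω' : Type*} [Fintype ι] [DecidableEq ι] [Fintype Ω] [Fintype Ω']
  {w : Ω → ℝ} {w' : Ω' → ℝ}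

/-- The expectation of `F` when the coordinates are drawn independently from a finite space with
weights `w`. The weights are not required to be normalized; lemmas that need a probability
distribution assume `w ∈ stdSimplex ℝ Ω`. -/
noncomputable def iidExpect (w : Ω → ℝ) (F : (ι → Ω) → ℝ) : ℝ :=
  ∑ ω : ι → Ω, (∏ i, w (ω i)) * F ω

lemma iidExpect_add (F G : (ι → Ω) → ℝ) :
    iidExpect w (fun ω => F ω + G ω) = iidExpect w F + iidExpect w G := by
  simp [iidExpect, mul_add, sum_add_distrib]

lemma iidExpect_sub (F G : (ι → Ω) → ℝ) :
    iidExpect w (fun ω => F ω - G ω) = iidExpect w F - iidExpect w G := by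
  simp [iidExpect, mul_sub, sum_sub_distrib]

lemma iidExpect_const_mul (a : ℝ) (F : (ι → Ω) → ℝ) :
    iidExpect w (fun ω => a * F ω) = a * iidExpect w F := by
  simp only [iidExpect, mul_sum, mul_left_comm]

lemma iidExpect_mul_const (a : ℝ) (F : (ι → Ω) → ℝ) :
    iidExpect w (fun ω => F ω * a) = iidExpect w F * a := by
  simp only [iidExpect, sum_mul, mul_assoc]

lemma iidExpect_div_const (a : ℝ) (F : (ι → Ω) → ℝ) :
    iidExpect w (fun ω => F ω / a) = iidExpect w F / a := by
  simp only [div_eq_mul_inv, iidExpect_mul_const]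

lemma iidExpect_sum {κ : Type*} (s : Finset κ) (F : κ → (ι → Ω) → ℝ) :
    iidExpect w (fun ω => ∑ k ∈ s, F k ω) = ∑ k ∈ s, iidExpect w (F k) := by
  simp only [iidExpect, mul_sum]
  exact sum_comm

lemma iidExpect_mono (hw : w ∈ stdSimplex ℝ Ω) {F G : (ι → Ω) → ℝ} (h : ∀ ω, F ω ≤ G ω) :
    iidExpect w F ≤ iidExpect w G :=
  sum_le_sum fun ω _ => mul_le_mul_of_nonneg_left (h ω) (prod_nonneg fun _ _ => hw.1 _)

lemma iidExpect_nonneg (hw : w ∈ stdSimplex ℝ Ω) {F : (ι → Ω) → ℝ} (h : ∀ ω, 0 ≤ F ω) :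
    0 ≤ iidExpect w F :=
  sum_nonneg fun ω _ => mul_nonneg (prod_nonneg fun _ _ => hw.1 _) (h ω)

lemma abs_iidExpect_le (hw : w ∈ stdSimplex ℝ Ω) (F : (ι → Ω) → ℝ) :
    |iidExpect w F| ≤ iidExpect w (fun ω => |F ω|) := by
  refine (abs_sum_le_sum_abs _ _).trans_eq (sum_congr rfl fun ω _ => ?_)
  rw [abs_mul, abs_of_nonneg (prod_nonneg fun _ _ => hw.1 _)]

lemma iidExpect_prod (h : ι → Ω → ℝ) :
    iidExpect w (fun ω => ∏ i, h i (ω i)) = ∏ i, ∑ u, w u * h i u := by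
  rw [prod_univ_sum]
  simp only [iidExpect, Fintype.piFinset_univ, ← prod_mul_distrib]

lemma iidExpect_const (hw : w ∈ stdSimplex ℝ Ω) (a : ℝ) :
    iidExpect w (fun _ : ι → Ω => a) = a := by
  have h_one : iidExpect w (fun _ : ι → Ω => (1 : ℝ)) = 1 := by
    simpa [hw.2] using iidExpect_prod (w := w) (ι := ι) fun _ _ => 1
  simpa [h_one] using iidExpect_const_mul (w := w) (ι := ι) a fun _ => 1

lemma iidExpect_resample (hw : w ∈ stdSimplex ℝ Ω) (a : ι) (F : (ι → Ω) → ℝ) :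
    iidExpect w F = iidExpect w (fun ω => ∑ u, w u * F (Function.update ω a u)) := by
  have h_split (ω : ι → Ω) : ∏ i, w (ω i) = w (ω a) * ∏ i ∈ univ.erase a, w (ω i) :=
    (mul_prod_erase _ _ (mem_univ a)).symm
  have h_update (ω : ι → Ω) (u : Ω) :
      ∏ i ∈ univ.erase a, w (Function.update ω a u i) = ∏ i ∈ univ.erase a, w (ω i) :=
    prod_congr rfl fun i hi => by rw [Function.update_of_ne (ne_of_mem_erase hi)]
  have h_left : iidExpect w F = ∑ q : (ι → Ω) × Ω, (∏ i, w (q.1 i)) * (w q.2 * F q.1) := by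
    simp only [Fintype.sum_prod_type, iidExpect, ← mul_sum, ← sum_mul, hw.2, one_mul]
  have h_right : iidExpect w (fun ω => ∑ u, w u * F (Function.update ω a u))
      = ∑ q : (ι → Ω) × Ω, (∏ i, w (q.1 i)) * (w q.2 * F (Function.update q.1 a q.2)) := by
    simp only [Fintype.sum_prod_type, iidExpect, mul_sum]
  rw [h_left, h_right]
  -- Exchanging the old and the new value of the coordinate `a` is an involution.
  refine sum_bij' (fun q _ => (Function.update q.1 a q.2, q.1 a))
    (fun q _ => (Function.update q.1 a q.2, q.1 a)) (by simp) (by simp) (by simp) (by simp) ?_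
  rintro ⟨ω, u⟩ -
  simp only [Function.update_idem, Function.update_eq_self]
  rw [h_split ω, h_split (Function.update ω a u), h_update, Function.update_self]
  ring

lemma iidExpect_mul_of_indep (hw : w ∈ stdSimplex ℝ Ω) (a : ι) (h : Ω → ℝ) (G : (ι → Ω) → ℝ)
    (hG : ∀ ω u, G (Function.update ω a u) = G ω) :
    iidExpect w (fun ω => h (ω a) * G ω) = (∑ u, w u * h u) * iidExpect w G := by
  rw [iidExpect_resample hw a, ← iidExpect_const_mul]
  simp only [Function.update_self, hG, sum_mul, mul_assoc]

lemma sq_iidExpect_le_mul (hw : w ∈ stdSimplex ℝ Ω) {F G H : (ι → Ω) → ℝ} (hF : ∀ ω, 0 ≤ F ω)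
    (hG : ∀ ω, 0 ≤ G ω) (h : ∀ ω, H ω ^ 2 ≤ F ω * G ω) :
    iidExpect w H ^ 2 ≤ iidExpect w F * iidExpect w G := by
  have h_weight (ω : ι → Ω) : 0 ≤ ∏ i, w (ω i) := prod_nonneg fun _ _ => hw.1 _
  refine sum_sq_le_sum_mul_sum_of_sq_le_mul _ (fun ω _ => mul_nonneg (h_weight ω) (hF ω))
    (fun ω _ => mul_nonneg (h_weight ω) (hG ω)) fun ω _ => ?_
  calc ((∏ i, w (ω i)) * H ω) ^ 2 = (∏ i, w (ω i)) ^ 2 * H ω ^ 2 := by ring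
    _ ≤ (∏ i, w (ω i)) ^ 2 * (F ω * G ω) := by gcongr; exact h ω
    _ = (∏ i, w (ω i)) * F ω * ((∏ i, w (ω i)) * G ω) := by ring

lemma iidExpect_comp_map {φ : Ω → Ω'} (h : ∀ v, ∑ u with φ u = v, w u = w' v)
    (F : (ι → Ω') → ℝ) : iidExpect w (fun ω => F (fun i => φ (ω i))) = iidExpect w' F := by
  have h_weight (v : ι → Ω') :
      ∏ i, w' (v i) = ∑ ω : ι → Ω with (fun i => φ (ω i)) = v, ∏ i, w (ω i) := by
    simp only [← h]
    rw [prod_univ_sum]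
    refine sum_congr (Finset.ext fun ω => ?_) fun _ _ => rfl
    simp [funext_iff]
  simp only [iidExpect, h_weight, sum_mul]
  rw [← sum_fiberwise univ (fun (ω : ι → Ω) i => φ (ω i))]
  refine sum_congr rfl fun v _ => sum_congr rfl fun ω hω => ?_
  rw [(mem_filter.mp hω).2]

/-- The weights of an independent pair. -/
noncomputable def prodWeight (w : Ω → ℝ) (w' : Ω' → ℝ) : Ω × Ω' → ℝ := fun u => w u.1 * w' u.2

lemma prodWeight_mem_stdSimplex (hw : w ∈ stdSimplex ℝ Ω) (hw' : w' ∈ stdSimplex ℝ Ω') :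
    prodWeight w w' ∈ stdSimplex ℝ (Ω × Ω') :=
  ⟨fun u => mul_nonneg (hw.1 u.1) (hw'.1 u.2), by
    simp only [prodWeight, Fintype.sum_prod_type, ← mul_sum, hw'.2, mul_one, hw.2]⟩

lemma iidExpect_prod_type (F : (ι → Ω × Ω') → ℝ) :
    iidExpect (prodWeight w w') F
      = iidExpect w (fun ω => iidExpect w' (fun ω' => F (fun i => (ω i, ω' i)))) := by
  simp only [iidExpect, prodWeight, mul_sum]
  rw [← Fintype.sum_prod_type',
    ← (Equiv.arrowProdEquivProdArrow ι (fun _ => Ω) (fun _ => Ω')).sum_comp]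
  refine sum_congr rfl fun ω _ => ?_
  simp only [Equiv.arrowProdEquivProdArrow, Equiv.coe_fn_mk, prod_mul_distrib, mul_assoc]

lemma iidExpect_comm (F : (ι → Ω) → (ι → Ω') → ℝ) :
    iidExpect w (fun ω => iidExpect w' (F ω))
      = iidExpect w' (fun ω' => iidExpect w (fun ω => F ω ω')) := by
  simp only [iidExpect, mul_sum]
  rw [sum_comm]
  exact sum_congr rfl fun _ _ => sum_congr rfl fun _ _ => mul_left_comm _ _ _

end Expectation
/-- A multilinear polynomial `∑ S, c S * ∏ i ∈ S, x i`, encoded by its coefficient function. On the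
cube `{-1, 1}^ι` the coefficients are the Fourier coefficients. -/
abbrev CubePoly (ι : Type*) := Finset ι → ℝ

namespace CubePoly

section Coefficients

variable {ι : Type*}

/-- `c` has total degree at most `d`. -/
def DegreeLE (c : CubePoly ι) (d : ℕ) : Prop := ∀ S, d < #S → c S = 0

/-- Only the variables in `J` occur in `c`. -/
def SupportedOn (c : CubePoly ι) (J : Finset ι) : Prop := ∀ S, ¬S ⊆ J → c S = 0

variable {c : CubePoly ι} {d : ℕ} {J : Finset ι}

lemma DegreeLE.mono {d' : ℕ} (hc : c.DegreeLE d) (h : d ≤ d') : c.DegreeLE d' :=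
  fun S hS => hc S (h.trans_lt hS)

lemma supportedOn_univ [Fintype ι] (c : CubePoly ι) : c.SupportedOn univ :=
  fun S hS => absurd (subset_univ S) hS

lemma DegreeLE.smul (hc : c.DegreeLE d) (a : ℝ) : (a • c).DegreeLE d := fun S hS => by
  simp [hc S hS]

variable [DecidableEq ι]

/-- The part of `c` that does not involve the variable `i`. -/
def dropVar (c : CubePoly ι) (i : ι) : CubePoly ι := fun S => if i ∈ S then 0 else c S

/-- The partial derivative of `c` in the variable `i`. -/
def deriv (c : CubePoly ι) (i : ι) : CubePoly ι := fun S => if i ∈ S then 0 else c (insert i S)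

/-- The polynomial `c` minus its mean on the cube, that is, minus its constant coefficient. -/
def centered (c : CubePoly ι) : CubePoly ι := fun S => if S = ∅ then 0 else c S

lemma SupportedOn.dropVar (hc : c.SupportedOn J) (i : ι) :
    (c.dropVar i).SupportedOn (J.erase i) := fun S hS => by
  rw [CubePoly.dropVar]
  split_ifs with h
  · rfl
  · exact hc S fun hSJ => hS (subset_erase.mpr ⟨hSJ, h⟩)

lemma SupportedOn.deriv (hc : c.SupportedOn J) (i : ι) :
    (c.deriv i).SupportedOn (J.erase i) := fun S hS => by
  rw [CubePoly.deriv]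
  split_ifs with h
  · rfl
  · exact hc _ fun hSJ => hS (subset_erase.mpr ⟨(subset_insert i S).trans hSJ, h⟩)

lemma DegreeLE.dropVar (hc : c.DegreeLE d) (i : ι) : (c.dropVar i).DegreeLE d := fun S hS => by
  simp [CubePoly.dropVar, hc S hS]

lemma DegreeLE.deriv_of_succ (hc : c.DegreeLE (d + 1)) (i : ι) : (c.deriv i).DegreeLE d :=
  fun S hS => by
    rw [CubePoly.deriv]
    split_ifs with h
    · rfl
    · exact hc _ (by rw [card_insert_of_notMem h]; lia)

lemma DegreeLE.deriv (hc : c.DegreeLE d) (i : ι) : (c.deriv i).DegreeLE d :=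
  (hc.mono d.le_succ).deriv_of_succ i

lemma DegreeLE.deriv_eq_zero (hc : c.DegreeLE 0) (i : ι) : c.deriv i = 0 := by
  ext S
  simp [CubePoly.deriv, hc (insert i S) (card_pos.mpr (insert_nonempty i S))]

lemma DegreeLE.centered (hc : c.DegreeLE d) : c.centered.DegreeLE d := fun S hS => by
  simp [CubePoly.centered, hc S hS]

end Coefficients

section Evaluation

variable {ι : Type*} [Fintype ι]

/-- The value of the multilinear polynomial `c` at `x`. -/
noncomputable def eval (c : CubePoly ι) (x : ι → ℝ) : ℝ := ∑ S, c S * ∏ i ∈ S, x i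

/-- The sum of the squares of the coefficients, which by Parseval's identity is the second moment
of `c` on the cube. -/
noncomputable def normSq (c : CubePoly ι) : ℝ := ∑ S, c S ^ 2

lemma eval_add (c c' : CubePoly ι) (x : ι → ℝ) : (c + c').eval x = c.eval x + c'.eval x := by
  simp [eval, add_mul, sum_add_distrib]

lemma eval_smul (a : ℝ) (c : CubePoly ι) (x : ι → ℝ) : (a • c).eval x = a * c.eval x := by
  simp [eval, mul_assoc, mul_sum]

lemma eval_zero (x : ι → ℝ) : eval 0 x = 0 := by simp [eval]

lemma SupportedOn.eval_congr {c : CubePoly ι} {J : Finset ι} (hc : c.SupportedOn J) {x y : ι → ℝ}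
    (h : ∀ i ∈ J, x i = y i) : c.eval x = c.eval y := by
  refine sum_congr rfl fun S _ => ?_
  by_cases hS : S ⊆ J
  · rw [prod_congr rfl fun i hi => h i (hS hi)]
  · simp [hc S hS]

lemma normSq_nonneg (c : CubePoly ι) : 0 ≤ c.normSq := sum_nonneg fun _ _ => sq_nonneg _

lemma normSq_eq_zero {c : CubePoly ι} : c.normSq = 0 ↔ c = 0 := by
  simp [normSq, sum_eq_zero_iff_of_nonneg fun S _ => sq_nonneg (c S), funext_iff]

lemma normSq_smul (a : ℝ) (c : CubePoly ι) : (a • c).normSq = a ^ 2 * c.normSq := by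
  simp [normSq, mul_pow, mul_sum]

lemma SupportedOn.eval_eq_of_empty {c : CubePoly ι} (hc : c.SupportedOn ∅) (x : ι → ℝ) :
    c.eval x = c ∅ := by
  rw [eval, Fintype.sum_eq_single ∅ fun S hS => by rw [hc S (by simpa using hS), zero_mul]]
  simp

lemma SupportedOn.normSq_eq_of_empty {c : CubePoly ι} (hc : c.SupportedOn ∅) :
    c.normSq = c ∅ ^ 2 :=
  Fintype.sum_eq_single ∅ fun S hS => by rw [hc S (by simpa using hS), zero_pow two_ne_zero]

variable [DecidableEq ι]

/-- The variance of `c` on the cube. -/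
noncomputable def variance (c : CubePoly ι) : ℝ := ∑ S ∈ univ.erase ∅, c S ^ 2

/-- The influence of the variable `i` on `c`. -/
noncomputable def influence (c : CubePoly ι) (i : ι) : ℝ := (c.deriv i).normSq

lemma sum_finset_eq_sum_notMem (i : ι) (f : Finset ι → ℝ) :
    ∑ S, f S = ∑ S with i ∉ S, f S + ∑ S with i ∉ S, f (insert i S) := by
  have h_powerset : ({S | i ∉ S} : Finset (Finset ι)) = (univ.erase i).powerset := by
    ext S
    simp [subset_erase]
  rw [h_powerset, ← sum_powerset_insert (notMem_erase i univ), insert_erase (mem_univ i),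
    powerset_univ]

lemma eval_eq_dropVar_add_mul_deriv (i : ι) (c : CubePoly ι) (x : ι → ℝ) :
    c.eval x = (c.dropVar i).eval x + x i * (c.deriv i).eval x := by
  rw [eval, sum_finset_eq_sum_notMem i, eval, eval, sum_filter, sum_filter, mul_sum]
  congr 1 <;> refine sum_congr rfl fun S _ => ?_
  · simp [dropVar, ite_mul, ite_not]
  · by_cases h : i ∈ S
    · simp [deriv, h]
    · simp [deriv, h, prod_insert h, mul_left_comm]

lemma normSq_eq_dropVar_add_deriv (i : ι) (c : CubePoly ι) :
    c.normSq = (c.dropVar i).normSq + (c.deriv i).normSq := by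
  rw [normSq, sum_finset_eq_sum_notMem i, normSq, normSq, sum_filter, sum_filter]
  congr 1 <;> refine sum_congr rfl fun S _ => ?_
  · simp [dropVar, ite_pow, ite_not]
  · simp [deriv, ite_pow, ite_not]

lemma normSq_eq_variance_add (c : CubePoly ι) : c.normSq = c.variance + c ∅ ^ 2 :=
  (sum_erase_add _ _ (mem_univ ∅)).symm

lemma variance_nonneg (c : CubePoly ι) : 0 ≤ c.variance := sum_nonneg fun _ _ => sq_nonneg _

lemma variance_le_normSq (c : CubePoly ι) : c.variance ≤ c.normSq := by
  rw [normSq_eq_variance_add]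
  exact le_add_of_nonneg_right (sq_nonneg _)

lemma variance_smul (a : ℝ) (c : CubePoly ι) : (a • c).variance = a ^ 2 * c.variance := by
  simp only [variance, Pi.smul_apply, smul_eq_mul, mul_pow, mul_sum]

lemma eval_centered (c : CubePoly ι) (x : ι → ℝ) : c.centered.eval x = c.eval x - c ∅ := by
  rw [eval, eval, ← add_sum_erase _ _ (mem_univ ∅),
    ← add_sum_erase _ (fun S => c S * ∏ i ∈ S, x i) (mem_univ ∅)]
  simp only [centered, if_true, prod_empty, mul_one, zero_add, add_sub_cancel_left]
  exact sum_congr rfl fun S hS => by rw [if_neg (ne_of_mem_erase hS)]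

lemma normSq_centered (c : CubePoly ι) : c.centered.normSq = c.variance := by
  rw [normSq_eq_variance_add, variance, variance]
  simp only [centered, if_true, zero_pow two_ne_zero, add_zero]
  exact sum_congr rfl fun S hS => by rw [if_neg (ne_of_mem_erase hS)]

lemma influence_nonneg (c : CubePoly ι) (i : ι) : 0 ≤ c.influence i := normSq_nonneg _

lemma influence_smul (a : ℝ) (c : CubePoly ι) (i : ι) :
    (a • c).influence i = a ^ 2 * c.influence i := by
  have h_deriv : (a • c).deriv i = a • c.deriv i := by
    ext S
    simp [deriv]
  rw [influence, h_deriv, normSq_smul, influence]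

lemma influence_eq_sum_mem (c : CubePoly ι) (i : ι) :
    c.influence i = ∑ S with i ∈ S, c S ^ 2 := by
  rw [sum_filter, sum_finset_eq_sum_notMem i,
    sum_eq_zero fun S hS => if_neg (mem_filter.mp hS).2, zero_add, influence, normSq, sum_filter]
  refine sum_congr rfl fun S _ => ?_
  simp [deriv, ite_pow, ite_not]

lemma sum_influence (c : CubePoly ι) : ∑ i, c.influence i = ∑ S ∈ univ.erase ∅, #S * c S ^ 2 := by
  rw [sum_erase _ (by simp)]
  simp only [influence_eq_sum_mem, sum_filter]
  rw [sum_comm]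
  refine sum_congr rfl fun S _ => ?_
  simp

lemma variance_le_sum_influence (c : CubePoly ι) : c.variance ≤ ∑ i, c.influence i := by
  rw [sum_influence]
  refine sum_le_sum fun S hS => le_mul_of_one_le_left (sq_nonneg _) ?_
  exact_mod_cast card_pos.mpr (nonempty_iff_ne_empty.mpr (ne_of_mem_erase hS))

lemma DegreeLE.sum_influence_le {c : CubePoly ι} {d : ℕ} (hc : c.DegreeLE d) :
    ∑ i, c.influence i ≤ d * c.variance := by
  rw [sum_influence, variance, mul_sum]
  refine sum_le_sum fun S _ => ?_
  by_cases h : d < #S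
  · simp [hc S h]
  · gcongr
    exact not_lt.mp h

end Evaluation

end CubePoly
section Hypercontractivity

variable {ι Ω : Type*} [Fintype ι] [DecidableEq ι] [Fintype Ω] {w : Ω → ℝ}

/-- `U` is a random variable with the moments `0`, `1`, `0` of a random sign and with `U² ≤ 2`.
The bound is `2` rather than `1` so that `cos ψ * a + sin ψ * b` with independent random signs `a`
and `b` qualifies. -/
structure IsSignLike (w U : Ω → ℝ) : Prop where
  mean : ∑ u, w u * U u = 0
  sq : ∑ u, w u * U u ^ 2 = 1
  cube : ∑ u, w u * U u ^ 3 = 0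
  sq_le : ∀ u, U u ^ 2 ≤ 2

lemma IsSignLike.sum_pow_four_le {U : Ω → ℝ} (hU : IsSignLike w U) (hw : w ∈ stdSimplex ℝ Ω) :
    ∑ u, w u * U u ^ 4 ≤ 4 := by
  calc ∑ u, w u * U u ^ 4 ≤ ∑ u, w u * 4 := by
        refine sum_le_sum fun u _ => mul_le_mul_of_nonneg_left ?_ (hw.1 u)
        nlinarith [hU.sq_le u, sq_nonneg (U u)]
    _ = 4 := by rw [← sum_mul, hw.2, one_mul]

lemma iidExpect_prod_mul_prod (hw : w ∈ stdSimplex ℝ Ω) {U V : ι → Ω → ℝ} {ρ : ℝ}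
    (hU : ∀ i, ∑ u, w u * U i u = 0) (hV : ∀ i, ∑ u, w u * V i u = 0)
    (hUV : ∀ i, ∑ u, w u * (U i u * V i u) = ρ) (S T : Finset ι) :
    iidExpect w (fun ω => (∏ i ∈ S, U i (ω i)) * ∏ i ∈ T, V i (ω i))
      = if S = T then ρ ^ #S else 0 := by
  have h_prod (ω : ι → Ω) : (∏ i ∈ S, U i (ω i)) * ∏ i ∈ T, V i (ω i)
      = ∏ i, (if i ∈ S then U i (ω i) else 1) * (if i ∈ T then V i (ω i) else 1) := by
    rw [prod_mul_distrib, prod_ite_mem, prod_ite_mem, univ_inter, univ_inter]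
  simp only [h_prod]
  rw [iidExpect_prod fun i u => (if i ∈ S then U i u else 1) * (if i ∈ T then V i u else 1)]
  split_ifs with hST
  · subst hST
    have h_factor (i : ι) :
        ∑ u, w u * ((if i ∈ S then U i u else 1) * (if i ∈ S then V i u else 1))
          = if i ∈ S then ρ else 1 := by
      split_ifs
      · exact hUV i
      · simp [hw.2]
    simp only [h_factor]
    rw [prod_ite_mem, univ_inter, prod_const]
  · obtain ⟨i, hi⟩ : ∃ i, ¬(i ∈ S ↔ i ∈ T) := not_forall.mp fun h => hST (Finset.ext h)
    refine prod_eq_zero (mem_univ i) ?_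
    by_cases hS : i ∈ S
    · simp [hS, show i ∉ T by tauto, hU]
    · simp [hS, show i ∈ T by tauto, hV]

namespace CubePoly

lemma iidExpect_eval_mul_eval (hw : w ∈ stdSimplex ℝ Ω) {U V : ι → Ω → ℝ} {ρ : ℝ}
    (hU : ∀ i, ∑ u, w u * U i u = 0) (hV : ∀ i, ∑ u, w u * V i u = 0)
    (hUV : ∀ i, ∑ u, w u * (U i u * V i u) = ρ) (c c' : CubePoly ι) :
    iidExpect w (fun ω => c.eval (fun i => U i (ω i)) * c'.eval (fun i => V i (ω i)))
      = ∑ S, c S * c' S * ρ ^ #S := by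
  have h_expand (ω : ι → Ω) : c.eval (fun i => U i (ω i)) * c'.eval (fun i => V i (ω i))
      = ∑ S, ∑ T, (c S * c' T) * ((∏ i ∈ S, U i (ω i)) * ∏ i ∈ T, V i (ω i)) := by
    simp only [eval, sum_mul_sum, mul_mul_mul_comm]
  simp only [h_expand, iidExpect_sum, iidExpect_const_mul, iidExpect_prod_mul_prod hw hU hV hUV]
  simp

lemma iidExpect_eval_sq (hw : w ∈ stdSimplex ℝ Ω) {U : ι → Ω → ℝ} (hU : ∀ i, IsSignLike w (U i))
    (c : CubePoly ι) : iidExpect w (fun ω => c.eval (fun i => U i (ω i)) ^ 2) = c.normSq := by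
  simp only [sq (c.eval _)]
  rw [iidExpect_eval_mul_eval hw (fun i => (hU i).mean) (fun i => (hU i).mean) (ρ := 1)
    (fun i => by simpa [sq] using (hU i).sq)]
  simp [normSq, sq]

omit [Fintype Ω] in
lemma SupportedOn.eval_update {J : Finset ι} {c : CubePoly ι} (hc : c.SupportedOn J) {a : ι}
    (ha : a ∉ J) (U : ι → Ω → ℝ) (ω : ι → Ω) (u : Ω) :
    c.eval (fun i => U i (Function.update ω a u i)) = c.eval (fun i => U i (ω i)) :=
  hc.eval_congr fun i hi => by rw [Function.update_of_ne (ne_of_mem_of_not_mem hi ha)]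

/-- Only the even powers of the variable `a` survive, as its first and third moments vanish. -/
lemma iidExpect_add_mul_pow_four (hw : w ∈ stdSimplex ℝ Ω) {U : Ω → ℝ} (hU : IsSignLike w U)
    (a : ι) {A B : (ι → Ω) → ℝ} (hA : ∀ ω u, A (Function.update ω a u) = A ω)
    (hB : ∀ ω u, B (Function.update ω a u) = B ω) :
    iidExpect w (fun ω => (A ω + U (ω a) * B ω) ^ 4)
      = iidExpect w (fun ω => A ω ^ 4) + 6 * iidExpect w (fun ω => A ω ^ 2 * B ω ^ 2)
        + (∑ u, w u * U u ^ 4) * iidExpect w (fun ω => B ω ^ 4) := by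
  have h_binomial (ω : ι → Ω) : (A ω + U (ω a) * B ω) ^ 4
      = A ω ^ 4 + (U (ω a) * (4 * A ω ^ 3 * B ω) + (U (ω a) ^ 2 * (6 * (A ω ^ 2 * B ω ^ 2))
        + (U (ω a) ^ 3 * (4 * A ω * B ω ^ 3) + U (ω a) ^ 4 * B ω ^ 4))) := by ring
  simp only [h_binomial]
  rw [iidExpect_add, iidExpect_add, iidExpect_add, iidExpect_add,
    iidExpect_mul_of_indep hw a U (fun ω => 4 * A ω ^ 3 * B ω)
      (fun ω u => by simp only [hA, hB]),
    iidExpect_mul_of_indep hw a (fun u => U u ^ 2) (fun ω => 6 * (A ω ^ 2 * B ω ^ 2))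
      (fun ω u => by simp only [hA, hB]),
    iidExpect_mul_of_indep hw a (fun u => U u ^ 3) (fun ω => 4 * A ω * B ω ^ 3)
      (fun ω u => by simp only [hA, hB]),
    iidExpect_mul_of_indep hw a (fun u => U u ^ 4) (fun ω => B ω ^ 4)
      (fun ω u => by simp only [hB]),
    hU.mean, hU.sq, hU.cube, iidExpect_const_mul]
  ring

lemma iidExpect_add_mul_pow_four_le (hw : w ∈ stdSimplex ℝ Ω) {U : Ω → ℝ} (hU : IsSignLike w U)
    (a : ι) {A B : (ι → Ω) → ℝ} (hA : ∀ ω u, A (Function.update ω a u) = A ω)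
    (hB : ∀ ω u, B (Function.update ω a u) = B ω) {K α β : ℝ} (hK : 0 ≤ K) (hα : 0 ≤ α)
    (hβ : 0 ≤ β) (hA_le : iidExpect w (fun ω => A ω ^ 4) ≤ K * α ^ 2)
    (hB_le : 9 * iidExpect w (fun ω => B ω ^ 4) ≤ K * β ^ 2) :
    iidExpect w (fun ω => (A ω + U (ω a) * B ω) ^ 4) ≤ K * (α + β) ^ 2 := by
  have hB_nonneg : 0 ≤ iidExpect w (fun ω => B ω ^ 4) :=
    iidExpect_nonneg hw fun ω => by positivity
  have h_cross : 3 * iidExpect w (fun ω => A ω ^ 2 * B ω ^ 2) ≤ K * (α * β) := by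
    refine (abs_le_of_sq_le_sq' ?_ (by positivity)).2
    have h_cauchySchwarz := sq_iidExpect_le_mul hw (F := fun ω => A ω ^ 4)
      (G := fun ω => B ω ^ 4) (H := fun ω => A ω ^ 2 * B ω ^ 2)
      (fun ω => by positivity) (fun ω => by positivity) (fun ω => by apply le_of_eq; ring)
    calc (3 * iidExpect w (fun ω => A ω ^ 2 * B ω ^ 2)) ^ 2
        ≤ iidExpect w (fun ω => A ω ^ 4) * (9 * iidExpect w (fun ω => B ω ^ 4)) := by linarith
      _ ≤ (K * α ^ 2) * (K * β ^ 2) := mul_le_mul hA_le hB_le (by linarith) (by positivity)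
      _ = (K * (α * β)) ^ 2 := by ring
  have h_fourth := mul_le_mul_of_nonneg_right (hU.sum_pow_four_le hw) hB_nonneg
  rw [iidExpect_add_mul_pow_four hw hU a hA hB]
  linear_combination hA_le + 2 * h_cross + h_fourth + hB_le + 5 * hB_nonneg

lemma SupportedOn.iidExpect_eval_pow_four_le (hw : w ∈ stdSimplex ℝ Ω) {U : ι → Ω → ℝ}
    (hU : ∀ i, IsSignLike w (U i)) {J : Finset ι} {d : ℕ} {c : CubePoly ι} (hs : c.SupportedOn J)
    (hc : c.DegreeLE d) :
    iidExpect w (fun ω => c.eval (fun i => U i (ω i)) ^ 4) ≤ 9 ^ d * c.normSq ^ 2 := by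
  induction J using Finset.induction_on generalizing d c with
  | empty =>
    simp only [hs.eval_eq_of_empty, hs.normSq_eq_of_empty, iidExpect_const hw, ← pow_mul]
    exact le_mul_of_one_le_left (by positivity) (one_le_pow₀ (by norm_num))
  | insert a J ha ih =>
    have hs_drop := erase_insert ha ▸ hs.dropVar a
    have hs_deriv := erase_insert ha ▸ hs.deriv a
    -- Differentiation lowers the degree, which is what pays for the factor 9.
    have h_deriv : 9 * iidExpect w (fun ω => (c.deriv a).eval (fun i => U i (ω i)) ^ 4)
        ≤ 9 ^ d * (c.deriv a).normSq ^ 2 := by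
      cases d with
      | zero =>
        simp only [hc.deriv_eq_zero, eval_zero, iidExpect_const hw, zero_pow four_ne_zero, mul_zero]
        positivity
      | succ d =>
        rw [pow_succ', mul_assoc]
        exact mul_le_mul_of_nonneg_left (ih hs_deriv (hc.deriv_of_succ a)) (by norm_num)
    simp only [eval_eq_dropVar_add_mul_deriv a c]
    rw [normSq_eq_dropVar_add_deriv a c]
    exact iidExpect_add_mul_pow_four_le hw (hU a) a
      (fun ω u => hs_drop.eval_update ha U ω u) (fun ω u => hs_deriv.eval_update ha U ω u)
      (by positivity) (normSq_nonneg _) (normSq_nonneg _) (ih hs_drop (hc.dropVar a)) h_deriv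

lemma DegreeLE.iidExpect_eval_pow_four_le (hw : w ∈ stdSimplex ℝ Ω) {U : ι → Ω → ℝ}
    (hU : ∀ i, IsSignLike w (U i)) {d : ℕ} {c : CubePoly ι} (hc : c.DegreeLE d) :
    iidExpect w (fun ω => c.eval (fun i => U i (ω i)) ^ 4) ≤ 9 ^ d * c.normSq ^ 2 :=
  c.supportedOn_univ.iidExpect_eval_pow_four_le hw hU hc

end CubePoly

end Hypercontractivity
section Cube

/-- The weights of a uniform random bit. -/
noncomputable def uniformBit : Bool → ℝ := fun _ => 1 / 2

lemma uniformBit_mem_stdSimplex : uniformBit ∈ stdSimplex ℝ Bool :=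
  ⟨fun _ => by norm_num [uniformBit], by norm_num [uniformBit]⟩

lemma chi_sq (b : Bool) : chi b ^ 2 = 1 := by cases b <;> simp [chi]

lemma isSignLike_chi : IsSignLike uniformBit chi where
  mean := by simp [uniformBit, chi]
  sq := by norm_num [uniformBit, chi_sq]
  cube := by norm_num [uniformBit, chi]
  sq_le u := by norm_num [chi_sq]

variable {ι : Type*} [Fintype ι] [DecidableEq ι]

lemma iidExpect_flip (i : ι) (F : (ι → Bool) → ℝ) :
    iidExpect uniformBit (fun x => F (Function.update x i (!x i))) = iidExpect uniformBit F := by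
  rw [iidExpect_resample uniformBit_mem_stdSimplex i,
    iidExpect_resample uniformBit_mem_stdSimplex i F]
  simp [uniformBit, add_comm]

omit [Fintype ι] in
lemma prod_chi_mul_prod_chi (S T : Finset ι) (x : ι → Bool) :
    (∏ i ∈ S, chi (x i)) * ∏ i ∈ T, chi (x i) = ∏ i ∈ symmDiff S T, chi (x i) := by
  have h_indicator {U : Finset ι} (hU : U ⊆ S ∪ T) :
      ∏ i ∈ U, chi (x i) = ∏ i ∈ S ∪ T, if i ∈ U then chi (x i) else 1 := by
    rw [prod_ite_mem, inter_eq_right.mpr hU]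
  rw [h_indicator subset_union_left, h_indicator subset_union_right, h_indicator symmDiff_le_sup,
    ← prod_mul_distrib]
  refine prod_congr rfl fun i _ => ?_
  by_cases hS : i ∈ S <;> by_cases hT : i ∈ T <;> simp [hS, hT, mem_symmDiff, ← sq, chi_sq]

lemma sqrt_natCast_le (k : ℕ) : √(k : ℝ) ≤ k :=
  Real.sqrt_le_iff.mpr ⟨k.cast_nonneg, by exact_mod_cast Nat.le_self_pow two_ne_zero k⟩

lemma pow_mul_pow_le_self {s t : ℝ} (hs : 1 ≤ s) (ht : 0 ≤ t) (h : s ^ 4 * t ≤ 1) {β m : ℕ}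
    (hm : β + 2 ≤ m) : s ^ (2 * β) * (s * t) ^ m ≤ t := by
  obtain ⟨q, rfl⟩ := Nat.exists_eq_add_of_le hm
  have h_pow_le {k : ℕ} (hk : k ≤ 4) : s ^ k * t ≤ 1 :=
    (mul_le_mul_of_nonneg_right (pow_le_pow_right₀ hs hk) ht).trans h
  have h_factors : (s ^ 3 * t) ^ β * (s ^ 1 * t) ^ q * (s ^ 2 * t) ≤ 1 :=
    mul_le_one₀ (mul_le_one₀ (pow_le_one₀ (by positivity) (h_pow_le (by norm_num))) (by positivity)
      (pow_le_one₀ (by positivity) (h_pow_le (by norm_num)))) (by positivity)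
      (h_pow_le (by norm_num))
  calc s ^ (2 * β) * (s * t) ^ (β + 2 + q)
      = (s ^ 3 * t) ^ β * (s ^ 1 * t) ^ q * (s ^ 2 * t) * t := by ring
    _ ≤ t := mul_le_of_le_one_left ht h_factors

namespace CubePoly

/-- The value of `c` at a point of the cube. -/
noncomputable def evalCube (c : CubePoly ι) (x : ι → Bool) : ℝ := c.eval fun i => chi (x i)

/-- The number of coordinates whose flip reverses the sign of `c` at `x`. When `c` does not vanish
on the cube, this is the sensitivity of the threshold function `sgn c`. -/
noncomputable def signChanges (c : CubePoly ι) (x : ι → Bool) : ℕ :=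
  #{i | c.evalCube x * c.evalCube (Function.update x i (!x i)) < 0}

/-- The Boolean surface area of `sgn c`, see `CubePoly.signChanges`. -/
noncomputable def surfaceArea (c : CubePoly ι) : ℝ :=
  iidExpect uniformBit fun x => √(c.signChanges x : ℝ)

/-- The variance of `c` divided by its second moment. It is scale invariant and at most `1`, and it
is the quantity in which the bounds on the surface area are homogeneous. -/
noncomputable def relVariance (c : CubePoly ι) : ℝ := c.variance / c.normSq

/-- The multilinear polynomial which agrees with the square of `c` on the cube. -/
noncomputable def square (c : CubePoly ι) : CubePoly ι := fun U => ∑ S, c S * c (symmDiff S U)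

variable {c : CubePoly ι} {d : ℕ} {J : Finset ι}

lemma relVariance_nonneg (c : CubePoly ι) : 0 ≤ c.relVariance :=
  div_nonneg c.variance_nonneg c.normSq_nonneg

lemma relVariance_le_one (c : CubePoly ι) : c.relVariance ≤ 1 :=
  div_le_one_of_le₀ c.variance_le_normSq c.normSq_nonneg

lemma variance_div_le_two_mul_relVariance (h : c.variance ≤ c ∅ ^ 2) :
    c.variance / c ∅ ^ 2 ≤ 2 * c.relVariance := by
  rcases (sq_nonneg (c ∅)).eq_or_lt with h_zero | h_pos
  · rw [← h_zero, div_zero]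
    exact mul_nonneg zero_le_two c.relVariance_nonneg
  · have h_normSq : 0 < c.normSq := by
      rw [normSq_eq_variance_add]
      linarith [c.variance_nonneg]
    rw [relVariance, mul_div_assoc', div_le_div_iff₀ h_pos h_normSq, normSq_eq_variance_add]
    nlinarith [c.variance_nonneg]

lemma iidExpect_evalCube_sq (c : CubePoly ι) :
    iidExpect uniformBit (fun x => c.evalCube x ^ 2) = c.normSq :=
  iidExpect_eval_sq uniformBit_mem_stdSimplex (fun _ => isSignLike_chi) c

lemma iidExpect_evalCube (c : CubePoly ι) :
    iidExpect uniformBit (fun x => c.evalCube x) = c ∅ := by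
  have h_mean := isSignLike_chi.mean
  have h_pair := iidExpect_eval_mul_eval uniformBit_mem_stdSimplex (ρ := 1) (fun _ => h_mean)
    (fun _ => h_mean) (fun _ => by simpa [sq] using isSignLike_chi.sq) c (Pi.single ∅ 1)
  have h_one (x : ι → ℝ) : eval (Pi.single ∅ 1) x = 1 := by simp [eval, Pi.single_apply]
  simpa only [evalCube, h_one, mul_one, one_pow, Pi.single_apply, mul_ite, mul_zero, sum_ite_eq',
    mem_univ, if_true] using h_pair

lemma DegreeLE.iidExpect_evalCube_pow_four_le (hc : c.DegreeLE d) :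
    iidExpect uniformBit (fun x => c.evalCube x ^ 4) ≤ 9 ^ d * c.normSq ^ 2 :=
  hc.iidExpect_eval_pow_four_le uniformBit_mem_stdSimplex fun _ => isSignLike_chi

lemma evalCube_centered (c : CubePoly ι) (x : ι → Bool) :
    c.centered.evalCube x = c.evalCube x - c ∅ :=
  c.eval_centered _

lemma DegreeLE.square (hc : c.DegreeLE d) : c.square.DegreeLE (2 * d) := fun U hU => by
  refine sum_eq_zero fun S _ => ?_
  have h_card : #U ≤ #S + #(symmDiff S U) := by
    calc #U = #(symmDiff S (symmDiff S U)) := by rw [symmDiff_symmDiff_cancel_left]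
      _ ≤ #(S ∪ symmDiff S U) := card_le_card symmDiff_le_sup
      _ ≤ #S + #(symmDiff S U) := card_union_le _ _
  rcases lt_or_ge d #S with h | h
  · rw [hc S h, zero_mul]
  · rw [hc (symmDiff S U) (by lia), mul_zero]

lemma evalCube_square (c : CubePoly ι) (x : ι → Bool) :
    c.square.evalCube x = c.evalCube x ^ 2 := by
  simp only [evalCube, eval, square, sum_mul]
  rw [sq, sum_mul_sum, sum_comm]
  refine sum_congr rfl fun S _ => ?_
  refine sum_bij' (fun U _ => symmDiff S U) (fun U _ => symmDiff S U) (by simp) (by simp)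
    (by simp) (by simp) fun U _ => ?_
  rw [mul_mul_mul_comm, prod_chi_mul_prod_chi, symmDiff_symmDiff_cancel_left]

lemma DegreeLE.normSq_square_le (hc : c.DegreeLE d) :
    c.square.normSq ≤ 9 ^ d * c.normSq ^ 2 := by
  simpa only [← iidExpect_evalCube_sq, evalCube_square, ← pow_mul]
    using hc.iidExpect_evalCube_pow_four_le

/-- The fourth moment bound is applied to iterated squares. -/
lemma DegreeLE.iidExpect_evalCube_pow_le (hc : c.DegreeLE d) (j : ℕ) :
    iidExpect uniformBit (fun x => c.evalCube x ^ (2 * 2 ^ j))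
      ≤ (9 ^ (d * j) * c.normSq) ^ 2 ^ j := by
  induction j generalizing d c with
  | zero => simp [iidExpect_evalCube_sq]
  | succ j ih =>
    have h_square (x : ι → Bool) :
        c.evalCube x ^ (2 * 2 ^ (j + 1)) = c.square.evalCube x ^ (2 * 2 ^ j) := by
      rw [evalCube_square, ← pow_mul, pow_succ', mul_left_comm]
    have h_nonneg := c.square.normSq_nonneg
    have h_normSq : c.square.normSq ≤ 9 ^ (2 * d) * c.normSq ^ 2 :=
      hc.normSq_square_le.trans (by gcongr <;> [norm_num; lia])
    simp only [h_square]
    calc iidExpect uniformBit (fun x => c.square.evalCube x ^ (2 * 2 ^ j))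
        ≤ (9 ^ (2 * d * j) * c.square.normSq) ^ 2 ^ j := ih hc.square
      _ ≤ (9 ^ (2 * d * j) * (9 ^ (2 * d) * c.normSq ^ 2)) ^ 2 ^ j := by gcongr
      _ = ((9 ^ (d * (j + 1)) * c.normSq) ^ 2) ^ 2 ^ j := by ring
      _ = (9 ^ (d * (j + 1)) * c.normSq) ^ 2 ^ (j + 1) := by rw [← pow_mul, pow_succ']

lemma SupportedOn.evalCube_update (hc : c.SupportedOn J) {i : ι} (hi : i ∉ J) (x : ι → Bool)
    (b : Bool) : c.evalCube (Function.update x i b) = c.evalCube x :=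
  hc.eval_update hi (fun _ => chi) x b

lemma SupportedOn.mem_of_evalCube_mul_flip_neg (hc : c.SupportedOn J) {x : ι → Bool} {i : ι}
    (h : c.evalCube x * c.evalCube (Function.update x i (!x i)) < 0) : i ∈ J := by
  by_contra hi
  rw [hc.evalCube_update hi] at h
  exact h.not_ge (mul_self_nonneg _)

lemma SupportedOn.signChanges_le (hc : c.SupportedOn J) (x : ι → Bool) :
    c.signChanges x ≤ #J :=
  card_le_card fun _ hi => hc.mem_of_evalCube_mul_flip_neg (mem_filter.mp hi).2

lemma surfaceArea_zero : surfaceArea (0 : CubePoly ι) = 0 := by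
  simp [surfaceArea, signChanges, evalCube, eval_zero, iidExpect]

lemma SupportedOn.surfaceArea_le_card (hc : c.SupportedOn J) : c.surfaceArea ≤ #J := by
  rw [← iidExpect_const (ι := ι) uniformBit_mem_stdSimplex (#J : ℝ)]
  exact iidExpect_mono uniformBit_mem_stdSimplex fun x =>
    (sqrt_natCast_le _).trans (by exact_mod_cast hc.signChanges_le x)

/-- If `c` changes sign between neighbours, then at one of them its deviation from the mean is at
least the mean. -/
lemma SupportedOn.signChanges_le_sum (hc : c.SupportedOn J) {h : (ι → Bool) → ℝ}
    (h_nonneg : ∀ x, 0 ≤ h x) (h_one_le : ∀ x, c.evalCube x * c ∅ ≤ 0 → 1 ≤ h x)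
    (x : ι → Bool) :
    (c.signChanges x : ℝ) ≤ ∑ i ∈ J, (h x + h (Function.update x i (!x i))) := by
  have h_subset :
      ({i | c.evalCube x * c.evalCube (Function.update x i (!x i)) < 0} : Finset ι) ⊆ J :=
    fun i hi => hc.mem_of_evalCube_mul_flip_neg (mem_filter.mp hi).2
  rw [signChanges, ← nsmul_one, ← sum_const]
  refine (sum_le_sum fun i hi => ?_).trans (sum_le_sum_of_subset_of_nonneg h_subset
    fun i _ _ => add_nonneg (h_nonneg _) (h_nonneg _))
  have h_neg := (mem_filter.mp hi).2
  by_cases hx : c.evalCube x * c ∅ ≤ 0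
  · linarith [h_one_le x hx, h_nonneg (Function.update x i (!x i))]
  · have h_flip : c.evalCube (Function.update x i (!x i)) * c ∅ ≤ 0 := by
      by_contra h_pos
      nlinarith [mul_pos (not_le.mp hx) (not_le.mp h_pos), sq_nonneg (c ∅)]
    linarith [h_one_le _ h_flip, h_nonneg x]

lemma SupportedOn.surfaceArea_le_moment (hc : c.SupportedOn J) (h_mean : c ∅ ≠ 0) (Q : ℕ) :
    c.surfaceArea ≤ 2 * #J *
      (iidExpect uniformBit (fun x => c.centered.evalCube x ^ (2 * Q)) / c ∅ ^ (2 * Q)) := by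
  set h : (ι → Bool) → ℝ := fun x => c.centered.evalCube x ^ (2 * Q) / c ∅ ^ (2 * Q) with h_def
  have h_nonneg (x : ι → Bool) : 0 ≤ h x :=
    div_nonneg ((even_two_mul Q).pow_nonneg _) ((even_two_mul Q).pow_nonneg _)
  have h_one_le (x : ι → Bool) (hx : c.evalCube x * c ∅ ≤ 0) : 1 ≤ h x := by
    simp only [h_def]
    rw [← div_pow, pow_mul]
    refine one_le_pow₀ ?_
    rw [div_pow, one_le_div (by positivity), evalCube_centered]
    nlinarith [sq_nonneg (c.evalCube x)]
  calc c.surfaceArea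
      ≤ iidExpect uniformBit (fun x => ∑ i ∈ J, (h x + h (Function.update x i (!x i)))) :=
        iidExpect_mono uniformBit_mem_stdSimplex fun x =>
          (sqrt_natCast_le _).trans (hc.signChanges_le_sum h_nonneg h_one_le x)
    _ = ∑ i ∈ J, (2 * iidExpect uniformBit h) := by
        rw [iidExpect_sum]
        exact sum_congr rfl fun i _ => by rw [iidExpect_add, iidExpect_flip i h, two_mul]
    _ = _ := by rw [sum_const, nsmul_eq_mul, h_def, iidExpect_div_const]; ring

lemma SupportedOn.surfaceArea_le_card_mul_relVariance (hc : c.SupportedOn J) :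
    c.surfaceArea ≤ 4 * #J * c.relVariance := by
  rcases c.normSq_nonneg.eq_or_lt with h_zero | h_pos
  · rw [normSq_eq_zero.mp h_zero.symm, surfaceArea_zero]
    exact mul_nonneg (by positivity) (relVariance_nonneg _)
  have h_normSq := c.normSq_eq_variance_add
  by_cases h : c ∅ ^ 2 ≤ c.variance
  · have h_half : 1 / 2 ≤ c.relVariance := by
      rw [relVariance, div_le_div_iff₀ two_pos h_pos]
      linarith
    calc c.surfaceArea ≤ #J := hc.surfaceArea_le_card
      _ = 4 * #J * (1 / 4) := by ring
      _ ≤ 4 * #J * c.relVariance := by gcongr; linarith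
  · have h_lt := not_le.mp h
    have h_mean : c ∅ ≠ 0 := fun h_eq => by
      rw [h_eq, zero_pow two_ne_zero] at h_lt
      exact h_lt.not_ge c.variance_nonneg
    calc c.surfaceArea ≤ 2 * #J * (c.variance / c ∅ ^ 2) := by
          simpa only [mul_one, iidExpect_evalCube_sq, normSq_centered]
            using hc.surfaceArea_le_moment h_mean 1
      _ ≤ 2 * #J * (2 * c.relVariance) := by
          gcongr
          exact variance_div_le_two_mul_relVariance h_lt.le
      _ = 4 * #J * c.relVariance := by ring

lemma SupportedOn.surfaceArea_le_of_large_mean {j β : ℕ} {s : ℝ} (hc : c.SupportedOn J)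
    (hd : c.DegreeLE d) (h_mean : c ∅ ≠ 0) (h_variance : c.variance * s ^ 4 ≤ c ∅ ^ 2)
    (hs : 9 ^ (d * j) ≤ s) (hj : β + 2 ≤ 2 ^ j) (hJ : #J ≤ s ^ (2 * β)) :
    c.surfaceArea ≤ 4 * c.relVariance := by
  set t := c.variance / c ∅ ^ 2 with ht
  have h_variance_nonneg := c.variance_nonneg
  have h_one_le : 1 ≤ s := (one_le_pow₀ (by norm_num)).trans hs
  have ht_nonneg : 0 ≤ t := div_nonneg h_variance_nonneg (sq_nonneg _)
  have ht_le : s ^ 4 * t ≤ 1 := by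
    rw [ht, mul_div_assoc', div_le_one (by positivity), mul_comm]
    exact h_variance
  have h_moment : iidExpect uniformBit (fun x => c.centered.evalCube x ^ (2 * 2 ^ j))
      / c ∅ ^ (2 * 2 ^ j) ≤ (s * t) ^ 2 ^ j := by
    rw [ht, mul_div_assoc', div_pow, ← pow_mul]
    refine div_le_div_of_nonneg_right ?_ ((even_two_mul _).pow_nonneg _)
    refine (hd.centered.iidExpect_evalCube_pow_le j).trans ?_
    rw [normSq_centered]
    gcongr
  have ht_relVariance : t ≤ 2 * c.relVariance := by
    refine variance_div_le_two_mul_relVariance (le_trans ?_ h_variance)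
    exact le_mul_of_one_le_right h_variance_nonneg (one_le_pow₀ h_one_le)
  calc c.surfaceArea ≤ 2 * #J * (s * t) ^ 2 ^ j :=
        (hc.surfaceArea_le_moment h_mean (2 ^ j)).trans (by gcongr)
    _ ≤ 2 * s ^ (2 * β) * (s * t) ^ 2 ^ j := by gcongr
    _ ≤ 2 * t := by
        rw [mul_assoc]
        gcongr
        exact pow_mul_pow_le_self h_one_le ht_nonneg ht_le hj
    _ ≤ 4 * c.relVariance := by linarith

end CubePoly

end Cube
/-- The squared distance of two vectors, relative to their size; it is `0` if both vanish. -/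
noncomputable def relDistSq {E : Type*} [NormedAddCommGroup E] (a b : E) : ℝ :=
  ‖a - b‖ ^ 2 / (‖a‖ ^ 2 + ‖b‖ ^ 2)

lemma relDistSq_nonneg {E : Type*} [NormedAddCommGroup E] (a b : E) : 0 ≤ relDistSq a b := by
  unfold relDistSq
  positivity

lemma relDistSq_mul_left {𝕜 : Type*} [NormedField 𝕜] {t : 𝕜} (ht : t ≠ 0) (a b : 𝕜) :
    relDistSq (t * a) (t * b) = relDistSq a b := by
  rw [relDistSq, relDistSq, ← mul_sub, norm_mul, norm_mul, norm_mul, mul_pow, mul_pow, mul_pow,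
    ← mul_add, mul_div_mul_left _ _ (pow_ne_zero 2 (norm_ne_zero_iff.mpr ht))]

lemma relDistSq_mul_add_sq {E : Type*} [NormedAddCommGroup E] (a b : E) :
    relDistSq a b * (‖a‖ ^ 2 + ‖b‖ ^ 2) = ‖a - b‖ ^ 2 := by
  refine div_mul_cancel_of_imp fun h => ?_
  have ha : a = 0 := norm_eq_zero.mp (by nlinarith [sq_nonneg ‖b‖])
  have hb : b = 0 := norm_eq_zero.mp (by nlinarith [sq_nonneg ‖a‖])
  simp [ha, hb]

lemma relDistSq_eq_div (a b : ℝ) : relDistSq a b = (a - b) ^ 2 / (a ^ 2 + b ^ 2) := by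
  simp [relDistSq]

namespace CubePoly

section Restriction

variable {ι : Type*} [DecidableEq ι]

/-- The restriction of `c` to the hyperplane `x i = a`. -/
noncomputable def restrict (c : CubePoly ι) (i : ι) (a : ℝ) : CubePoly ι :=
  c.dropVar i + a • c.deriv i

lemma restrict_apply (c : CubePoly ι) (i : ι) (a : ℝ) (S : Finset ι) :
    c.restrict i a S = if i ∈ S then 0 else c S + a * c (insert i S) := by
  by_cases h : i ∈ S <;> simp [restrict, dropVar, deriv, h]

variable {c : CubePoly ι} {d : ℕ} {J : Finset ι}

omit [DecidableEq ι] in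
lemma SupportedOn.mono {J' : Finset ι} (hc : c.SupportedOn J) (h : J ⊆ J') : c.SupportedOn J' :=
  fun S hS => hc S fun hSJ => hS (hSJ.trans h)

lemma DegreeLE.restrict (hc : c.DegreeLE d) (i : ι) (a : ℝ) : (c.restrict i a).DegreeLE d :=
  fun S hS => by simp [CubePoly.restrict, hc.dropVar i S hS, hc.deriv i S hS]

lemma SupportedOn.restrict (hc : c.SupportedOn J) (i : ι) (a : ℝ) :
    (c.restrict i a).SupportedOn (J.erase i) :=
  fun S hS => by simp [CubePoly.restrict, hc.dropVar i S hS, hc.deriv i S hS]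

lemma deriv_restrict_self (c : CubePoly ι) (i : ι) (a : ℝ) : (c.restrict i a).deriv i = 0 := by
  ext S
  simp [deriv, restrict_apply]

lemma deriv_restrict_of_ne {i j : ι} (h : j ≠ i) (c : CubePoly ι) (a : ℝ) :
    (c.restrict i a).deriv j = (c.deriv j).restrict i a := by
  ext S
  simp only [deriv, restrict_apply, mem_insert, h.symm, h, false_or, insert_comm j i]
  split_ifs <;> simp

lemma restrict_empty_average (c : CubePoly ι) (i : ι) :
    (c.restrict i 1 ∅ + c.restrict i (-1) ∅) / 2 = c ∅ := by
  simp only [restrict_apply, notMem_empty, if_false]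
  ring

variable [Fintype ι]

lemma eval_restrict (c : CubePoly ι) (i : ι) (a : ℝ) (x : ι → ℝ) :
    (c.restrict i a).eval x = c.eval (Function.update x i a) := by
  have h_off : ∀ j ∈ univ.erase i, x j = Function.update x i a j := fun j hj => by
    rw [Function.update_of_ne (ne_of_mem_erase hj)]
  rw [restrict, eval_add, eval_smul, eval_eq_dropVar_add_mul_deriv i c, Function.update_self,
    (c.supportedOn_univ.dropVar i).eval_congr h_off,
    (c.supportedOn_univ.deriv i).eval_congr h_off]

lemma evalCube_restrict (c : CubePoly ι) (i : ι) (b : Bool) (x : ι → Bool) :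
    (c.restrict i (chi b)).evalCube x = c.evalCube (Function.update x i b) := by
  rw [evalCube, eval_restrict, evalCube]
  congr 1
  ext j
  rcases eq_or_ne j i with rfl | h
  · simp
  · simp [h]

lemma normSq_restrict_average (c : CubePoly ι) (i : ι) :
    ((c.restrict i 1).normSq + (c.restrict i (-1)).normSq) / 2 = c.normSq := by
  rw [normSq_eq_dropVar_add_deriv i c]
  simp only [normSq]
  rw [← sum_add_distrib, ← sum_add_distrib, sum_div]
  refine sum_congr rfl fun S _ => ?_
  simp only [restrict, Pi.add_apply, Pi.smul_apply, smul_eq_mul]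
  ring

lemma iidExpect_restrict_average (c : CubePoly ι) (i : ι) (k : ℕ) :
    (iidExpect uniformBit (fun x => (c.restrict i 1).evalCube x ^ k)
      + iidExpect uniformBit (fun x => (c.restrict i (-1)).evalCube x ^ k)) / 2
      = iidExpect uniformBit (fun x => c.evalCube x ^ k) := by
  have h_true := evalCube_restrict c i true
  have h_false := evalCube_restrict c i false
  simp only [chi, if_true, Bool.false_eq_true, if_false] at h_true h_false
  rw [iidExpect_resample uniformBit_mem_stdSimplex i fun x => c.evalCube x ^ k,
    ← iidExpect_add, ← iidExpect_div_const]
  congr 1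
  ext x
  simp only [h_true, h_false, uniformBit, Fintype.sum_bool]
  ring

lemma influence_restrict_average {i j : ι} (h : j ≠ i) (c : CubePoly ι) :
    ((c.restrict i 1).influence j + (c.restrict i (-1)).influence j) / 2 = c.influence j := by
  simp only [influence, deriv_restrict_of_ne h, normSq_restrict_average]

lemma sum_influence_restrict_average (c : CubePoly ι) (i : ι) :
    (∑ j, (c.restrict i 1).influence j + ∑ j, (c.restrict i (-1)).influence j) / 2
      = ∑ j, c.influence j - c.influence i := by
  have h_self (a : ℝ) : (c.restrict i a).influence i = 0 := by
    rw [influence, deriv_restrict_self, normSq_eq_zero]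
  rw [← sum_erase univ (h_self 1), ← sum_erase univ (h_self (-1)), ← sum_add_distrib, sum_div,
    sum_congr rfl fun j hj => influence_restrict_average (ne_of_mem_erase hj) c,
    ← add_sum_erase _ _ (mem_univ i), add_sub_cancel_left]

lemma exists_restrict_finset (hd : c.DegreeLE d) (hJ : c.SupportedOn J) (A : Finset ι)
    (x : ι → ℝ) : ∃ c' : CubePoly ι, c'.DegreeLE d ∧ c'.SupportedOn (J \ A) ∧
      ∀ y, c'.eval y = c.eval fun i => if i ∈ A then x i else y i := by
  induction A using Finset.induction_on with
  | empty => exact ⟨c, hd, by simpa using hJ, fun y => by simp⟩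
  | insert a A ha ih =>
    obtain ⟨c', h_degree, h_supported, h_eval⟩ := ih
    refine ⟨c'.restrict a (x a), h_degree.restrict a _, ?_, fun y => ?_⟩
    · rw [sdiff_insert]
      exact h_supported.restrict a _
    · rw [eval_restrict, h_eval]
      congr 1
      ext i
      rcases eq_or_ne i a with rfl | h
      · simp [ha]
      · simp [h]

end Restriction

section TwoSamples

variable {ι : Type*} [Fintype ι] [DecidableEq ι] {c : CubePoly ι} {d : ℕ}

lemma iidExpect_sub_sq_evalCube (c : CubePoly ι) :
    iidExpect uniformBit (fun x : ι → Bool =>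
      iidExpect uniformBit fun y => (c.evalCube x - c.evalCube y) ^ 2) = 2 * c.variance := by
  have hw := uniformBit_mem_stdSimplex
  have h_inner (x : ι → Bool) : iidExpect uniformBit (fun y => (c.evalCube x - c.evalCube y) ^ 2)
      = c.evalCube x ^ 2 - 2 * c ∅ * c.evalCube x + c.normSq := by
    simp only [sub_sq]
    rw [iidExpect_add, iidExpect_sub, iidExpect_const hw, iidExpect_const_mul, iidExpect_evalCube,
      iidExpect_evalCube_sq]
    ring
  simp only [h_inner]
  rw [iidExpect_add, iidExpect_sub, iidExpect_const hw, iidExpect_const_mul, iidExpect_evalCube,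
    iidExpect_evalCube_sq, normSq_eq_variance_add]
  ring

lemma DegreeLE.iidExpect_centered_sq_mul_sq_le (hc : c.DegreeLE d) :
    iidExpect uniformBit (fun x => c.centered.evalCube x ^ 2 * c.evalCube x ^ 2)
      ≤ 9 ^ d * (c.variance * c.normSq) := by
  have hw := uniformBit_mem_stdSimplex
  have h_variance := c.variance_nonneg
  have h_normSq := c.normSq_nonneg
  have h_centered := hc.centered.iidExpect_evalCube_pow_four_le
  rw [normSq_centered] at h_centered
  refine (abs_le_of_sq_le_sq' ?_ (by positivity)).2
  calc iidExpect uniformBit (fun x => c.centered.evalCube x ^ 2 * c.evalCube x ^ 2) ^ 2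
      ≤ iidExpect uniformBit (fun x => c.centered.evalCube x ^ 4)
        * iidExpect uniformBit (fun x => c.evalCube x ^ 4) :=
        sq_iidExpect_le_mul hw (fun _ => by positivity) (fun _ => by positivity)
          fun _ => le_of_eq (by ring)
    _ ≤ (9 ^ d * c.variance ^ 2) * (9 ^ d * c.normSq ^ 2) :=
        mul_le_mul h_centered hc.iidExpect_evalCube_pow_four_le
          (iidExpect_nonneg hw fun _ => by positivity) (by positivity)
    _ = (9 ^ d * (c.variance * c.normSq)) ^ 2 := by ring

lemma DegreeLE.iidExpect_sub_sq_mul_add_sq_le (hc : c.DegreeLE d) :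
    iidExpect uniformBit (fun x : ι → Bool => iidExpect uniformBit fun y =>
      (c.evalCube x - c.evalCube y) ^ 2 * (c.evalCube x ^ 2 + c.evalCube y ^ 2))
      ≤ 8 * 9 ^ d * (c.variance * c.normSq) := by
  have hw := uniformBit_mem_stdSimplex
  set h : (ι → Bool) → ℝ := c.centered.evalCube with hh
  have h_centered (x) : h x = c.evalCube x - c ∅ := c.evalCube_centered x
  set M := iidExpect uniformBit fun x => h x ^ 2 * c.evalCube x ^ 2 with hM
  have hM_le : M ≤ 9 ^ d * (c.variance * c.normSq) := hc.iidExpect_centered_sq_mul_sq_le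
  have h_sq : iidExpect uniformBit (fun x => h x ^ 2) = c.variance := by
    rw [hh, iidExpect_evalCube_sq, normSq_centered]
  have h_pointwise (x y) : (c.evalCube x - c.evalCube y) ^ 2 * (c.evalCube x ^ 2 + c.evalCube y ^ 2)
      ≤ 2 * (h x ^ 2 * c.evalCube x ^ 2) + 2 * h x ^ 2 * c.evalCube y ^ 2
        + 2 * c.evalCube x ^ 2 * h y ^ 2 + 2 * (h y ^ 2 * c.evalCube y ^ 2) := by
    have h_sub : c.evalCube x - c.evalCube y = h x - h y := by rw [h_centered, h_centered]; ring
    have h_add : (h x - h y) ^ 2 ≤ 2 * h x ^ 2 + 2 * h y ^ 2 := by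
      nlinarith [sq_nonneg (h x + h y)]
    rw [h_sub]
    nlinarith [sq_nonneg (c.evalCube x), sq_nonneg (c.evalCube y)]
  have h_inner (x) : iidExpect uniformBit (fun y => 2 * (h x ^ 2 * c.evalCube x ^ 2)
        + 2 * h x ^ 2 * c.evalCube y ^ 2 + 2 * c.evalCube x ^ 2 * h y ^ 2
        + 2 * (h y ^ 2 * c.evalCube y ^ 2))
      = 2 * (h x ^ 2 * c.evalCube x ^ 2) + 2 * c.normSq * h x ^ 2
        + 2 * c.variance * c.evalCube x ^ 2 + 2 * M := by
    simp only [iidExpect_add, iidExpect_const hw, iidExpect_const_mul, h_sq,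
      iidExpect_evalCube_sq, ← hM]
    ring
  refine (iidExpect_mono hw fun x => (iidExpect_mono hw (h_pointwise x)).trans_eq
    (h_inner x)).trans ?_
  simp only [iidExpect_add, iidExpect_const hw, iidExpect_const_mul, h_sq, iidExpect_evalCube_sq,
    ← hM]
  have h_one_le : (1 : ℝ) ≤ 9 ^ d := one_le_pow₀ (by norm_num)
  nlinarith [mul_nonneg c.variance_nonneg c.normSq_nonneg]

lemma sq_two_mul_variance_le (c : CubePoly ι) :
    (2 * c.variance) ^ 2 ≤ iidExpect uniformBit (fun x : ι → Bool => iidExpect uniformBit fun y =>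
        relDistSq (c.evalCube x) (c.evalCube y))
      * iidExpect uniformBit (fun x : ι → Bool => iidExpect uniformBit fun y =>
        (c.evalCube x - c.evalCube y) ^ 2 * (c.evalCube x ^ 2 + c.evalCube y ^ 2)) := by
  have h_pair (F : (ι → Bool) → (ι → Bool) → ℝ) :
      iidExpect uniformBit (fun x => iidExpect uniformBit fun y => F x y)
        = iidExpect (prodWeight uniformBit uniformBit)
          fun ω => F (fun i => (ω i).1) fun i => (ω i).2 :=
    (iidExpect_prod_type fun ω => F (fun i => (ω i).1) fun i => (ω i).2).symm
  rw [← iidExpect_sub_sq_evalCube, h_pair fun x y => relDistSq (c.evalCube x) (c.evalCube y),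
    h_pair fun x y => (c.evalCube x - c.evalCube y) ^ 2,
    h_pair fun x y => (c.evalCube x - c.evalCube y) ^ 2 * (c.evalCube x ^ 2 + c.evalCube y ^ 2)]
  refine sq_iidExpect_le_mul
    (prodWeight_mem_stdSimplex uniformBit_mem_stdSimplex uniformBit_mem_stdSimplex)
    (fun _ => relDistSq_nonneg _ _) (fun _ => by positivity) fun ω => le_of_eq ?_
  have h_mul := relDistSq_mul_add_sq (c.evalCube fun i => (ω i).1) (c.evalCube fun i => (ω i).2)
  simp only [Real.norm_eq_abs, sq_abs] at h_mul
  rw [mul_left_comm, h_mul, sq]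

lemma DegreeLE.relVariance_le_iidExpect_relDistSq (hc : c.DegreeLE d) :
    c.relVariance ≤ 2 * 9 ^ d * iidExpect uniformBit (fun x : ι → Bool =>
      iidExpect uniformBit fun y => relDistSq (c.evalCube x) (c.evalCube y)) := by
  have hw := uniformBit_mem_stdSimplex
  set E := iidExpect uniformBit fun x : ι → Bool => iidExpect uniformBit fun y =>
    relDistSq (c.evalCube x) (c.evalCube y)
  have hE_nonneg : 0 ≤ E :=
    iidExpect_nonneg hw fun _ => iidExpect_nonneg hw fun _ => relDistSq_nonneg _ _
  refine div_le_of_le_mul₀ c.normSq_nonneg (by positivity) ?_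
  rcases c.variance_nonneg.eq_or_lt with h_zero | h_pos
  · rw [← h_zero]
    have := c.normSq_nonneg
    positivity
  have h_bound : (2 * c.variance) ^ 2 ≤ E * (8 * 9 ^ d * (c.variance * c.normSq)) :=
    c.sq_two_mul_variance_le.trans
      (mul_le_mul_of_nonneg_left hc.iidExpect_sub_sq_mul_add_sq_le hE_nonneg)
  refine le_of_mul_le_mul_left ?_ h_pos
  linarith

end TwoSamples

section RelativeVariance

variable {ι : Type*} [Fintype ι] [DecidableEq ι]

/-- The right-hand side is harmonic in `c`: averaging over the two restrictions of a variable
preserves it. -/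
lemma relVariance_le_normSq_sub (c : CubePoly ι) {μ : ℝ} (hμ : μ ≠ 0) :
    c.relVariance ≤ 4 * (c.normSq - 2 * μ * c ∅ + μ ^ 2) / μ ^ 2 := by
  have hμ_sq : 0 < μ ^ 2 := by positivity
  have h_normSq := c.normSq_eq_variance_add
  have h_variance := c.variance_nonneg
  by_cases h_far : μ ^ 2 ≤ 4 * (c ∅ - μ) ^ 2
  · refine c.relVariance_le_one.trans ?_
    rw [one_le_div hμ_sq, h_normSq]
    nlinarith
  · push Not at h_far
    have h_large : μ ^ 2 ≤ 4 * c ∅ ^ 2 := by nlinarith [sq_nonneg (2 * c ∅ - μ)]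
    have h_pos : 0 < c.normSq := by nlinarith
    rw [relVariance, div_le_div_iff₀ h_pos hμ_sq]
    have h_num : 4 * c.variance ≤ 4 * (c.normSq - 2 * μ * c ∅ + μ ^ 2) := by
      rw [h_normSq]
      nlinarith [sq_nonneg (c ∅ - μ)]
    nlinarith [mul_le_mul h_num h_large hμ_sq.le (by linarith)]

lemma le_five_mul_relVariance {c : CubePoly ι} (hc : 0 < c.normSq) {E : ℝ} (h_one : E ≤ 1)
    (h_mean : c ∅ ≠ 0 → E ≤ 4 * c.variance / c ∅ ^ 2) : E ≤ 5 * c.relVariance := by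
  have h_normSq := c.normSq_eq_variance_add
  have h_variance := c.variance_nonneg
  rw [relVariance, mul_div_assoc']
  by_cases h : c ∅ ^ 2 ≤ 4 * c.variance
  · refine h_one.trans ?_
    rw [one_le_div hc]
    linarith
  · push Not at h
    have h_ne : c ∅ ≠ 0 := fun h_zero => by
      rw [h_zero] at h
      linarith
    refine (h_mean h_ne).trans ?_
    rw [div_le_div_iff₀ (by positivity) hc]
    nlinarith

end RelativeVariance

end CubePoly
section Taylor

/-- `F` has second-order Taylor expansions at all points, with a remainder which is at most `K`
times the sum of the cubes of the increments. -/
def SecondOrderTaylor (K : ℝ) (F : ℝ → ℝ → ℝ) : Prop :=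
  ∀ a b, ∃ g₁ g₂ g₃ g₄ g₅ : ℝ, ∀ u v,
    |F (a + u) (b + v) - (F a b + g₁ * u + g₂ * v + g₃ * u ^ 2 + g₄ * (u * v) + g₅ * v ^ 2)|
      ≤ K * (|u| ^ 3 + |v| ^ 3)

lemma SecondOrderTaylor.comp_mul {K : ℝ} {F : ℝ → ℝ → ℝ} (h : SecondOrderTaylor K F) (hK : 0 ≤ K)
    {l l' L : ℝ} (hl : |l| ≤ L) (hl' : |l'| ≤ L) :
    SecondOrderTaylor (K * L ^ 3) fun a b => F (l * a) (l' * b) := by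
  intro a b
  obtain ⟨g₁, g₂, g₃, g₄, g₅, hg⟩ := h (l * a) (l' * b)
  refine ⟨g₁ * l, g₂ * l', g₃ * l ^ 2, g₄ * (l * l'), g₅ * l' ^ 2, fun u v => ?_⟩
  simp only [mul_add l, mul_add l']
  refine (le_of_eq (by congr 1; ring)).trans ((hg (l * u) (l' * v)).trans ?_)
  rw [abs_mul, abs_mul, mul_pow, mul_pow]
  calc K * (|l| ^ 3 * |u| ^ 3 + |l'| ^ 3 * |v| ^ 3) ≤ K * (L ^ 3 * |u| ^ 3 + L ^ 3 * |v| ^ 3) := by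
        gcongr
    _ = K * L ^ 3 * (|u| ^ 3 + |v| ^ 3) := by ring

lemma SecondOrderTaylor.const_mul {K : ℝ} {F : ℝ → ℝ → ℝ} (h : SecondOrderTaylor K F) (l : ℝ) :
    SecondOrderTaylor (|l| * K) fun a b => l * F a b := by
  intro a b
  obtain ⟨g₁, g₂, g₃, g₄, g₅, hg⟩ := h a b
  refine ⟨l * g₁, l * g₂, l * g₃, l * g₄, l * g₅, fun u v => ?_⟩
  rw [mul_assoc |l|]
  refine (le_of_eq ?_).trans (mul_le_mul_of_nonneg_left (hg u v) (abs_nonneg l))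
  rw [← abs_mul]
  congr 1
  ring

lemma abs_first_order_mul_le {R h T₀ T₁ D₁ N₁ : ℝ} (hR : 0 < R) (hT₀ : |T₀| ≤ 1)
    (hD₁ : |D₁| ≤ 2 * R * h) (hN₁ : |N₁| ≤ 2 * R * h) (hT₁ : T₁ * R ^ 2 = N₁ - T₀ * D₁) :
    |T₁| * R ≤ 4 * h := by
  refine le_of_mul_le_mul_left ?_ hR
  calc R * (|T₁| * R) = |N₁ - T₀ * D₁| := by
        rw [← hT₁, abs_mul, abs_of_pos (pow_pos hR 2)]
        ring
    _ ≤ |N₁| + |T₀| * |D₁| := by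
        rw [← abs_mul]
        exact abs_sub _ _
    _ ≤ 2 * R * h + 1 * (2 * R * h) := by gcongr
    _ = R * (4 * h) := by ring

lemma abs_second_order_mul_le {R h T₀ T₁ T₂ D₁ D₂ N₂ : ℝ} (hh : 0 ≤ h) (hT₀ : |T₀| ≤ 1)
    (hD₁ : |D₁| ≤ 2 * R * h) (hD₂ : |D₂| ≤ h ^ 2) (hN₂ : |N₂| ≤ h ^ 2) (hT₁ : |T₁| * R ≤ 4 * h)
    (hT₂ : T₂ * R ^ 2 = N₂ - T₁ * D₁ - T₀ * D₂) : |T₂| * R ^ 2 ≤ 10 * h ^ 2 := by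
  calc |T₂| * R ^ 2 = |N₂ - T₁ * D₁ - T₀ * D₂| := by
        rw [← hT₂, abs_mul, abs_of_nonneg (sq_nonneg R)]
    _ ≤ |N₂| + |T₁| * |D₁| + |T₀| * |D₂| := by
        rw [← abs_mul, ← abs_mul]
        exact (abs_sub _ _).trans (add_le_add (abs_sub _ _) le_rfl)
    _ ≤ h ^ 2 + |T₁| * (2 * R * h) + 1 * h ^ 2 := by gcongr
    _ = h ^ 2 + (|T₁| * R) * (2 * h) + 1 * h ^ 2 := by ring
    _ ≤ h ^ 2 + (4 * h) * (2 * h) + 1 * h ^ 2 := by gcongr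
    _ = 10 * h ^ 2 := by ring

/-- The quotient of `N = T₀ * R ^ 2 + N₁ + N₂` and `D = R ^ 2 + D₁ + D₂` is expanded by comparing
the coefficients of `N = (T₀ + T₁ + T₂ + …) * D` order by order. -/
lemma abs_div_sub_taylor_le {R D h T₀ T₁ T₂ D₁ D₂ N₁ N₂ : ℝ} (hh : 0 ≤ h) (hR : 1 ≤ R)
    (hD : 1 ≤ D) (hT₀ : |T₀| ≤ 1) (hD₁ : |D₁| ≤ 2 * R * h) (hD₂ : |D₂| ≤ h ^ 2)
    (hN₁ : |N₁| ≤ 2 * R * h) (hN₂ : |N₂| ≤ h ^ 2) (hT₁ : T₁ * R ^ 2 = N₁ - T₀ * D₁)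
    (hT₂ : T₂ * R ^ 2 = N₂ - T₁ * D₁ - T₀ * D₂) (h_sum : D = R ^ 2 + D₁ + D₂)
    (hhD : h ≤ 2 * (R ^ 2 * D)) :
    |(T₀ * R ^ 2 + N₁ + N₂) / D - (T₀ + T₁ + T₂)| ≤ 44 * h ^ 3 := by
  have hR_pos : 0 < R := by linarith
  have hD_pos : 0 < D := by linarith
  have hT₁_le := abs_first_order_mul_le hR_pos hT₀ hD₁ hN₁ hT₁
  have hT₂_le := abs_second_order_mul_le hh hT₀ hD₁ hD₂ hN₂ hT₁_le hT₂
  have h_remainder : (T₀ * R ^ 2 + N₁ + N₂) / D - (T₀ + T₁ + T₂)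
      = -(T₂ * D₁ + T₁ * D₂ + T₂ * D₂) / D := by
    rw [eq_div_iff hD_pos.ne', sub_mul, div_mul_cancel₀ _ hD_pos.ne', h_sum]
    linear_combination -hT₁ - hT₂
  have h_T₂D₁ : |T₂| * |D₁| ≤ 20 * h ^ 3 := by
    have hT₂R_le : |T₂| * R ≤ 10 * h ^ 2 :=
      (mul_le_mul_of_nonneg_left (le_self_pow₀ hR two_ne_zero) (abs_nonneg _)).trans hT₂_le
    calc |T₂| * |D₁| ≤ |T₂| * (2 * R * h) := by gcongr
      _ = 2 * h * (|T₂| * R) := by ring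
      _ ≤ 2 * h * (10 * h ^ 2) := by gcongr
      _ = 20 * h ^ 3 := by ring
  have h_T₁D₂ : |T₁| * |D₂| ≤ 4 * h ^ 3 := by
    calc |T₁| * |D₂| ≤ (4 * h) * h ^ 2 := by
          gcongr
          exact (le_mul_of_one_le_right (abs_nonneg _) hR).trans hT₁_le
      _ = 4 * h ^ 3 := by ring
  have h_T₂D₂ : |T₂| * |D₂| ≤ 20 * h ^ 3 * D := by
    calc |T₂| * |D₂| ≤ |T₂| * (h * (2 * (R ^ 2 * D))) := by rw [sq h] at hD₂; gcongr; nlinarith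
      _ = (|T₂| * R ^ 2) * (2 * h * D) := by ring
      _ ≤ (10 * h ^ 2) * (2 * h * D) := by gcongr
      _ = 20 * h ^ 3 * D := by ring
  rw [h_remainder, abs_div, abs_neg, abs_of_pos hD_pos, div_le_iff₀ hD_pos]
  calc |T₂ * D₁ + T₁ * D₂ + T₂ * D₂| ≤ |T₂| * |D₁| + |T₁| * |D₂| + |T₂| * |D₂| := by
        rw [← abs_mul, ← abs_mul, ← abs_mul]
        exact abs_add_three _ _ _
    _ ≤ 44 * h ^ 3 * D := by nlinarith [pow_nonneg hh 3]

lemma abs_two_mul_mul_add_le {a b R : ℝ} (ha : |a| ≤ R) (hb : |b| ≤ R) (u v : ℝ) :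
    |2 * a * u + 2 * b * v| ≤ 2 * R * (|u| + |v|) := by
  calc |2 * a * u + 2 * b * v| ≤ 2 * |a| * |u| + 2 * |b| * |v| := by
        refine (abs_add_le _ _).trans_eq ?_
        rw [abs_mul, abs_mul, abs_mul, abs_mul, abs_two]
    _ ≤ 2 * R * |u| + 2 * R * |v| := by gcongr
    _ = 2 * R * (|u| + |v|) := by ring

lemma abs_sq_add_sq_le (u v : ℝ) : |u ^ 2 + v ^ 2| ≤ (|u| + |v|) ^ 2 := by
  rw [abs_of_nonneg (by positivity), ← sq_abs u, ← sq_abs v]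
  nlinarith [mul_nonneg (abs_nonneg u) (abs_nonneg v)]

lemma abs_add_abs_le_two_mul_mul (a b u v : ℝ) :
    |u| + |v| ≤ 2 * ((1 + a ^ 2 + b ^ 2) * (1 + (a + u) ^ 2 + (b + v) ^ 2)) := by
  have h_increment (a u : ℝ) : |u| ≤ |a| + |a + u| := by
    linarith [add_sub_cancel_left a u ▸ abs_sub (a + u) a]
  have h_sum_le (a b : ℝ) : |a| + |b| ≤ 1 + a ^ 2 + b ^ 2 := by
    rw [← sq_abs a, ← sq_abs b]
    nlinarith [sq_nonneg (|a| - 1), sq_nonneg (|b| - 1)]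
  have h_one_le (a b : ℝ) : 1 ≤ 1 + a ^ 2 + b ^ 2 := by nlinarith [sq_nonneg a, sq_nonneg b]
  nlinarith [h_increment a u, h_increment b v, h_sum_le a b, h_sum_le (a + u) (b + v),
    h_one_le a b, h_one_le (a + u) (b + v)]

section Quadratic

variable {α β γ δ : ℝ}

lemma abs_binary_quadratic_le (h : |β| + |γ| + |δ| ≤ 1) (u v : ℝ) :
    |β * u ^ 2 + γ * (u * v) + δ * v ^ 2| ≤ (|u| + |v|) ^ 2 := by
  have hu := abs_nonneg u
  have hv := abs_nonneg v
  calc |β * u ^ 2 + γ * (u * v) + δ * v ^ 2|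
      ≤ |β| * |u| ^ 2 + |γ| * (|u| * |v|) + |δ| * |v| ^ 2 := by
        refine (abs_add_three _ _ _).trans_eq ?_
        rw [abs_mul, abs_mul, abs_mul, abs_mul, abs_pow, abs_pow]
    _ ≤ |β| * (|u| + |v|) ^ 2 + |γ| * (|u| + |v|) ^ 2 + |δ| * (|u| + |v|) ^ 2 := by
        gcongr <;> nlinarith
    _ ≤ (|u| + |v|) ^ 2 := by nlinarith [sq_nonneg (|u| + |v|)]

lemma abs_quadratic_le (h : |α| + |β| + |γ| + |δ| ≤ 1) (a b : ℝ) :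
    |α + β * a ^ 2 + γ * (a * b) + δ * b ^ 2| ≤ 1 + a ^ 2 + b ^ 2 := by
  have hab : |a| * |b| ≤ 1 + a ^ 2 + b ^ 2 := by
    nlinarith [sq_nonneg (|a| - |b|), sq_abs a, sq_abs b]
  calc |α + β * a ^ 2 + γ * (a * b) + δ * b ^ 2|
      ≤ |α| + |β| * a ^ 2 + |γ| * (|a| * |b|) + |δ| * b ^ 2 := by
        refine (abs_add_le _ _).trans (add_le_add ((abs_add_three _ _ _).trans_eq ?_) ?_)
        · simp only [abs_mul, abs_sq]
        · simp only [abs_mul, abs_sq, le_refl]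
    _ ≤ |α| * (1 + a ^ 2 + b ^ 2) + |β| * (1 + a ^ 2 + b ^ 2) + |γ| * (1 + a ^ 2 + b ^ 2)
          + |δ| * (1 + a ^ 2 + b ^ 2) := by
        gcongr <;> nlinarith [abs_nonneg α, sq_nonneg a, sq_nonneg b]
    _ ≤ 1 + a ^ 2 + b ^ 2 := by nlinarith [sq_nonneg a, sq_nonneg b]

lemma abs_quadratic_deriv_le {a b R : ℝ} (h : |β| + |γ| + |δ| ≤ 1) (ha : |a| ≤ R) (hb : |b| ≤ R)
    (u v : ℝ) :
    |(2 * β * a + γ * b) * u + (γ * a + 2 * δ * b) * v| ≤ 2 * R * (|u| + |v|) := by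
  have hR : 0 ≤ R := (abs_nonneg a).trans ha
  have h_coeff {x y z w : ℝ} (hxy : |x| + |y| ≤ 2) (hz : |z| ≤ R) (hw : |w| ≤ R) :
      |x * z + y * w| ≤ 2 * R := by
    calc |x * z + y * w| ≤ |x| * |z| + |y| * |w| := by
          rw [← abs_mul, ← abs_mul]
          exact abs_add_le _ _
      _ ≤ |x| * R + |y| * R := by gcongr
      _ ≤ 2 * R := by nlinarith
  have h_two (x : ℝ) : |2 * x| = 2 * |x| := by rw [abs_mul, abs_two]
  have hβ := abs_nonneg β
  have hγ := abs_nonneg γ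
  have hδ := abs_nonneg δ
  have h_first : |2 * β * a + γ * b| ≤ 2 * R := h_coeff (by rw [h_two]; linarith) ha hb
  have h_second : |γ * a + 2 * δ * b| ≤ 2 * R := h_coeff (by rw [h_two]; linarith) ha hb
  calc |(2 * β * a + γ * b) * u + (γ * a + 2 * δ * b) * v|
      ≤ |2 * β * a + γ * b| * |u| + |γ * a + 2 * δ * b| * |v| := by
        rw [← abs_mul, ← abs_mul]
        exact abs_add_le _ _
    _ ≤ 2 * R * |u| + 2 * R * |v| := by gcongr
    _ = 2 * R * (|u| + |v|) := by ring

lemma secondOrderTaylor_quadratic_div (h : |α| + |β| + |γ| + |δ| ≤ 1) :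
    SecondOrderTaylor 176 fun a b =>
      (α + β * a ^ 2 + γ * (a * b) + δ * b ^ 2) / (1 + a ^ 2 + b ^ 2) := by
  intro a b
  have h_form : |β| + |γ| + |δ| ≤ 1 := by linarith [abs_nonneg α]
  have h_pos (a b : ℝ) : 0 < 1 + a ^ 2 + b ^ 2 := by positivity
  obtain ⟨R, hR_one, hR_sq⟩ : ∃ R : ℝ, 1 ≤ R ∧ R ^ 2 = 1 + a ^ 2 + b ^ 2 :=
    ⟨√(1 + a ^ 2 + b ^ 2), Real.one_le_sqrt.mpr (by nlinarith [sq_nonneg a, sq_nonneg b]),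
      Real.sq_sqrt (h_pos a b).le⟩
  have hR_ne : R ≠ 0 := by positivity
  have ha : |a| ≤ R := abs_le_of_sq_le_sq (by nlinarith [sq_nonneg b]) (by linarith)
  have hb : |b| ≤ R := abs_le_of_sq_le_sq (by nlinarith [sq_nonneg a]) (by linarith)
  set T := (α + β * a ^ 2 + γ * (a * b) + δ * b ^ 2) / (1 + a ^ 2 + b ^ 2) with hT
  have hT_le : |T| ≤ 1 := by
    rw [hT, abs_div, abs_of_pos (h_pos a b), div_le_one (h_pos a b)]
    exact abs_quadratic_le h a b
  have hT_mul : T * R ^ 2 = α + β * a ^ 2 + γ * (a * b) + δ * b ^ 2 := by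
    rw [hT, hR_sq, div_mul_cancel₀ _ (h_pos a b).ne']
  set p := (2 * β * a + γ * b - T * (2 * a)) / R ^ 2 with hp
  set q := (γ * a + 2 * δ * b - T * (2 * b)) / R ^ 2 with hq
  set r₁ := (β - p * (2 * a) - T) / R ^ 2 with hr₁
  set r₂ := (γ - p * (2 * b) - q * (2 * a)) / R ^ 2 with hr₂
  set r₃ := (δ - q * (2 * b) - T) / R ^ 2 with hr₃
  refine ⟨p, q, r₁, r₂, r₃, fun u v => ?_⟩
  have h_expand := abs_div_sub_taylor_le (R := R) (D := 1 + (a + u) ^ 2 + (b + v) ^ 2)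
    (T₀ := T) (T₁ := p * u + q * v) (T₂ := r₁ * u ^ 2 + r₂ * (u * v) + r₃ * v ^ 2)
    (h := |u| + |v|) (D₁ := 2 * a * u + 2 * b * v) (D₂ := u ^ 2 + v ^ 2) (by positivity) hR_one
    (by nlinarith [sq_nonneg (a + u), sq_nonneg (b + v)]) hT_le
    (abs_two_mul_mul_add_le ha hb u v) (abs_sq_add_sq_le u v)
    (abs_quadratic_deriv_le h_form ha hb u v) (abs_binary_quadratic_le h_form u v)
    (by rw [hp, hq]; field_simp; ring) (by rw [hr₁, hr₂, hr₃]; field_simp; ring)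
    (by rw [hR_sq]; ring) (hR_sq ▸ abs_add_abs_le_two_mul_mul a b u v)
  have h_cube : (|u| + |v|) ^ 3 ≤ 2 ^ 2 * (|u| ^ 3 + |v| ^ 3) :=
    add_pow_le (abs_nonneg u) (abs_nonneg v) 3
  rw [hT_mul] at h_expand
  refine (le_of_eq ?_).trans (h_expand.trans (by linarith))
  congr 2 <;> ring

end Quadratic

end Taylor
section Lindeberg

variable {ι Ω : Type*} [Fintype Ω] {w : Ω → ℝ}

lemma abs_pow_three_le_of_sq_le_two {x : ℝ} (h : x ^ 2 ≤ 2) : |x| ^ 3 ≤ 3 := by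
  rw [← sq_abs] at h
  have h_abs : |x| ≤ 3 / 2 := by nlinarith [abs_nonneg x]
  calc |x| ^ 3 = |x| * |x| ^ 2 := by ring
    _ ≤ 3 / 2 * 2 := by gcongr
    _ = 3 := by norm_num

lemma abs_pow_three_le {s : ℝ} (hs : 0 < s) (x : ℝ) :
    |x| ^ 3 ≤ s / 2 * x ^ 2 + 1 / (2 * s) * x ^ 4 := by
  have h_square : s / 2 * x ^ 2 + 1 / (2 * s) * x ^ 4 - |x| ^ 3
      = |x| ^ 2 * ((s - |x|) ^ 2 / (2 * s)) := by
    rw [← sq_abs, show x ^ 4 = |x| ^ 4 by rw [← abs_pow, abs_of_nonneg (by positivity)]]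
    field_simp
    ring
  rw [← sub_nonneg, h_square]
  positivity

lemma IsSignLike.abs_mul_pow_three_le {U : Ω → ℝ} (hU : IsSignLike w U) (t : Ω)
    (B : ℝ) : |U t * B| ^ 3 ≤ 3 * |B| ^ 3 := by
  rw [abs_mul, mul_pow]
  gcongr
  exact abs_pow_three_le_of_sq_le_two (hU.sq_le t)

lemma IsSignLike.abs_sum_sub_le (hw : w ∈ stdSimplex ℝ Ω) {U V : Ω → ℝ} (hU : IsSignLike w U)
    (hV : IsSignLike w V) {K : ℝ} (hK : 0 ≤ K) {F : ℝ → ℝ → ℝ} {P Q g₁ g₂ g₃ g₄ g₅ : ℝ}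
    (hF : ∀ u v, |F (P + u) (Q + v) - (F P Q + g₁ * u + g₂ * v + g₃ * u ^ 2 + g₄ * (u * v)
      + g₅ * v ^ 2)| ≤ K * (|u| ^ 3 + |v| ^ 3)) (B B' : ℝ) :
    |∑ t, w t * F (P + U t * B) (Q + V t * B') - (F P Q + g₃ * B ^ 2
      + g₄ * (∑ t, w t * (U t * V t)) * (B * B') + g₅ * B' ^ 2)|
      ≤ 3 * K * (|B| ^ 3 + |B'| ^ 3) := by
  have h_moments : F P Q + g₃ * B ^ 2 + g₄ * (∑ t, w t * (U t * V t)) * (B * B') + g₅ * B' ^ 2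
      = ∑ t, w t * (F P Q + g₁ * (U t * B) + g₂ * (V t * B') + g₃ * (U t * B) ^ 2
        + g₄ * ((U t * B) * (V t * B')) + g₅ * (V t * B') ^ 2) := by
    have h_expand (t : Ω) : w t * (F P Q + g₁ * (U t * B) + g₂ * (V t * B') + g₃ * (U t * B) ^ 2
        + g₄ * ((U t * B) * (V t * B')) + g₅ * (V t * B') ^ 2)
        = F P Q * w t + g₁ * B * (w t * U t) + g₂ * B' * (w t * V t)
          + g₃ * B ^ 2 * (w t * U t ^ 2) + g₄ * (B * B') * (w t * (U t * V t))
          + g₅ * B' ^ 2 * (w t * V t ^ 2) := by ring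
    simp only [h_expand, sum_add_distrib, ← mul_sum, hw.2, hU.mean, hV.mean, hU.sq, hV.sq]
    ring
  rw [h_moments, ← sum_sub_distrib]
  calc |∑ t, _| ≤ ∑ t, w t * (3 * K * (|B| ^ 3 + |B'| ^ 3)) := by
        refine (abs_sum_le_sum_abs _ _).trans (sum_le_sum fun t _ => ?_)
        rw [← mul_sub, abs_mul, abs_of_nonneg (hw.1 t)]
        refine mul_le_mul_of_nonneg_left ((hF _ _).trans ?_) (hw.1 t)
        calc K * (|U t * B| ^ 3 + |V t * B'| ^ 3) ≤ K * (3 * |B| ^ 3 + 3 * |B'| ^ 3) := by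
              gcongr <;> apply IsSignLike.abs_mul_pow_three_le <;> assumption
          _ = 3 * K * (|B| ^ 3 + |B'| ^ 3) := by ring
    _ = 3 * K * (|B| ^ 3 + |B'| ^ 3) := by rw [← sum_mul, hw.2, one_mul]

lemma SecondOrderTaylor.abs_sum_sub_sum_le (hw : w ∈ stdSimplex ℝ Ω) {U V U' V' : Ω → ℝ}
    (hU : IsSignLike w U) (hV : IsSignLike w V) (hU' : IsSignLike w U') (hV' : IsSignLike w V')
    (h_corr : ∑ t, w t * (U t * V t) = ∑ t, w t * (U' t * V' t)) {K : ℝ} (hK : 0 ≤ K)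
    {F : ℝ → ℝ → ℝ} (hF : SecondOrderTaylor K F) (P Q B B' : ℝ) :
    |∑ t, w t * F (P + U t * B) (Q + V t * B') - ∑ t, w t * F (P + U' t * B) (Q + V' t * B')|
      ≤ 6 * K * (|B| ^ 3 + |B'| ^ 3) := by
  obtain ⟨g₁, g₂, g₃, g₄, g₅, hg⟩ := hF P Q
  have h_first := hU.abs_sum_sub_le hw hV hK hg B B'
  have h_second := hU'.abs_sum_sub_le hw hV' hK hg B B'
  rw [h_corr] at h_first
  rw [abs_sub_comm] at h_second
  linarith [(abs_sub_le _ _ _).trans (add_le_add h_first h_second)]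

variable [Fintype ι] [DecidableEq ι]

namespace CubePoly

variable {c : CubePoly ι} {d : ℕ} {s K : ℝ} {F : ℝ → ℝ → ℝ}

lemma DegreeLE.iidExpect_abs_eval_cube_le (hw : w ∈ stdSimplex ℝ Ω) {U : ι → Ω → ℝ}
    (hU : ∀ i, IsSignLike w (U i)) (hc : c.DegreeLE d) (hs : 0 < s) (h_norm : c.normSq ≤ s ^ 2) :
    iidExpect w (fun ω => |c.eval (fun i => U i (ω i))| ^ 3) ≤ 9 ^ d * s * c.normSq := by
  have h_nonneg := normSq_nonneg c
  have h_one_le : (1 : ℝ) ≤ 9 ^ d := one_le_pow₀ (by norm_num)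
  have h_fourth : iidExpect w (fun ω => c.eval (fun i => U i (ω i)) ^ 4)
      ≤ 9 ^ d * (s ^ 2 * c.normSq) := by
    refine (hc.iidExpect_eval_pow_four_le hw hU).trans ?_
    rw [sq c.normSq]
    gcongr
  calc iidExpect w (fun ω => |c.eval (fun i => U i (ω i))| ^ 3)
      ≤ iidExpect w (fun ω => s / 2 * c.eval (fun i => U i (ω i)) ^ 2
          + 1 / (2 * s) * c.eval (fun i => U i (ω i)) ^ 4) :=
        iidExpect_mono hw fun ω => abs_pow_three_le hs _
    _ = s / 2 * c.normSq
          + 1 / (2 * s) * iidExpect w (fun ω => c.eval (fun i => U i (ω i)) ^ 4) := by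
        rw [iidExpect_add, iidExpect_const_mul, iidExpect_const_mul, iidExpect_eval_sq hw hU]
    _ ≤ s / 2 * c.normSq + 1 / (2 * s) * (9 ^ d * (s ^ 2 * c.normSq)) := by gcongr
    _ = 1 / 2 * (1 + 9 ^ d) * (s * c.normSq) := by
        field_simp
    _ ≤ 9 ^ d * (s * c.normSq) := by gcongr; linarith
    _ = 9 ^ d * s * c.normSq := by ring

omit [Fintype Ω] in
lemma eval_replace_update (U : ι → Ω → ℝ) (a : ι) (X : Ω → ℝ) (ω : ι → Ω) (t : Ω) :
    c.eval (fun i => Function.update U a X i (Function.update ω a t i))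
      = (c.dropVar a).eval (fun i => U i (ω i)) + X t * (c.deriv a).eval (fun i => U i (ω i)) := by
  have h_off (i : ι) (hi : i ∈ univ.erase a) :
      Function.update U a X i (Function.update ω a t i) = U i (ω i) := by
    rw [Function.update_of_ne (ne_of_mem_erase hi), Function.update_of_ne (ne_of_mem_erase hi)]
  rw [eval_eq_dropVar_add_mul_deriv a, (c.supportedOn_univ.dropVar a).eval_congr h_off,
    (c.supportedOn_univ.deriv a).eval_congr h_off, Function.update_self, Function.update_self]

variable (hw : w ∈ stdSimplex ℝ Ω) (hc : c.DegreeLE d) (hs : 0 < s)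
  (h_influence : ∀ i, c.influence i ≤ s ^ 2) (hK : 0 ≤ K) (hF : SecondOrderTaylor K F)
include hw hc hs h_influence hK hF

lemma DegreeLE.abs_iidExpect_sub_replace_le {U V : ι → Ω → ℝ} (hU : ∀ i, IsSignLike w (U i))
    (hV : ∀ i, IsSignLike w (V i)) {X Y : Ω → ℝ} (hX : IsSignLike w X) (hY : IsSignLike w Y)
    {a : ι} (h_corr : ∑ t, w t * (U a t * V a t) = ∑ t, w t * (X t * Y t)) :
    |iidExpect w (fun ω => F (c.eval fun i => U i (ω i)) (c.eval fun i => V i (ω i)))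
      - iidExpect w (fun ω => F (c.eval fun i => Function.update U a X i (ω i))
          (c.eval fun i => Function.update V a Y i (ω i)))|
      ≤ 12 * 9 ^ d * K * s * c.influence a := by
  have h_self (U : ι → Ω → ℝ) (ω : ι → Ω) (t : Ω) :
      c.eval (fun i => U i (Function.update ω a t i)) = (c.dropVar a).eval (fun i => U i (ω i))
        + U a t * (c.deriv a).eval (fun i => U i (ω i)) := by
    simpa only [Function.update_eq_self] using eval_replace_update U a (U a) ω t
  rw [iidExpect_resample hw a, iidExpect_resample hw a
    (fun ω => F (c.eval fun i => Function.update U a X i (ω i)) _), ← iidExpect_sub]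
  simp only [h_self U, h_self V, eval_replace_update]
  refine (abs_iidExpect_le hw _).trans ((iidExpect_mono hw fun ω =>
    hF.abs_sum_sub_sum_le hw (hU a) (hV a) hX hY h_corr hK _ _ _ _).trans ?_)
  rw [iidExpect_const_mul, iidExpect_add]
  calc 6 * K * (_ + _)
      ≤ 6 * K * (9 ^ d * s * c.influence a + 9 ^ d * s * c.influence a) := by
        gcongr
        · exact (hc.deriv a).iidExpect_abs_eval_cube_le hw hU hs (h_influence a)
        · exact (hc.deriv a).iidExpect_abs_eval_cube_le hw hV hs (h_influence a)
    _ = 12 * 9 ^ d * K * s * c.influence a := by ring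

/-- Lindeberg's replacement argument, swapping one coordinate at a time. -/
lemma DegreeLE.abs_iidExpect_sub_le {U V U' V' : ι → Ω → ℝ} (hU : ∀ i, IsSignLike w (U i))
    (hV : ∀ i, IsSignLike w (V i)) (hU' : ∀ i, IsSignLike w (U' i))
    (hV' : ∀ i, IsSignLike w (V' i))
    (h_corr : ∀ i, ∑ t, w t * (U i t * V i t) = ∑ t, w t * (U' i t * V' i t)) :
    |iidExpect w (fun ω => F (c.eval fun i => U i (ω i)) (c.eval fun i => V i (ω i)))
      - iidExpect w (fun ω => F (c.eval fun i => U' i (ω i)) (c.eval fun i => V' i (ω i)))|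
      ≤ 12 * 9 ^ d * K * s * (d * c.variance) := by
  suffices h_swap : ∀ A : Finset ι,
      |iidExpect w (fun ω => F (c.eval fun i => U i (ω i)) (c.eval fun i => V i (ω i)))
        - iidExpect w (fun ω => F (c.eval fun i => A.piecewise U' U i (ω i))
          (c.eval fun i => A.piecewise V' V i (ω i)))|
      ≤ 12 * 9 ^ d * K * s * ∑ i ∈ A, c.influence i by
    have h_univ := h_swap univ
    simp only [piecewise_univ] at h_univ
    refine h_univ.trans ?_
    gcongr
    exact hc.sum_influence_le
  intro A
  induction A using Finset.induction_on with
  | empty => simp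
  | insert a A ha ih =>
    rw [sum_insert ha, piecewise_insert, piecewise_insert]
    have h_mixed {X X' : ι → Ω → ℝ} (hX : ∀ i, IsSignLike w (X i)) (hX' : ∀ i, IsSignLike w (X' i))
        (i : ι) : IsSignLike w (A.piecewise X' X i) := by
      by_cases hi : i ∈ A <;> simp [hi, hX, hX']
    have h_replace := hc.abs_iidExpect_sub_replace_le hw hs h_influence hK hF (h_mixed hU hU')
      (h_mixed hV hV') (hU' a) (hV' a) (a := a) (by simpa [ha] using h_corr a)
    linarith [(abs_sub_le _ _ _).trans (add_le_add ih h_replace)]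

end CubePoly

end Lindeberg
section Circle

open Polynomial

lemma sum_range_one_div_one_add_four_mul_sq_le (N : ℕ) :
    ∑ j ∈ range N, 1 / (1 + 4 * (j : ℝ) ^ 2) ≤ 2 := by
  have h_telescope (N : ℕ) :
      ∑ j ∈ range (N + 1), 1 / (1 + 4 * (j : ℝ) ^ 2) ≤ 2 - 1 / ((N : ℝ) + 1) := by
    induction N with
    | zero => norm_num
    | succ N ih =>
      have h_term : 1 / (1 + 4 * ((N + 1 : ℕ) : ℝ) ^ 2)
          ≤ 1 / ((N : ℝ) + 1) - 1 / (((N + 1 : ℕ) : ℝ) + 1) := by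
        push_cast
        rw [div_sub_div _ _ (by positivity) (by positivity),
          div_le_div_iff₀ (by positivity) (by positivity)]
        nlinarith [(Nat.cast_nonneg N : (0 : ℝ) ≤ N)]
      rw [sum_range_succ]
      linarith
  calc ∑ j ∈ range N, 1 / (1 + 4 * (j : ℝ) ^ 2)
      ≤ ∑ j ∈ range (N + 1), 1 / (1 + 4 * (j : ℝ) ^ 2) :=
        sum_le_sum_of_subset_of_nonneg (range_subset_range.mpr N.le_succ)
          fun _ _ _ => by positivity
    _ ≤ 2 := (h_telescope N).trans (sub_le_self _ (by positivity))

lemma sum_range_natDist_le {N k₀ : ℕ} (hk₀ : k₀ < N) {f : ℕ → ℝ} (hf : ∀ j, 0 ≤ f j) :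
    ∑ k ∈ range N, f (Nat.dist k k₀) ≤ 2 * ∑ j ∈ range N, f j := by
  have h_fiber (j : ℕ) : #{k ∈ range N | Nat.dist k k₀ = j} ≤ 2 := by
    refine (card_le_card fun k hk => ?_).trans (card_le_two (a := k₀ - j) (b := k₀ + j))
    have h_dist := (mem_filter.mp hk).2
    simp only [mem_insert, mem_singleton, Nat.dist] at h_dist ⊢
    omega
  rw [sum_comp f fun k => Nat.dist k k₀, mul_sum]
  refine (sum_le_sum fun j _ => ?_).trans
    (sum_le_sum_of_subset_of_nonneg (image_subset_iff.mpr fun k hk => ?_)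
      fun j _ _ => mul_nonneg zero_le_two (hf j))
  · rw [nsmul_eq_mul]
    exact mul_le_mul_of_nonneg_right (mod_cast h_fiber j) (hf j)
  · simp only [mem_range, Nat.dist] at hk ⊢
    omega

lemma norm_circleExp_sub (a b : ℝ) :
    ‖(Circle.exp a : ℂ) - Circle.exp b‖ = 2 * |Real.sin ((a - b) / 2)| := by
  have h_factor : (Circle.exp a : ℂ) = Circle.exp b * Circle.exp (a - b) := by
    rw [← Circle.coe_mul, ← Circle.exp_add, add_sub_cancel]
  rw [h_factor, ← mul_sub_one, norm_mul, Circle.norm_coe, one_mul,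
    Circle.coe_exp, mul_comm _ Complex.I, Complex.norm_exp_I_mul_ofReal_sub_one, norm_mul,
    Real.norm_two, Real.norm_eq_abs]

/-- The angle of the `k`-th of `N` equally spaced points of the circle. -/
noncomputable def gridAngle (N k : ℕ) : ℝ := 2 * Real.pi * k / N

/-- The `k`-th of `N` equally spaced points of the unit circle. -/
noncomputable def gridPoint (N k : ℕ) : ℂ := Circle.exp (gridAngle N k)

lemma norm_gridPoint_sub (N k l : ℕ) :
    ‖gridPoint N k - gridPoint N l‖ = 2 * |Real.sin (Real.pi * Nat.dist k l / N)| := by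
  rw [gridPoint, gridPoint, norm_circleExp_sub]
  rcases le_total k l with h | h
  · rw [Nat.dist_eq_sub_of_le h, Nat.cast_sub h, ← abs_neg, ← Real.sin_neg]
    congr 3
    unfold gridAngle
    ring
  · rw [Nat.dist_eq_sub_of_le_right h, Nat.cast_sub h]
    congr 3
    unfold gridAngle
    ring

lemma two_mul_min_le_mul_sin {N t : ℕ} (ht : t < N) :
    2 * ((min t (N - t) : ℕ) : ℝ) ≤ N * Real.sin (Real.pi * t / N) := by
  have hN : (0 : ℝ) < N := by exact_mod_cast t.zero_le.trans_lt ht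
  have h_half (s : ℕ) (hs : 2 * s ≤ N) : 2 * (s : ℝ) ≤ N * Real.sin (Real.pi * s / N) := by
    have hs_real : 2 * (s : ℝ) ≤ N := by exact_mod_cast hs
    have h_angle : Real.pi * s / N ≤ Real.pi / 2 := by
      rw [div_le_div_iff₀ hN zero_lt_two]
      nlinarith [Real.pi_pos]
    calc 2 * (s : ℝ) = N * (2 / Real.pi * (Real.pi * s / N)) := by
          field_simp
      _ ≤ N * Real.sin (Real.pi * s / N) := by
          gcongr
          exact Real.mul_le_sin (by positivity) h_angle
  rcases le_total (2 * t) N with h | h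
  · rw [min_eq_left (by omega)]
    exact h_half t h
  · have h_reflect : Real.pi * (N - t : ℕ) / N = Real.pi - Real.pi * t / N := by
      rw [Nat.cast_sub ht.le]
      field_simp
    rw [min_eq_right (by omega), ← Real.sin_pi_sub, ← h_reflect]
    exact h_half (N - t) (by omega)

lemma two_mul_min_dist_le_of_nearest {N k k₀ : ℕ} (hk : k < N) (hk₀ : k₀ < N) {ζ : ℂ}
    (h_nearest : ‖gridPoint N k₀ - ζ‖ ≤ ‖gridPoint N k - ζ‖) :
    2 * ((min (Nat.dist k k₀) (N - Nat.dist k k₀) : ℕ) : ℝ) ≤ N * ‖gridPoint N k - ζ‖ := by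
  have h_dist : Nat.dist k k₀ < N := by
    unfold Nat.dist
    omega
  have h_triangle := norm_sub_le_norm_sub_add_norm_sub (gridPoint N k) ζ (gridPoint N k₀)
  rw [norm_sub_rev ζ, norm_gridPoint_sub] at h_triangle
  calc 2 * ((min (Nat.dist k k₀) (N - Nat.dist k k₀) : ℕ) : ℝ)
      ≤ N * Real.sin (Real.pi * Nat.dist k k₀ / N) := two_mul_min_le_mul_sin h_dist
    _ ≤ N * ‖gridPoint N k - ζ‖ := by
        gcongr
        linarith [le_abs_self (Real.sin (Real.pi * Nat.dist k k₀ / N))]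

lemma sum_range_one_div_one_add_sq_dist_le (N : ℕ) (ζ : ℂ) :
    ∑ k ∈ range N, 1 / (1 + (N : ℝ) ^ 2 * ‖gridPoint N k - ζ‖ ^ 2) ≤ 12 := by
  rcases N.eq_zero_or_pos with rfl | hN
  · simp
  obtain ⟨k₀, hk₀, h_nearest⟩ := exists_min_image (range N) (fun k => ‖gridPoint N k - ζ‖)
    ⟨0, mem_range.mpr hN⟩
  let g (t : ℕ) : ℝ := 1 / (1 + 4 * (t : ℝ) ^ 2)
  have hg (t : ℕ) : 0 ≤ g t := by positivity
  have h_term (k : ℕ) (hk : k ∈ range N) : 1 / (1 + (N : ℝ) ^ 2 * ‖gridPoint N k - ζ‖ ^ 2)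
      ≤ g (Nat.dist k k₀) + g (N - Nat.dist k k₀) := by
    have h_le := two_mul_min_dist_le_of_nearest (mem_range.mp hk) (mem_range.mp hk₀)
      (h_nearest k hk)
    calc 1 / (1 + (N : ℝ) ^ 2 * ‖gridPoint N k - ζ‖ ^ 2)
        ≤ g (min (Nat.dist k k₀) (N - Nat.dist k k₀)) := by
          refine one_div_le_one_div_of_le (by positivity) (add_le_add_right ?_ 1)
          rw [← mul_pow, show (4 : ℝ) = 2 ^ 2 by norm_num, ← mul_pow]
          gcongr
      _ ≤ g (Nat.dist k k₀) + g (N - Nat.dist k k₀) := by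
          rcases min_choice (Nat.dist k k₀) (N - Nat.dist k k₀) with h | h <;> rw [h]
          · exact le_add_of_nonneg_right (hg _)
          · exact le_add_of_nonneg_left (hg _)
  have h_reflect : ∑ j ∈ range N, g (N - j) ≤ 2 := by
    refine le_trans (sum_le_sum_of_subset_of_nonneg (range_subset_range.mpr N.le_succ)
      fun _ _ _ => hg _) ?_
    have h_flip := sum_range_reflect g (N + 1)
    rw [Nat.add_sub_cancel] at h_flip
    exact h_flip ▸ sum_range_one_div_one_add_four_mul_sq_le (N + 1)
  calc ∑ k ∈ range N, 1 / (1 + (N : ℝ) ^ 2 * ‖gridPoint N k - ζ‖ ^ 2)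
      ≤ 2 * ∑ j ∈ range N, (g j + g (N - j)) :=
        (sum_le_sum h_term).trans (sum_range_natDist_le (mem_range.mp hk₀)
          fun t => add_nonneg (hg t) (hg (N - t)))
    _ ≤ 2 * (2 + 2) := by
        rw [sum_add_distrib]
        gcongr
        exact sum_range_one_div_one_add_four_mul_sq_le N
    _ ≤ 12 := by norm_num

section RelDist

lemma norm_sub_sq_le {E : Type*} [NormedAddCommGroup E] (u v : E) :
    ‖u - v‖ ^ 2 ≤ 2 * (‖u‖ ^ 2 + ‖v‖ ^ 2) := by
  have h_sq := pow_le_pow_left₀ (norm_nonneg _) (norm_sub_le u v) 2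
  nlinarith [sq_nonneg (‖u‖ - ‖v‖)]

lemma relDistSq_le_two {E : Type*} [NormedAddCommGroup E] (u v : E) : relDistSq u v ≤ 2 :=
  div_le_of_le_mul₀ (by positivity) zero_le_two (norm_sub_sq_le u v)

lemma relDistSq_comm {E : Type*} [NormedAddCommGroup E] (u v : E) :
    relDistSq u v = relDistSq v u := by
  rw [relDistSq, relDistSq, norm_sub_rev, add_comm]

lemma norm_sq_le_of_relDistSq_lt {E : Type*} [NormedAddCommGroup E] {u v : E}
    (h : relDistSq u v < 1 / 5) : ‖v‖ ^ 2 ≤ 5 * ‖u‖ ^ 2 := by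
  have h_sub : ‖u - v‖ ^ 2 ≤ 1 / 5 * (‖u‖ ^ 2 + ‖v‖ ^ 2) := by
    rw [← relDistSq_mul_add_sq]
    gcongr
  have h_triangle : ‖v‖ ≤ ‖u‖ + ‖u - v‖ := by simpa using norm_sub_le u (u - v)
  have h_sq := pow_le_pow_left₀ (norm_nonneg _) h_triangle 2
  nlinarith [sq_nonneg (‖u - v‖ - ‖u‖)]

variable {𝕜 : Type*} [NormedField 𝕜]

lemma norm_mul_sub_mul_sq_le (u u' v v' : 𝕜) :
    ‖u * v - u' * v'‖ ^ 2 ≤ 2 * (‖v‖ ^ 2 * ‖u - u'‖ ^ 2) + 2 * (‖u'‖ ^ 2 * ‖v - v'‖ ^ 2) := by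
  have h_triangle : ‖u * v - u' * v'‖ ≤ ‖v‖ * ‖u - u'‖ + ‖u'‖ * ‖v - v'‖ := by
    rw [← norm_mul, ← norm_mul]
    exact (congrArg norm (by ring)).trans_le (norm_add_le (v * (u - u')) (u' * (v - v')))
  have h_sq := pow_le_pow_left₀ (norm_nonneg _) h_triangle 2
  nlinarith [sq_nonneg (‖v‖ * ‖u - u'‖ - ‖u'‖ * ‖v - v'‖)]

lemma relDistSq_mul_le (u u' v v' : 𝕜) :
    relDistSq (u * v) (u' * v') ≤ 10 * (relDistSq u u' + relDistSq v v') := by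
  have hu_nonneg := relDistSq_nonneg u u'
  have hv_nonneg := relDistSq_nonneg v v'
  by_cases h_far : 1 / 5 ≤ relDistSq u u' ∨ 1 / 5 ≤ relDistSq v v'
  · have h_two := relDistSq_le_two (u * v) (u' * v')
    rcases h_far with h | h <;> linarith
  push Not at h_far
  have hu' := norm_sq_le_of_relDistSq_lt h_far.1
  have hv := norm_sq_le_of_relDistSq_lt (relDistSq_comm v v' ▸ h_far.2)
  have h_mul := norm_mul_sub_mul_sq_le u u' v v'
  rw [← relDistSq_mul_add_sq u, ← relDistSq_mul_add_sq v] at h_mul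
  refine div_le_of_le_mul₀ (by positivity) (by positivity) (h_mul.trans ?_)
  rw [norm_mul, norm_mul, mul_pow, mul_pow]
  have h_v : ‖v‖ ^ 2 * (‖u‖ ^ 2 + ‖u'‖ ^ 2) ≤ 5 * (‖u‖ ^ 2 * ‖v‖ ^ 2 + ‖u'‖ ^ 2 * ‖v'‖ ^ 2) := by
    nlinarith [sq_nonneg ‖u'‖, mul_nonneg (sq_nonneg ‖u‖) (sq_nonneg ‖v‖)]
  have h_u' : ‖u'‖ ^ 2 * (‖v‖ ^ 2 + ‖v'‖ ^ 2) ≤ 5 * (‖u‖ ^ 2 * ‖v‖ ^ 2 + ‖u'‖ ^ 2 * ‖v'‖ ^ 2) := by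
    nlinarith [sq_nonneg ‖v‖, mul_nonneg (sq_nonneg ‖u'‖) (sq_nonneg ‖v'‖)]
  nlinarith [mul_le_mul_of_nonneg_left h_v hu_nonneg, mul_le_mul_of_nonneg_left h_u' hv_nonneg]

lemma relDistSq_star (u v : ℂ) : relDistSq (star u) (star v) = relDistSq u v := by
  rw [relDistSq, relDistSq, ← star_sub, norm_star, norm_star, norm_star]

lemma relDistSq_ofReal (a b : ℝ) : relDistSq (a : ℂ) b = relDistSq a b := by
  rw [relDistSq, relDistSq, ← Complex.ofReal_sub, Complex.norm_real, Complex.norm_real,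
    Complex.norm_real]

end RelDist

lemma natCast_mul_norm_gridPoint_succ_sub_le (N k : ℕ) :
    N * ‖gridPoint N k - gridPoint N (k + 1)‖ ≤ 2 * Real.pi := by
  rcases N.eq_zero_or_pos with rfl | hN
  · simpa using Real.pi_pos.le
  have h_angle : |Real.sin (Real.pi / N)| ≤ Real.pi / N :=
    Real.abs_sin_le_abs.trans_eq (abs_of_pos (by positivity))
  have h_dist : Nat.dist k (k + 1) = 1 := by
    rw [Nat.dist_eq_sub_of_le k.le_succ, Nat.succ_eq_add_one, Nat.add_sub_cancel_left]
  rw [norm_gridPoint_sub, h_dist, Nat.cast_one, mul_one]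
  calc N * (2 * |Real.sin (Real.pi / N)|) ≤ N * (2 * (Real.pi / N)) := by gcongr
    _ = 2 * Real.pi := by field_simp

lemma relDistSq_gridPoint_sub_le (N k : ℕ) (ζ : ℂ) :
    relDistSq (gridPoint N k - ζ) (gridPoint N (k + 1) - ζ)
      ≤ 42 * (1 / (1 + (N : ℝ) ^ 2 * ‖gridPoint N k - ζ‖ ^ 2)) := by
  set u := gridPoint N k - ζ
  set v := gridPoint N (k + 1) - ζ
  have h_close : (N : ℝ) ^ 2 * ‖u - v‖ ^ 2 ≤ 40 := by
    have h_le := pow_le_pow_left₀ (by positivity) (natCast_mul_norm_gridPoint_succ_sub_le N k) 2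
    rw [← sub_sub_sub_cancel_right _ _ ζ, mul_pow] at h_le
    nlinarith [Real.pi_pos, Real.pi_lt_d2]
  have h_near : relDistSq u v * ((N : ℝ) ^ 2 * ‖u‖ ^ 2) ≤ 40 := by
    calc relDistSq u v * ((N : ℝ) ^ 2 * ‖u‖ ^ 2)
        ≤ (N : ℝ) ^ 2 * (relDistSq u v * (‖u‖ ^ 2 + ‖v‖ ^ 2)) := by
          rw [mul_left_comm]
          gcongr
          · exact relDistSq_nonneg u v
          · exact le_add_of_nonneg_right (sq_nonneg _)
      _ ≤ 40 := by rwa [relDistSq_mul_add_sq]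
  rw [mul_one_div, le_div_iff₀ (by positivity), mul_add, mul_one]
  linarith [relDistSq_le_two u v]

lemma sum_relDistSq_gridPoint_prod_le (N : ℕ) (s : Multiset ℂ) :
    ∑ k ∈ range N, relDistSq (s.map (gridPoint N k - ·)).prod (s.map (gridPoint N (k + 1) - ·)).prod
      ≤ 10 ^ s.card * s.card * 504 := by
  induction s using Multiset.induction_on with
  | empty => simp [relDistSq]
  | cons a s ih =>
    simp only [Multiset.map_cons, Multiset.prod_cons, Multiset.card_cons]
    have h_term (k : ℕ) := (relDistSq_mul_le (gridPoint N k - a) (gridPoint N (k + 1) - a)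
      (s.map (gridPoint N k - ·)).prod (s.map (gridPoint N (k + 1) - ·)).prod).trans
      (mul_le_mul_of_nonneg_left (add_le_add_left (relDistSq_gridPoint_sub_le N k a) _)
        (by norm_num))
    refine (sum_le_sum fun k _ => h_term k).trans ?_
    rw [← mul_sum, sum_add_distrib, ← mul_sum]
    have h_root := sum_range_one_div_one_add_sq_dist_le N a
    have h_one_le : (1 : ℝ) ≤ 10 ^ s.card := one_le_pow₀ (by norm_num)
    push_cast
    rw [pow_succ (10 : ℝ)]
    nlinarith

lemma sum_relDistSq_eval_gridPoint_le (N : ℕ) {P : ℂ[X]} {r : ℕ} (hr : P.natDegree ≤ r) :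
    ∑ k ∈ range N, relDistSq (P.eval (gridPoint N k)) (P.eval (gridPoint N (k + 1)))
      ≤ 10 ^ r * r * 504 := by
  rcases eq_or_ne P 0 with rfl | hP
  · simp only [eval_zero, relDistSq, sub_zero, norm_zero]
    norm_num
  have h_splits := IsAlgClosed.splits P
  simp only [h_splits.eval_eq_prod_roots, relDistSq_mul_left (leadingCoeff_ne_zero.mpr hP)]
  refine (sum_relDistSq_gridPoint_prod_le N P.roots).trans ?_
  rw [← h_splits.natDegree_eq_card_roots]
  gcongr
  norm_num

end Circle
section Rotation

open Polynomial

variable {ι : Type*}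

/-- The point at angle `ψ` on the ellipse through `X` (at angle `0`) and `Y` (at angle `π / 2`). -/
noncomputable def rotate (X Y : ι → ℝ) (ψ : ℝ) : ι → ℝ :=
  fun i => Real.cos ψ * X i + Real.sin ψ * Y i

lemma circleExp_mul_rotate (X Y : ι → ℝ) (ψ : ℝ) (i : ι) :
    (Circle.exp ψ : ℂ) * (rotate X Y ψ i : ℝ)
      = (X i - Complex.I * Y i) / 2 * (Circle.exp ψ : ℂ) ^ 2 + (X i + Complex.I * Y i) / 2 := by
  rw [rotate, Circle.coe_exp, Complex.exp_mul_I]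
  push_cast
  linear_combination (-(X i : ℂ) * Complex.sin ψ ^ 2 / 2 + Complex.I * Y i * Complex.sin ψ ^ 2 / 2
    + Complex.cos ψ * Complex.sin ψ * Y i) * Complex.I_sq
    + ((X i : ℂ) / 2 + Complex.I * Y i / 2) * Complex.sin_sq_add_cos_sq (ψ : ℂ)

/-- The polynomial whose value at `exp (i ψ)` is
`exp (d i ψ)` times the monomial `S` at `rotate X Y ψ`, if `#S ≤ d`. -/
noncomputable def rotatedMonomial (d : ℕ) (X Y : ι → ℝ) (S : Finset ι) : ℂ[X] :=
  Polynomial.X ^ (d - #S) * ∏ i ∈ S, (C (((X i : ℂ) - Complex.I * Y i) / 2) * Polynomial.X ^ 2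
    + C (((X i : ℂ) + Complex.I * Y i) / 2))

lemma natDegree_rotatedMonomial_le {d : ℕ} (X Y : ι → ℝ) {S : Finset ι} (hS : #S ≤ d) :
    (rotatedMonomial d X Y S).natDegree ≤ 2 * d := by
  have h_prod : (∏ i ∈ S, (C (((X i : ℂ) - Complex.I * Y i) / 2) * Polynomial.X ^ 2
      + C (((X i : ℂ) + Complex.I * Y i) / 2))).natDegree ≤ ∑ i ∈ S, 2 :=
    (natDegree_prod_le _ _).trans (sum_le_sum fun i _ => by compute_degree)
  rw [sum_const, smul_eq_mul] at h_prod
  refine natDegree_mul_le.trans ?_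
  rw [natDegree_X_pow]
  omega

lemma eval_rotatedMonomial {d : ℕ} (X Y : ι → ℝ) {S : Finset ι} (hS : #S ≤ d) (ψ : ℝ) :
    (rotatedMonomial d X Y S).eval (Circle.exp ψ : ℂ)
      = (Circle.exp ψ : ℂ) ^ d * ((∏ i ∈ S, rotate X Y ψ i : ℝ) : ℂ) := by
  simp only [rotatedMonomial, eval_mul, eval_pow, eval_X, eval_prod, eval_add, eval_C]
  simp_rw [← circleExp_mul_rotate]
  rw [prod_mul_distrib, prod_const, Complex.ofReal_prod, ← mul_assoc, ← pow_add,
    Nat.sub_add_cancel hS]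

variable [Fintype ι] {c : CubePoly ι} {d : ℕ}

lemma CubePoly.DegreeLE.exists_eval_circleExp_eq (hc : c.DegreeLE d) (X Y : ι → ℝ) :
    ∃ P : ℂ[X], P.natDegree ≤ 2 * d ∧
      ∀ ψ, P.eval (Circle.exp ψ : ℂ) = (Circle.exp ψ : ℂ) ^ d * (c.eval (rotate X Y ψ) : ℝ) := by
  refine ⟨∑ S with #S ≤ d, C (c S : ℂ) * rotatedMonomial d X Y S,
    natDegree_sum_le_of_forall_le _ _ fun S hS => (natDegree_C_mul_le _ _).trans
      (natDegree_rotatedMonomial_le X Y (mem_filter.mp hS).2), fun ψ => ?_⟩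
  rw [eval_finsetSum, CubePoly.eval, Complex.ofReal_sum, mul_sum, sum_filter]
  refine sum_congr rfl fun S _ => ?_
  split_ifs with hS
  · rw [eval_mul, eval_C, eval_rotatedMonomial X Y hS, Complex.ofReal_mul]
    ring
  · simp [hc S (not_le.mp hS)]

/-- The total relative variation of a polynomial of degree `d` along `N` equally spaced points of
an ellipse is at most this constant, whatever `N` is. -/
noncomputable def rotationConst (d : ℕ) : ℝ :=
  10 * (10 ^ d * d * 504 + 10 ^ (2 * d) * (2 * d) * 504)

lemma rotationConst_nonneg (d : ℕ) : 0 ≤ rotationConst d := by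
  unfold rotationConst
  positivity

lemma star_circleExp_pow_mul (ψ : ℝ) (d : ℕ) (z : ℂ) :
    star ((Circle.exp ψ : ℂ) ^ d) * ((Circle.exp ψ : ℂ) ^ d * z) = z := by
  have h_norm : star ((Circle.exp ψ : ℂ) ^ d) * (Circle.exp ψ : ℂ) ^ d = 1 := by
    rw [Complex.star_def, Complex.conj_mul', norm_pow, Circle.norm_coe]
    simp
  rw [← mul_assoc, h_norm, one_mul]

lemma CubePoly.DegreeLE.sum_relDistSq_rotate_le (hc : c.DegreeLE d) (N : ℕ) (X Y : ι → ℝ) :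
    ∑ k ∈ range N, relDistSq (c.eval (rotate X Y (gridAngle N k)))
      (c.eval (rotate X Y (gridAngle N (k + 1)))) ≤ rotationConst d := by
  obtain ⟨P, hP_degree, hP_eval⟩ := hc.exists_eval_circleExp_eq X Y
  have h_eval (k : ℕ) : ((c.eval (rotate X Y (gridAngle N k)) : ℝ) : ℂ)
      = star (gridPoint N k ^ d) * P.eval (gridPoint N k) := by
    rw [gridPoint, hP_eval, star_circleExp_pow_mul]
  have h_poly := sum_relDistSq_eval_gridPoint_le N hP_degree
  have h_pow := sum_relDistSq_eval_gridPoint_le N (natDegree_X_pow_le (R := ℂ) d)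
  simp only [eval_pow, eval_X] at h_pow
  calc ∑ k ∈ range N, relDistSq (c.eval (rotate X Y (gridAngle N k)))
        (c.eval (rotate X Y (gridAngle N (k + 1))))
      ≤ ∑ k ∈ range N, 10 * (relDistSq (gridPoint N k ^ d) (gridPoint N (k + 1) ^ d)
          + relDistSq (P.eval (gridPoint N k)) (P.eval (gridPoint N (k + 1)))) := by
        refine sum_le_sum fun k _ => ?_
        rw [← relDistSq_ofReal, h_eval, h_eval, ← relDistSq_star (gridPoint N k ^ d)]
        exact relDistSq_mul_le _ _ _ _
    _ ≤ rotationConst d := by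
        rw [← mul_sum, sum_add_distrib, rotationConst]
        push_cast at h_poly
        linarith

section DistanceToRoots

lemma sum_range_sum_map_one_div_le (N : ℕ) (s : Multiset ℂ) :
    ∑ k ∈ range N, (s.map fun ζ => 2 * (1 / (1 + (N : ℝ) ^ 2 * ‖gridPoint N k - ζ‖ ^ 2))).sum
      ≤ 24 * (s.card : ℝ) := by
  induction s using Multiset.induction_on with
  | empty => simp
  | cons a s ih =>
    simp only [Multiset.map_cons, Multiset.sum_cons, Multiset.card_cons]
    rw [sum_add_distrib, ← mul_sum]
    push_cast
    linarith [sum_range_one_div_one_add_sq_dist_le N a]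

lemma norm_prod_sub_le_of_far {L : ℝ} (hL : 1 ≤ L) {u v : ℂ} (huv : ‖v - u‖ ≤ 2) {s : Multiset ℂ}
    (h_far : ∀ ζ ∈ s, 1 ≤ L * ‖u - ζ‖) :
    ‖(s.map (v - ·)).prod‖ ≤ (4 * L) ^ s.card * ‖(s.map (u - ·)).prod‖ := by
  induction s using Multiset.induction_on with
  | empty => simp
  | cons a s ih =>
    simp only [Multiset.map_cons, Multiset.prod_cons, Multiset.card_cons, norm_mul]
    have h_root : ‖v - a‖ ≤ 4 * L * ‖u - a‖ := by
      have h_far_a := h_far a (Multiset.mem_cons_self a s)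
      nlinarith [norm_nonneg (u - a), norm_sub_le_norm_sub_add_norm_sub v u a]
    calc ‖v - a‖ * ‖(s.map (v - ·)).prod‖
        ≤ 4 * L * ‖u - a‖ * ((4 * L) ^ s.card * ‖(s.map (u - ·)).prod‖) := by
          gcongr
          exact ih fun ζ hζ => h_far ζ (Multiset.mem_cons_of_mem hζ)
      _ = (4 * L) ^ (s.card + 1) * (‖u - a‖ * ‖(s.map (u - ·)).prod‖) := by
          rw [pow_succ]
          ring

lemma norm_eval_le_of_far {L : ℝ} (hL : 1 ≤ L) {u v : ℂ} (huv : ‖v - u‖ ≤ 2) {P : ℂ[X]} {r : ℕ}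
    (hr : P.natDegree ≤ r) (h_far : ∀ ζ ∈ P.roots, 1 ≤ L * ‖u - ζ‖) :
    ‖P.eval v‖ ≤ (4 * L) ^ r * ‖P.eval u‖ := by
  have h_splits := IsAlgClosed.splits P
  rw [h_splits.eval_eq_prod_roots, h_splits.eval_eq_prod_roots, norm_mul, norm_mul, mul_left_comm]
  gcongr
  refine (norm_prod_sub_le_of_far hL huv h_far).trans ?_
  rw [← h_splits.natDegree_eq_card_roots]
  gcongr
  linarith

lemma mul_sq_div_le_mul_sq {a b ε M : ℝ} (hε : 0 < ε) (ha : 0 ≤ a) (h : a ≤ M * b) :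
    ε * a ^ 2 / (b ^ 2 + ε * a ^ 2 + ε ^ 2) ≤ ε * M ^ 2 := by
  rw [div_le_iff₀ (by positivity)]
  calc ε * a ^ 2 ≤ ε * (M * b) ^ 2 := by gcongr
    _ = ε * M ^ 2 * b ^ 2 := by ring
    _ ≤ ε * M ^ 2 * (b ^ 2 + ε * a ^ 2 + ε ^ 2) := by
        gcongr
        linarith [show 0 ≤ ε * a ^ 2 + ε ^ 2 by positivity]

lemma mul_sq_div_le_sum_roots_add {N : ℕ} (hN : 0 < N) {P : ℂ[X]} {r : ℕ} (hr : P.natDegree ≤ r)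
    {u v : ℂ} (huv : ‖v - u‖ ≤ 2) {ε : ℝ} (hε : 0 < ε) :
    ε * ‖P.eval v‖ ^ 2 / (‖P.eval u‖ ^ 2 + ε * ‖P.eval v‖ ^ 2 + ε ^ 2)
      ≤ (P.roots.map fun ζ => 2 * (1 / (1 + (N : ℝ) ^ 2 * ‖u - ζ‖ ^ 2))).sum
        + ε * ((4 * N) ^ r) ^ 2 := by
  have h_nonneg : ∀ y ∈ P.roots.map fun ζ => 2 * (1 / (1 + (N : ℝ) ^ 2 * ‖u - ζ‖ ^ 2)), 0 ≤ y := by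
    intro y hy
    obtain ⟨ζ, _, rfl⟩ := Multiset.mem_map.mp hy
    positivity
  by_cases h_far : ∀ ζ ∈ P.roots, 1 ≤ N * ‖u - ζ‖
  · exact (mul_sq_div_le_mul_sq hε (norm_nonneg _)
      (norm_eval_le_of_far (mod_cast hN) huv hr h_far)).trans
      (le_add_of_nonneg_left (Multiset.sum_nonneg h_nonneg))
  push Not at h_far
  obtain ⟨ζ, hζ, h_near⟩ := h_far
  have h_le_one : ε * ‖P.eval v‖ ^ 2 / (‖P.eval u‖ ^ 2 + ε * ‖P.eval v‖ ^ 2 + ε ^ 2) ≤ 1 :=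
    div_le_one_of_le₀ (by linarith [sq_nonneg ‖P.eval u‖, sq_nonneg ε]) (by positivity)
  have h_one_le : 1 ≤ 2 * (1 / (1 + (N : ℝ) ^ 2 * ‖u - ζ‖ ^ 2)) := by
    have h_sq : (N * ‖u - ζ‖) ^ 2 ≤ 1 := pow_le_one₀ (by positivity) h_near.le
    rw [mul_one_div, le_div_iff₀ (by positivity)]
    linarith [mul_pow (N : ℝ) ‖u - ζ‖ 2]
  have h_single := Multiset.single_le_sum h_nonneg _ (Multiset.mem_map_of_mem _ hζ)
  linarith [show 0 ≤ ε * ((4 * (N : ℝ)) ^ r) ^ 2 by positivity]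

lemma sum_mul_sq_div_eval_gridPoint_le {N : ℕ} (hN : 0 < N) {P : ℂ[X]} {r : ℕ}
    (hr : P.natDegree ≤ r) (θ : ℝ) {ε : ℝ} (hε : 0 < ε) :
    ∑ k ∈ range N, ε * ‖P.eval (Circle.exp (gridAngle N k + θ) : ℂ)‖ ^ 2 /
      (‖P.eval (gridPoint N k)‖ ^ 2 + ε * ‖P.eval (Circle.exp (gridAngle N k + θ) : ℂ)‖ ^ 2
        + ε ^ 2) ≤ 24 * r + N * (ε * ((4 * N) ^ r) ^ 2) := by
  have h_card : (P.roots.card : ℝ) ≤ r := by exact_mod_cast P.card_roots'.trans hr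
  have h_norm (a b : ℝ) : ‖(Circle.exp a : ℂ) - Circle.exp b‖ ≤ 2 :=
    (norm_sub_le _ _).trans (by rw [Circle.norm_coe, Circle.norm_coe]; norm_num)
  refine (sum_le_sum fun k _ => mul_sq_div_le_sum_roots_add hN hr (h_norm _ _) hε).trans ?_
  have h_roots := sum_range_sum_map_one_div_le N P.roots
  simp only [gridPoint] at h_roots
  rw [sum_add_distrib, sum_const, card_range, nsmul_eq_mul]
  linarith

lemma CubePoly.DegreeLE.sum_mul_sq_div_rotate_le (hc : c.DegreeLE d) {N : ℕ} (hN : 0 < N)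
    (X Y : ι → ℝ) (θ : ℝ) {ε : ℝ} (hε : 0 < ε) :
    ∑ k ∈ range N, ε * c.eval (rotate X Y (gridAngle N k + θ)) ^ 2 /
      (c.eval (rotate X Y (gridAngle N k)) ^ 2
        + ε * c.eval (rotate X Y (gridAngle N k + θ)) ^ 2 + ε ^ 2)
      ≤ 48 * d + N * (ε * ((4 * N) ^ (2 * d)) ^ 2) := by
  obtain ⟨P, hP_degree, hP_eval⟩ := hc.exists_eval_circleExp_eq X Y
  have h_norm (ψ : ℝ) : ‖P.eval (Circle.exp ψ : ℂ)‖ ^ 2 = c.eval (rotate X Y ψ) ^ 2 := by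
    rw [hP_eval, norm_mul, norm_pow, Circle.norm_coe, one_pow, one_mul, Complex.norm_real,
      Real.norm_eq_abs, sq_abs]
  have h_sum := sum_mul_sq_div_eval_gridPoint_le hN hP_degree θ hε
  simp only [gridPoint, h_norm] at h_sum
  push_cast at h_sum
  linarith

end DistanceToRoots

end Rotation
section NoisyBits

variable {Ω : Type*} [Fintype Ω] {w : Ω → ℝ} {a b : Ω → Bool}

/-- The correlation of the random bits `a` and `b`, read as signs. -/
noncomputable def bitCorrelation (w : Ω → ℝ) (a b : Ω → Bool) : ℝ :=
  ∑ t, w t * (chi (a t) * chi (b t))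

/-- The random bit `a` is uniformly distributed under the weight `w`. -/
def IsUnbiased (w : Ω → ℝ) (a : Ω → Bool) : Prop := ∑ t, w t * chi (a t) = 0

/-- The random sign-like variable `cos ψ * a + sin ψ * b`, with the bits `a` and `b` read as
signs. -/
noncomputable def rotatedBit (a b : Ω → Bool) (ψ : ℝ) : Ω → ℝ :=
  fun t => Real.cos ψ * chi (a t) + Real.sin ψ * chi (b t)

lemma IsUnbiased.isSignLike (ha : IsUnbiased w a) (hw : w ∈ stdSimplex ℝ Ω) :
    IsSignLike w fun t => chi (a t) where
  mean := ha
  sq := by simp only [chi_sq, mul_one, hw.2]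
  cube := by simpa only [IsUnbiased, pow_succ _ 2, chi_sq, one_mul] using ha
  sq_le t := by rw [chi_sq]; norm_num

lemma sum_mul_linear_combination (w f g : Ω → ℝ) (x y : ℝ) :
    ∑ t, w t * (x * f t + y * g t) = x * ∑ t, w t * f t + y * ∑ t, w t * g t := by
  simp only [mul_sum, ← sum_add_distrib]
  exact sum_congr rfl fun t _ => by ring

lemma sum_rotatedBit_mul_rotatedBit (hw : w ∈ stdSimplex ℝ Ω) (hab : bitCorrelation w a b = 0)
    (ψ ψ' : ℝ) :
    ∑ t, w t * (rotatedBit a b ψ t * rotatedBit a b ψ' t) = Real.cos (ψ' - ψ) := by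
  have h_expand (t : Ω) : rotatedBit a b ψ t * rotatedBit a b ψ' t
      = Real.cos (ψ' - ψ) * 1 + Real.sin (ψ + ψ') * (chi (a t) * chi (b t)) := by
    rw [Real.cos_sub, Real.sin_add, rotatedBit, rotatedBit]
    linear_combination Real.cos ψ * Real.cos ψ' * chi_sq (a t)
      + Real.sin ψ * Real.sin ψ' * chi_sq (b t)
  rw [bitCorrelation] at hab
  simp only [h_expand, sum_mul_linear_combination]
  simp [hab, hw.2]

omit [Fintype Ω] in
lemma rotatedBit_sq_le (a b : Ω → Bool) (ψ : ℝ) (t : Ω) : rotatedBit a b ψ t ^ 2 ≤ 2 := by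
  have h_orthogonal : rotatedBit a b ψ t ^ 2
      + (Real.cos ψ * chi (b t) - Real.sin ψ * chi (a t)) ^ 2 = 2 := by
    rw [rotatedBit]
    linear_combination chi_sq (a t) + chi_sq (b t)
      + (chi (a t) ^ 2 + chi (b t) ^ 2) * Real.sin_sq_add_cos_sq ψ
  linarith [sq_nonneg (Real.cos ψ * chi (b t) - Real.sin ψ * chi (a t))]

lemma isSignLike_rotatedBit (hw : w ∈ stdSimplex ℝ Ω) (ha : IsUnbiased w a) (hb : IsUnbiased w b)
    (hab : bitCorrelation w a b = 0) (ψ : ℝ) : IsSignLike w (rotatedBit a b ψ) where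
  mean := by
    rw [IsUnbiased] at ha hb
    simp only [rotatedBit, sum_mul_linear_combination, ha, hb, mul_zero, add_zero]
  sq := by simpa [sq] using sum_rotatedBit_mul_rotatedBit hw hab ψ ψ
  cube := by
    have h_expand (t : Ω) : rotatedBit a b ψ t ^ 3
        = (Real.cos ψ ^ 3 + 3 * Real.cos ψ * Real.sin ψ ^ 2) * chi (a t)
          + (Real.sin ψ ^ 3 + 3 * Real.cos ψ ^ 2 * Real.sin ψ) * chi (b t) := by
      rw [rotatedBit]
      linear_combination
        (Real.cos ψ ^ 3 * chi (a t) + 3 * Real.cos ψ ^ 2 * Real.sin ψ * chi (b t)) * chi_sq (a t)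
        + (Real.sin ψ ^ 3 * chi (b t) + 3 * Real.cos ψ * Real.sin ψ ^ 2 * chi (a t)) * chi_sq (b t)
    rw [IsUnbiased] at ha hb
    simp only [h_expand, sum_mul_linear_combination, ha, hb, mul_zero, add_zero]
  sq_le := rotatedBit_sq_le a b ψ

lemma IsUnbiased.iidExpect_comp {ι : Type*} [Fintype ι] [DecidableEq ι] (ha : IsUnbiased w a)
    (hw : w ∈ stdSimplex ℝ Ω) (F : (ι → Bool) → ℝ) :
    iidExpect w (fun ω => F fun i => a (ω i)) = iidExpect uniformBit F := by
  refine iidExpect_comp_map (fun v => ?_) F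
  rw [IsUnbiased] at ha
  rw [sum_filter]
  trans ∑ t, w t * (1 / 2 * 1 + chi v / 2 * chi (a t))
  · refine sum_congr rfl fun t _ => ?_
    cases h : a t <;> cases v <;> norm_num [chi]
  · rw [sum_mul_linear_combination]
    simp [ha, hw.2, uniformBit]

end NoisyBits

section AntiConcentration

variable {ι : Type*} [Fintype ι] [DecidableEq ι] {c : CubePoly ι} {d : ℕ}

lemma secondOrderTaylor_mul_sq_div {ε : ℝ} (hε : 0 < ε) (hε_le : ε ≤ 1) :
    SecondOrderTaylor (176 * (1 / ε) ^ 3) fun a b => ε * b ^ 2 / (a ^ 2 + ε * b ^ 2 + ε ^ 2) := by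
  have h_le_sqrt : ε ≤ √ε := by
    rw [Real.le_sqrt hε.le hε.le]
    nlinarith
  have h_scaled := (secondOrderTaylor_quadratic_div (α := 0) (β := 0) (γ := 0) (δ := 1)
    (by norm_num)).comp_mul (by norm_num) (l := 1 / ε) (l' := 1 / √ε) (L := 1 / ε)
    (by rw [abs_of_pos (by positivity)])
    (by rw [abs_of_pos (by positivity)]; exact one_div_le_one_div_of_le hε h_le_sqrt)
  convert h_scaled using 3 with a b
  have h_right : (1 / √ε * b) ^ 2 = b ^ 2 / ε := by
    rw [mul_pow, div_pow, Real.sq_sqrt hε.le]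
    ring
  have h_left : (1 / ε * a) ^ 2 = a ^ 2 / ε ^ 2 := by rw [mul_pow, div_pow]; ring
  rw [h_left, h_right]
  field_simp
  ring

namespace CubePoly.DegreeLE

lemma le_iidExpect_sq_div_one_add_sq (hc : c.DegreeLE d) (h_variance : c.variance = 1) :
    1 / (1 + 9 ^ d) ≤
      iidExpect uniformBit fun y => c.evalCube y ^ 2 / (1 + c.evalCube y ^ 2) := by
  set σ := c.normSq with hσ_def
  have hσ : 1 ≤ σ := h_variance ▸ c.variance_le_normSq
  set t : ℝ := 1 / (1 + 9 ^ d * σ) with ht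
  have ht_mul : t * (1 + 9 ^ d * σ) = 1 := one_div_mul_cancel (by positivity)
  -- the parabola `(2t - t²) z - t² z²` is tangent to `z / (1 + z)` from below
  have h_tangent : (2 * t - t ^ 2) * σ - t ^ 2 * iidExpect uniformBit (fun y => c.evalCube y ^ 4)
      ≤ iidExpect uniformBit fun y => c.evalCube y ^ 2 / (1 + c.evalCube y ^ 2) := by
    rw [hσ_def, ← iidExpect_evalCube_sq c, ← iidExpect_const_mul, ← iidExpect_const_mul,
      ← iidExpect_sub]
    refine iidExpect_mono uniformBit_mem_stdSimplex fun y => ?_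
    rw [le_div_iff₀ (by positivity)]
    nlinarith [sq_nonneg (c.evalCube y * (1 - t * (1 + c.evalCube y ^ 2)))]
  have h_fourth : t ^ 2 * iidExpect uniformBit (fun y => c.evalCube y ^ 4)
      ≤ t ^ 2 * (9 ^ d * σ ^ 2) :=
    mul_le_mul_of_nonneg_left hc.iidExpect_evalCube_pow_four_le (sq_nonneg t)
  calc 1 / (1 + 9 ^ d) ≤ t * σ := by
        rw [ht, div_mul_eq_mul_div, one_mul, div_le_div_iff₀ (by positivity) (by positivity)]
        nlinarith
    _ = (2 * t - t ^ 2) * σ - t ^ 2 * (9 ^ d * σ ^ 2) := by linear_combination t * σ * ht_mul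
    _ ≤ _ := by linarith

variable {Ω : Type*} [Fintype Ω] {w : Ω → ℝ} {a b : Ω → Bool} {s : ℝ}

lemma iidExpect_mul_sq_div_le (hw : w ∈ stdSimplex ℝ Ω) (ha : IsUnbiased w a)
    (hb : IsUnbiased w b) (hab : bitCorrelation w a b = 0) (hc : c.DegreeLE d) (hs : 0 < s)
    (h_influence : ∀ i, c.influence i ≤ s ^ 2) {ε : ℝ} (hε : 0 < ε) (hε_le : ε ≤ 1) {N : ℕ}
    (hN : 0 < N) :
    iidExpect w (fun ω => ε * c.evalCube (fun i => b (ω i)) ^ 2 /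
        (c.evalCube (fun i => a (ω i)) ^ 2 + ε * c.evalCube (fun i => b (ω i)) ^ 2 + ε ^ 2))
      ≤ 48 * d / N + ε * ((4 * N) ^ (2 * d)) ^ 2
          + 12 * 9 ^ d * (176 * (1 / ε) ^ 3) * s * (d * c.variance) := by
  set F : ℝ → ℝ → ℝ := fun x y => ε * y ^ 2 / (x ^ 2 + ε * y ^ 2 + ε ^ 2)
  set err := 12 * 9 ^ d * (176 * (1 / ε) ^ 3) * s * (d * c.variance)
  set E := iidExpect w fun ω =>
    F (c.evalCube fun i => a (ω i)) (c.evalCube fun i => b (ω i))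
  let point (ω : ι → Ω) (ψ : ℝ) : ι → ℝ :=
    rotate (fun i => chi (a (ω i))) (fun i => chi (b (ω i))) ψ
  have h_sign := isSignLike_rotatedBit hw ha hb hab
  have h_rotate (ψ : ℝ) : E ≤ iidExpect w (fun ω => F (c.eval (point ω ψ))
      (c.eval (point ω (ψ + Real.pi / 2)))) + err := by
    have h_swap := abs_iidExpect_sub_le hw hc hs h_influence (by positivity)
      (secondOrderTaylor_mul_sq_div hε hε_le) (fun _ : ι => ha.isSignLike hw)
      (fun _ => hb.isSignLike hw) (fun _ => h_sign ψ) (fun _ => h_sign (ψ + Real.pi / 2))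
      (fun _ => by
        rw [sum_rotatedBit_mul_rotatedBit hw hab, add_sub_cancel_left, Real.cos_pi_div_two]
        exact hab)
    exact sub_le_iff_le_add'.mp (abs_le.mp h_swap).2
  have h_circle : iidExpect w (fun ω => ∑ k ∈ range N, F (c.eval (point ω (gridAngle N k)))
      (c.eval (point ω (gridAngle N k + Real.pi / 2))))
      ≤ 48 * d + N * (ε * ((4 * N) ^ (2 * d)) ^ 2) :=
    (iidExpect_mono hw fun ω => hc.sum_mul_sq_div_rotate_le hN _ _ (Real.pi / 2) hε).trans_eq
      (iidExpect_const hw _)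
  have h_sum := sum_le_sum fun k (_ : k ∈ range N) => h_rotate (gridAngle N k)
  rw [sum_const, card_range, nsmul_eq_mul, sum_add_distrib, sum_const, card_range, nsmul_eq_mul,
    ← iidExpect_sum] at h_sum
  have hN_pos : (0 : ℝ) < N := mod_cast hN
  refine le_of_mul_le_mul_left ((h_sum.trans (add_le_add_left h_circle _)).trans_eq ?_) hN_pos
  field_simp

lemma le_iidExpect_mul_sq_div (hc : c.DegreeLE d) (h_variance : c.variance = 1) {ε : ℝ}
    (hε : 0 < ε) (hε_le : ε ≤ 1 / 2) :
    iidExpect uniformBit (fun x => if |c.evalCube x| ≤ ε then (1 : ℝ) else 0) * (1 / (1 + 9 ^ d))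
      ≤ iidExpect uniformBit fun x => iidExpect uniformBit fun y =>
        ε * c.evalCube y ^ 2 / (c.evalCube x ^ 2 + ε * c.evalCube y ^ 2 + ε ^ 2) := by
  have hw := uniformBit_mem_stdSimplex
  rw [← iidExpect_mul_const]
  refine iidExpect_mono hw fun x => ?_
  split_ifs with hx
  · rw [one_mul]
    refine (hc.le_iidExpect_sq_div_one_add_sq h_variance).trans (iidExpect_mono hw fun y => ?_)
    have h_small : c.evalCube x ^ 2 ≤ ε ^ 2 := sq_le_sq' (abs_le.mp hx).1 (abs_le.mp hx).2
    have h_denom : c.evalCube x ^ 2 + ε ^ 2 ≤ ε := by nlinarith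
    rw [div_le_div_iff₀ (by positivity) (by positivity)]
    nlinarith [mul_le_mul_of_nonneg_left h_denom (sq_nonneg (c.evalCube y))]
  · rw [zero_mul]
    exact iidExpect_nonneg hw fun y => by positivity

lemma iidExpect_abs_le_le (hc : c.DegreeLE d) (h_variance : c.variance = 1) (hs : 0 < s)
    (h_influence : ∀ i, c.influence i ≤ s ^ 2) {ε : ℝ} (hε : 0 < ε) (hε_le : ε ≤ 1 / 2) {N : ℕ}
    (hN : 0 < N) :
    iidExpect uniformBit (fun x => if |c.evalCube x| ≤ ε then (1 : ℝ) else 0)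
      ≤ (1 + 9 ^ d) * (48 * d / N + ε * ((4 * N) ^ (2 * d)) ^ 2
          + 12 * 9 ^ d * (176 * (1 / ε) ^ 3) * s * d) := by
  have h_upper := hc.iidExpect_mul_sq_div_le
    (prodWeight_mem_stdSimplex uniformBit_mem_stdSimplex uniformBit_mem_stdSimplex)
    (a := Prod.fst) (b := Prod.snd)
    (by simp [IsUnbiased, prodWeight, uniformBit, Fintype.sum_prod_type, chi])
    (by simp [IsUnbiased, prodWeight, uniformBit, Fintype.sum_prod_type, chi])
    (by simp [bitCorrelation, prodWeight, uniformBit, Fintype.sum_prod_type, chi])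
    hs h_influence hε (hε_le.trans (by norm_num)) hN
  have h_lower := hc.le_iidExpect_mul_sq_div h_variance hε hε_le
  have h_pair := iidExpect_prod_type (w := uniformBit) (w' := uniformBit)
    fun ω : ι → Bool × Bool => ε * c.evalCube (fun i => (ω i).2) ^ 2 /
      (c.evalCube (fun i => (ω i).1) ^ 2 + ε * c.evalCube (fun i => (ω i).2) ^ 2 + ε ^ 2)
  rw [mul_one_div, div_le_iff₀' (by positivity), ← h_pair] at h_lower
  rw [h_variance, mul_one] at h_upper
  exact h_lower.trans (mul_le_mul_of_nonneg_left h_upper (by positivity))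

end CubePoly.DegreeLE

end AntiConcentration
section PathEnergy

lemma sq_le_average_add_sum_sq_sub {N : ℕ} (hN : 0 < N) (r : ℕ → ℝ) {k : ℕ} (hk : k ≤ N) :
    r k ^ 2 ≤ 2 / N * ∑ j ∈ range N, r j ^ 2 + 2 * N * ∑ l ∈ range N, (r l - r (l + 1)) ^ 2 := by
  have hN_pos : (0 : ℝ) < N := by exact_mod_cast hN
  set D := ∑ l ∈ range N, (r l - r (l + 1)) ^ 2
  have h_telescope {a b : ℕ} (hab : a ≤ b) (hb : b ≤ N) :
      |r a - r b| ≤ ∑ l ∈ range N, |r l - r (l + 1)| := by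
    simpa only [Real.dist_eq] using (dist_le_Ico_sum_dist r hab).trans
      (sum_le_sum_of_subset_of_nonneg (fun l hl => by grind) fun _ _ _ => dist_nonneg)
  have h_cauchy : (∑ l ∈ range N, |r l - r (l + 1)|) ^ 2 ≤ N * D := by
    simpa only [card_range, sq_abs] using
      sq_sum_le_card_mul_sum_sq (s := range N) (f := fun l => |r l - r (l + 1)|)
  have h_each : ∀ j ∈ range N, r k ^ 2 ≤ 2 * r j ^ 2 + 2 * (N * D) := by
    intro j hj
    have h_dist : |r k - r j| ≤ ∑ l ∈ range N, |r l - r (l + 1)| := by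
      rcases le_total k j with h | h
      · exact h_telescope h (mem_range.mp hj).le
      · rw [abs_sub_comm]
        exact h_telescope h hk
    have h_sq := pow_le_pow_left₀ (abs_nonneg _) h_dist 2
    rw [sq_abs] at h_sq
    nlinarith [sq_nonneg (r k - 2 * r j)]
  have h_sum := sum_le_sum h_each
  simp only [sum_add_distrib, ← mul_sum, sum_const, card_range, nsmul_eq_mul] at h_sum
  refine le_of_mul_le_mul_left (h_sum.trans (le_of_eq ?_)) hN_pos
  field_simp

lemma relDistSq_le_of_sq_sub_le {a b μ : ℝ} (hμ : μ ≠ 0) (ha : (a - μ) ^ 2 ≤ μ ^ 2 / 4)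
    (hb : (b - μ) ^ 2 ≤ μ ^ 2 / 4) : relDistSq a b ≤ 2 / μ ^ 2 * (a - b) ^ 2 := by
  have h_large {q : ℝ} (hq : (q - μ) ^ 2 ≤ μ ^ 2 / 4) : μ ^ 2 / 4 ≤ q ^ 2 := by
    nlinarith [sq_nonneg (2 * (q - μ) + μ)]
  have h_a := h_large ha
  have h_b := h_large hb
  have hμ_sq : 0 < μ ^ 2 := by positivity
  rw [relDistSq_eq_div, div_mul_eq_mul_div, div_le_div_iff₀ (by linarith) hμ_sq]
  nlinarith [sq_nonneg (a - b)]

lemma sum_relDistSq_le_of_ne_zero {N : ℕ} (hN : 0 < N) {q : ℕ → ℝ} {A μ : ℝ} (hμ : μ ≠ 0)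
    (hq : ∑ k ∈ range N, relDistSq (q k) (q (k + 1)) ≤ A) :
    ∑ k ∈ range N, relDistSq (q k) (q (k + 1)) ≤ (4 * A + 1) / μ ^ 2 *
      (2 / N * ∑ j ∈ range N, (q j - μ) ^ 2 + 2 * N * ∑ l ∈ range N, (q l - q (l + 1)) ^ 2) := by
  have hN_one : (1 : ℝ) ≤ N := by exact_mod_cast hN
  have hA : 0 ≤ A := (sum_nonneg fun k _ => relDistSq_nonneg _ _).trans hq
  have h_pointwise (k : ℕ) (hk : k ≤ N) := sq_le_average_add_sum_sq_sub hN (fun k => q k - μ) hk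
  simp only [sub_sub_sub_cancel_right] at h_pointwise
  set D := ∑ l ∈ range N, (q l - q (l + 1)) ^ 2
  have hD : 0 ≤ D := sum_nonneg fun _ _ => sq_nonneg _
  have h_average : 0 ≤ 2 / (N : ℝ) * ∑ j ∈ range N, (q j - μ) ^ 2 := by positivity
  set G := 2 / N * ∑ j ∈ range N, (q j - μ) ^ 2 + 2 * N * D
  have hμ_sq : 0 < μ ^ 2 := by positivity
  have hDG : 2 * D ≤ G := by nlinarith
  rcases lt_or_ge G (μ ^ 2 / 4) with hG | hG
  · have h_close (k : ℕ) (hk : k ≤ N) : (q k - μ) ^ 2 ≤ μ ^ 2 / 4 := (h_pointwise k hk).trans hG.le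
    calc ∑ k ∈ range N, relDistSq (q k) (q (k + 1))
        ≤ ∑ k ∈ range N, 2 / μ ^ 2 * (q k - q (k + 1)) ^ 2 := sum_le_sum fun k hk =>
          relDistSq_le_of_sq_sub_le hμ (h_close k (by grind)) (h_close (k + 1) (by grind))
      _ = 2 * D / μ ^ 2 := by rw [← mul_sum, div_mul_eq_mul_div]
      _ ≤ (4 * A + 1) * G / μ ^ 2 := div_le_div_of_nonneg_right (by nlinarith) hμ_sq.le
      _ = (4 * A + 1) / μ ^ 2 * G := (div_mul_eq_mul_div _ _ _).symm
  · refine hq.trans ?_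
    rw [div_mul_eq_mul_div, le_div_iff₀ hμ_sq]
    nlinarith

end PathEnergy

section NoiseRate

/-- The noise rate for which a bit and its noisy copy have the correlation `cos (2π/N)` of two
neighbouring points on the grid of `N` angles. -/
noncomputable def noiseRate (N : ℕ) : ℝ := 1 - Real.cos (2 * Real.pi / N)

lemma noiseRate_eq (N : ℕ) : noiseRate N = 2 * Real.sin (Real.pi / N) ^ 2 := by
  rw [noiseRate, mul_div_assoc, Real.cos_two_mul]
  linear_combination -2 * Real.sin_sq_add_cos_sq (Real.pi / N)

lemma noiseRate_nonneg (N : ℕ) : 0 ≤ noiseRate N := by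
  rw [noiseRate_eq]
  positivity

lemma eight_le_sq_mul_noiseRate {N : ℕ} (hN : 2 ≤ N) : 8 ≤ N ^ 2 * noiseRate N := by
  have h_sin := two_mul_min_le_mul_sin (t := 1) (N := N) (by omega)
  rw [min_eq_left (by omega), Nat.cast_one, mul_one, mul_one] at h_sin
  rw [noiseRate_eq]
  nlinarith

lemma sq_mul_noiseRate_le (N : ℕ) : N ^ 2 * noiseRate N ≤ 20 := by
  rcases N.eq_zero_or_pos with rfl | hN
  · simp
  have hN_pos : (0 : ℝ) < N := by exact_mod_cast hN
  have h_sin : N * |Real.sin (Real.pi / N)| ≤ Real.pi := by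
    calc N * |Real.sin (Real.pi / N)| ≤ N * |Real.pi / N| :=
          mul_le_mul_of_nonneg_left Real.abs_sin_le_abs hN_pos.le
      _ = Real.pi := by rw [abs_of_nonneg (by positivity)]; field_simp
  have h_sq := pow_le_pow_left₀ (by positivity) h_sin 2
  rw [mul_pow, sq_abs] at h_sq
  rw [noiseRate_eq]
  nlinarith [Real.pi_lt_d2, Real.pi_pos]

lemma noiseRate_le_one {N : ℕ} (hN : 4 ≤ N) : noiseRate N ≤ 1 := by
  have hN_four : (4 : ℝ) ≤ N := by exact_mod_cast hN
  rw [noiseRate, sub_le_self_iff]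
  refine Real.cos_nonneg_of_neg_pi_div_two_le_of_le
    (by linarith [Real.pi_pos, show 0 ≤ 2 * Real.pi / N by positivity]) ?_
  rw [div_le_iff₀ (by linarith)]
  nlinarith [Real.pi_pos]

lemma gridAngle_succ_sub (N k : ℕ) : gridAngle N (k + 1) - gridAngle N k = 2 * Real.pi / N := by
  rw [gridAngle, gridAngle]
  push_cast
  ring

end NoiseRate

section CircleAverage

variable {ι Ω : Type*} [Fintype ι] [DecidableEq ι] [Fintype Ω] {w : Ω → ℝ} {c : CubePoly ι} {d : ℕ}

lemma CubePoly.DegreeLE.iidExpect_sub_sq_eval_le (hc : c.DegreeLE d) (hw : w ∈ stdSimplex ℝ Ω)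
    {U V : ι → Ω → ℝ} {ρ : ℝ} (hU : ∀ i, IsSignLike w (U i)) (hV : ∀ i, IsSignLike w (V i))
    (hUV : ∀ i, ∑ t, w t * (U i t * V i t) = ρ) (hρ : -1 ≤ ρ) (hρ_le : ρ ≤ 1) :
    iidExpect w (fun ω => (c.eval (fun i => U i (ω i)) - c.eval fun i => V i (ω i)) ^ 2)
      ≤ 2 * (d * (1 - ρ) * c.variance) := by
  have h_coeff (S : Finset ι) : c S ^ 2 - c S * c S * ρ ^ #S ≤ d * (1 - ρ) * c S ^ 2 := by
    rcases lt_or_ge d #S with hS | hS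
    · simp [hc S hS]
    · have h_bernoulli := one_add_mul_le_pow (a := ρ - 1) (by linarith) #S
      rw [add_sub_cancel] at h_bernoulli
      have hS_real : (#S : ℝ) ≤ d := by exact_mod_cast hS
      have : 1 - ρ ^ #S ≤ d * (1 - ρ) := by nlinarith
      nlinarith [sq_nonneg (c S)]
  have h_expand (x y : ℝ) : (x - y) ^ 2 = x ^ 2 + y ^ 2 - 2 * (x * y) := by ring
  simp only [h_expand]
  rw [iidExpect_sub, iidExpect_add, iidExpect_const_mul, iidExpect_eval_sq hw hU,
    iidExpect_eval_sq hw hV,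
    iidExpect_eval_mul_eval hw (fun i => (hU i).mean) (fun i => (hV i).mean) hUV]
  have h_sum : c.normSq - ∑ S, c S * c S * ρ ^ #S ≤ d * (1 - ρ) * c.variance := by
    rw [normSq, variance, ← sum_sub_distrib, mul_sum,
      ← sum_erase univ (a := ∅) (by simp [sq])]
    exact sum_le_sum fun S _ => h_coeff S
  linarith

/-- The constant in the comparison of the average relative energy along a random circle with the
relative variance. -/
noncomputable def circleConst (d : ℕ) : ℝ :=
  rotationConst d + (4 * rotationConst d + 1) * (2 + 80 * d)

lemma circleConst_nonneg (d : ℕ) : 0 ≤ circleConst d := by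
  have := rotationConst_nonneg d
  unfold circleConst
  positivity

variable {a b : Ω → Bool}

lemma iidExpect_sub_sq_rotatedBit_le (hw : w ∈ stdSimplex ℝ Ω) (ha : IsUnbiased w a)
    (hb : IsUnbiased w b) (hab : bitCorrelation w a b = 0) (hc : c.DegreeLE d)
    (N k : ℕ) :
    iidExpect w (fun ω => (c.eval (fun i => rotatedBit a b (gridAngle N k) (ω i))
      - c.eval fun i => rotatedBit a b (gridAngle N (k + 1)) (ω i)) ^ 2)
      ≤ 2 * (d * noiseRate N * c.variance) :=
  hc.iidExpect_sub_sq_eval_le hw (U := fun _ => _) (V := fun _ => _)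
    (fun _ => isSignLike_rotatedBit hw ha hb hab _) (fun _ => isSignLike_rotatedBit hw ha hb hab _)
    (fun _ => by rw [sum_rotatedBit_mul_rotatedBit hw hab, gridAngle_succ_sub])
    (Real.neg_one_le_cos _) (Real.cos_le_one _)

lemma iidExpect_path_energy_le (hw : w ∈ stdSimplex ℝ Ω) (ha : IsUnbiased w a)
    (hb : IsUnbiased w b) (hab : bitCorrelation w a b = 0) (hc : c.DegreeLE d)
    (h_variance : c.variance = 1) {N : ℕ} (hN : 0 < N) :
    iidExpect w (fun ω =>
      2 / N * ∑ k ∈ range N, (c.eval (fun i => rotatedBit a b (gridAngle N k) (ω i)) - c ∅) ^ 2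
        + 2 * N * ∑ k ∈ range N, (c.eval (fun i => rotatedBit a b (gridAngle N k) (ω i))
          - c.eval fun i => rotatedBit a b (gridAngle N (k + 1)) (ω i)) ^ 2) ≤ 2 + 80 * d := by
  have hN_pos : (0 : ℝ) < N := by exact_mod_cast hN
  have h_deviation (k : ℕ) : iidExpect w (fun ω =>
      (c.eval (fun i => rotatedBit a b (gridAngle N k) (ω i)) - c ∅) ^ 2) = 1 := by
    simpa only [CubePoly.eval_centered, CubePoly.normSq_centered, h_variance] using
      CubePoly.iidExpect_eval_sq hw (U := fun _ => _)
        (fun _ => isSignLike_rotatedBit hw ha hb hab (gridAngle N k)) c.centered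
  have h_increments := sum_le_sum fun k (_ : k ∈ range N) =>
    iidExpect_sub_sq_rotatedBit_le hw ha hb hab hc N k
  rw [sum_const, card_range, nsmul_eq_mul, h_variance, mul_one] at h_increments
  rw [iidExpect_add, iidExpect_const_mul, iidExpect_const_mul, iidExpect_sum, iidExpect_sum]
  simp only [h_deviation, sum_const, card_range, nsmul_eq_mul, mul_one]
  rw [div_mul_cancel₀ _ hN_pos.ne']
  have h_rate := mul_le_mul_of_nonneg_left (sq_mul_noiseRate_le N) d.cast_nonneg (α := ℝ)
  have h_scaled := mul_le_mul_of_nonneg_left h_increments (by positivity : 0 ≤ 2 * (N : ℝ))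
  linarith

lemma iidExpect_sum_relDistSq_rotatedBit_le (hw : w ∈ stdSimplex ℝ Ω) (ha : IsUnbiased w a)
    (hb : IsUnbiased w b) (hab : bitCorrelation w a b = 0) (hc : c.DegreeLE d)
    (h_variance : c.variance = 1) {N : ℕ} (hN : 0 < N) :
    iidExpect w (fun ω => ∑ k ∈ range N,
      relDistSq (c.eval fun i => rotatedBit a b (gridAngle N k) (ω i))
        (c.eval fun i => rotatedBit a b (gridAngle N (k + 1)) (ω i)))
      ≤ circleConst d * c.relVariance := by
  have hA := rotationConst_nonneg d
  have h_circle (ω : ι → Ω) := hc.sum_relDistSq_rotate_le N (fun i => chi (a (ω i)))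
    fun i => chi (b (ω i))
  unfold rotate at h_circle
  set E := iidExpect w fun ω => ∑ k ∈ range N,
    relDistSq (c.eval fun i => rotatedBit a b (gridAngle N k) (ω i))
      (c.eval fun i => rotatedBit a b (gridAngle N (k + 1)) (ω i))
  have h_const : E ≤ rotationConst d :=
    (iidExpect_mono hw h_circle).trans_eq (iidExpect_const hw _)
  have h_mean : E * c ∅ ^ 2 ≤ (4 * rotationConst d + 1) * (2 + 80 * d) := by
    rcases eq_or_ne (c ∅) 0 with h_zero | h_ne
    · rw [h_zero]
      simp only [ne_eq, OfNat.ofNat_ne_zero, not_false_eq_true, zero_pow, mul_zero]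
      positivity
    have h_energy : E ≤ (4 * rotationConst d + 1) / c ∅ ^ 2 * (2 + 80 * d) := by
      refine (iidExpect_mono hw fun ω =>
        sum_relDistSq_le_of_ne_zero hN h_ne (h_circle ω)).trans ?_
      rw [iidExpect_const_mul]
      exact mul_le_mul_of_nonneg_left (iidExpect_path_energy_le hw ha hb hab hc h_variance hN)
        (by positivity)
    rwa [div_mul_eq_mul_div, le_div_iff₀ (by positivity)] at h_energy
  rw [CubePoly.relVariance, CubePoly.normSq_eq_variance_add, h_variance, mul_one_div,
    le_div_iff₀ (by positivity), circleConst]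
  linarith

end CircleAverage
section NoisyPair

/-- The weights of the indicator of an event of probability `ε`. -/
noncomputable def noiseBit (ε : ℝ) : Bool → ℝ := fun r => if r then ε else 1 - ε

lemma noiseBit_mem_stdSimplex {ε : ℝ} (hε : 0 ≤ ε) (hε_le : ε ≤ 1) :
    noiseBit ε ∈ stdSimplex ℝ Bool :=
  ⟨fun r => by cases r <;> simp [noiseBit, hε, hε_le], by simp [noiseBit]⟩

/-- The weights of a noise indicator, a uniform bit and two uniform candidates for replacing it if
the noise indicator is set. -/
noncomputable def noiseWeight (ε : ℝ) : Bool × Bool × Bool × Bool → ℝ :=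
  prodWeight (noiseBit ε) (prodWeight uniformBit (prodWeight uniformBit uniformBit))

lemma noiseWeight_mem_stdSimplex {ε : ℝ} (hε : 0 ≤ ε) (hε_le : ε ≤ 1) :
    noiseWeight ε ∈ stdSimplex ℝ (Bool × Bool × Bool × Bool) :=
  prodWeight_mem_stdSimplex (noiseBit_mem_stdSimplex hε hε_le) <|
    prodWeight_mem_stdSimplex uniformBit_mem_stdSimplex <|
      prodWeight_mem_stdSimplex uniformBit_mem_stdSimplex uniformBit_mem_stdSimplex

/-- The first noisy copy: the bit, or its first candidate replacement. -/
def noisyFst (u : Bool × Bool × Bool × Bool) : Bool := if u.1 then u.2.2.1 else u.2.1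

/-- The second noisy copy: the bit, or its second candidate replacement. -/
def noisySnd (u : Bool × Bool × Bool × Bool) : Bool := if u.1 then u.2.2.2 else u.2.1

lemma sum_noiseWeight_mul (ε : ℝ) (f : Bool × Bool × Bool × Bool → ℝ) :
    ∑ u, noiseWeight ε u * f u
      = 1 / 8 * (ε * ∑ v, f (true, v) + (1 - ε) * ∑ v, f (false, v)) := by
  rw [Fintype.sum_prod_type]
  simp only [noiseWeight, prodWeight, uniformBit, noiseBit, Fintype.sum_bool, mul_sum,
    ← sum_add_distrib]
  exact sum_congr rfl fun v _ => by norm_num; ring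

lemma isUnbiased_noisyFst (ε : ℝ) : IsUnbiased (noiseWeight ε) noisyFst := by
  rw [IsUnbiased, sum_noiseWeight_mul]
  norm_num [Fintype.sum_prod_type, chi, noisyFst]

lemma isUnbiased_noisySnd (ε : ℝ) : IsUnbiased (noiseWeight ε) noisySnd := by
  rw [IsUnbiased, sum_noiseWeight_mul]
  norm_num [Fintype.sum_prod_type, chi, noisySnd]

lemma bitCorrelation_noisyFst_noisySnd (ε : ℝ) :
    bitCorrelation (noiseWeight ε) noisyFst noisySnd = 1 - ε := by
  rw [bitCorrelation, sum_noiseWeight_mul]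
  simp [Fintype.sum_prod_type, chi, noisyFst, noisySnd]
  ring

lemma isUnbiased_bit (ε : ℝ) : IsUnbiased (noiseWeight ε) fun u => u.2.1 := by
  rw [IsUnbiased, sum_noiseWeight_mul]
  norm_num [Fintype.sum_prod_type, chi]

lemma isUnbiased_replacement (ε : ℝ) : IsUnbiased (noiseWeight ε) fun u => u.2.2.1 := by
  rw [IsUnbiased, sum_noiseWeight_mul]
  norm_num [Fintype.sum_prod_type, chi]

lemma bitCorrelation_bit_replacement (ε : ℝ) :
    bitCorrelation (noiseWeight ε) (fun u => u.2.1) (fun u => u.2.2.1) = 0 := by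
  rw [bitCorrelation, sum_noiseWeight_mul]
  simp [Fintype.sum_prod_type, chi]

/-- The expected relative squared distance of the values of `c` at two random points of the cube
which agree outside a random set, containing each coordinate with probability `ε`, and are
independent on that set. -/
noncomputable def CubePoly.noiseEnergy {ι : Type*} [Fintype ι] [DecidableEq ι] (c : CubePoly ι)
    (ε : ℝ) : ℝ :=
  iidExpect (noiseWeight ε) fun ω =>
    relDistSq (c.evalCube fun i => noisyFst (ω i)) (c.evalCube fun i => noisySnd (ω i))

end NoisyPair

section RegularCase

lemma secondOrderTaylor_sq_sub_div {η : ℝ} (hη : 0 < η) :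
    SecondOrderTaylor (704 * (1 / η) ^ 3) fun a b => (a - b) ^ 2 / (a ^ 2 + b ^ 2 + η ^ 2) := by
  have h_abs : |1 / η| ≤ 1 / η := (abs_of_pos (by positivity)).le
  have h_scaled := ((secondOrderTaylor_quadratic_div (α := 0) (β := 1 / 4) (γ := -(1 / 2))
    (δ := 1 / 4) (by norm_num [abs_of_pos])).comp_mul (by norm_num) h_abs h_abs).const_mul 4
  rw [abs_of_pos zero_lt_four, ← mul_assoc] at h_scaled
  norm_num only at h_scaled
  convert h_scaled using 3 with a b
  field_simp
  ring

lemma relDistSq_le_sq_sub_div_add (a b : ℝ) {η : ℝ} (hη : 0 < η) :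
    relDistSq a b ≤ (a - b) ^ 2 / (a ^ 2 + b ^ 2 + η ^ 2) + 2 * η ^ 2 / (a ^ 2 + η ^ 2) := by
  rw [relDistSq_eq_div]
  rcases eq_or_ne (a ^ 2 + b ^ 2) 0 with h | h
  · rw [h, div_zero]
    positivity
  have h_pos : 0 < a ^ 2 + b ^ 2 := lt_of_le_of_ne (by positivity) h.symm
  calc (a - b) ^ 2 / (a ^ 2 + b ^ 2)
      ≤ ((a - b) ^ 2 + 2 * η ^ 2) / (a ^ 2 + b ^ 2 + η ^ 2) := by
        rw [div_le_div_iff₀ h_pos (by positivity)]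
        nlinarith [sq_nonneg η, mul_nonneg (sq_nonneg η) (sq_nonneg (a + b))]
    _ = (a - b) ^ 2 / (a ^ 2 + b ^ 2 + η ^ 2) + 2 * η ^ 2 / (a ^ 2 + b ^ 2 + η ^ 2) := add_div _ _ _
    _ ≤ _ := by
        gcongr
        linarith [sq_nonneg b]

lemma two_mul_sq_div_le_indicator_add (a : ℝ) {η ε : ℝ} (hη : 0 < η) (hε : 0 < ε) :
    2 * η ^ 2 / (a ^ 2 + η ^ 2) ≤ 2 * (if |a| ≤ ε then (1 : ℝ) else 0) + 2 * η ^ 2 / ε ^ 2 := by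
  split_ifs with ha
  · have : 2 * η ^ 2 / (a ^ 2 + η ^ 2) ≤ 2 := by
      rw [div_le_iff₀ (by positivity)]
      nlinarith [sq_nonneg a]
    linarith [show 0 ≤ 2 * η ^ 2 / ε ^ 2 by positivity]
  · have h_large : ε ^ 2 ≤ a ^ 2 := sq_le_sq.mpr (by rw [abs_of_pos hε]; exact (not_le.mp ha).le)
    rw [mul_zero, zero_add]
    gcongr
    linarith [sq_nonneg η]

lemma sq_sub_div_le_relDistSq (a b η : ℝ) :
    (a - b) ^ 2 / (a ^ 2 + b ^ 2 + η ^ 2) ≤ relDistSq a b := by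
  have h_mul := relDistSq_mul_add_sq a b
  simp only [Real.norm_eq_abs, sq_abs] at h_mul
  refine div_le_of_le_mul₀ (by positivity) (relDistSq_nonneg a b) ?_
  rw [mul_add, h_mul]
  exact le_add_of_nonneg_right (mul_nonneg (relDistSq_nonneg a b) (sq_nonneg η))

variable {ι : Type*} [Fintype ι] [DecidableEq ι] {c : CubePoly ι} {d N : ℕ}

namespace CubePoly

lemma DegreeLE.iidExpect_regularized_le_rotated (hc : c.DegreeLE d) (hN : 4 ≤ N)
    (h_variance : c.variance = 1) {s : ℝ} (hs : 0 < s) (h_influence : ∀ i, c.influence i ≤ s ^ 2)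
    {η : ℝ} (hη : 0 < η) (k : ℕ) :
    iidExpect (noiseWeight (noiseRate N)) (fun ω =>
      (c.evalCube (fun i => noisyFst (ω i)) - c.evalCube fun i => noisySnd (ω i)) ^ 2 /
        (c.evalCube (fun i => noisyFst (ω i)) ^ 2 + c.evalCube (fun i => noisySnd (ω i)) ^ 2
          + η ^ 2))
      ≤ iidExpect (noiseWeight (noiseRate N)) (fun ω => relDistSq
          (c.eval fun i => rotatedBit (fun u => u.2.1) (fun u => u.2.2.1) (gridAngle N k) (ω i))
          (c.eval fun i => rotatedBit (fun u => u.2.1) (fun u => u.2.2.1) (gridAngle N (k + 1))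
            (ω i))) + 12 * 9 ^ d * (704 * (1 / η) ^ 3) * s * d := by
  have hw := noiseWeight_mem_stdSimplex (noiseRate_nonneg N) (noiseRate_le_one hN)
  have ha := isUnbiased_bit (noiseRate N)
  have hb := isUnbiased_replacement (noiseRate N)
  have hab := bitCorrelation_bit_replacement (noiseRate N)
  have h_replace := hc.abs_iidExpect_sub_le hw hs h_influence (by positivity)
    (secondOrderTaylor_sq_sub_div hη)
    (fun _ => (isUnbiased_noisyFst _).isSignLike hw)
    (fun _ => (isUnbiased_noisySnd _).isSignLike hw)
    (fun _ => isSignLike_rotatedBit hw ha hb hab (gridAngle N k))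
    (fun _ => isSignLike_rotatedBit hw ha hb hab (gridAngle N (k + 1)))
    (fun _ => by
      rw [sum_rotatedBit_mul_rotatedBit hw hab, gridAngle_succ_sub]
      exact (bitCorrelation_noisyFst_noisySnd _).trans (by rw [noiseRate, sub_sub_cancel]))
  rw [h_variance, mul_one] at h_replace
  exact (sub_le_iff_le_add'.mp (abs_le.mp h_replace).2).trans <| add_le_add_left
    (iidExpect_mono hw fun ω => sq_sub_div_le_relDistSq _ _ η) _

lemma DegreeLE.iidExpect_regularized_le (hc : c.DegreeLE d) (hN : 4 ≤ N)
    (h_variance : c.variance = 1) {s : ℝ} (hs : 0 < s) (h_influence : ∀ i, c.influence i ≤ s ^ 2)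
    {η : ℝ} (hη : 0 < η) :
    iidExpect (noiseWeight (noiseRate N)) (fun ω =>
      (c.evalCube (fun i => noisyFst (ω i)) - c.evalCube fun i => noisySnd (ω i)) ^ 2 /
        (c.evalCube (fun i => noisyFst (ω i)) ^ 2 + c.evalCube (fun i => noisySnd (ω i)) ^ 2
          + η ^ 2))
      ≤ circleConst d * c.relVariance / N + 12 * 9 ^ d * (704 * (1 / η) ^ 3) * s * d := by
  have hw := noiseWeight_mem_stdSimplex (noiseRate_nonneg N) (noiseRate_le_one hN)
  have hN_pos : (0 : ℝ) < N := by exact_mod_cast (by omega : 0 < N)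
  have h_sum := sum_le_sum fun k (_ : k ∈ range N) =>
    hc.iidExpect_regularized_le_rotated hN h_variance hs h_influence hη k
  rw [sum_const, card_range, nsmul_eq_mul, sum_add_distrib, sum_const, card_range, nsmul_eq_mul,
    ← iidExpect_sum] at h_sum
  have h_circle := iidExpect_sum_relDistSq_rotatedBit_le hw (isUnbiased_bit (noiseRate N))
    (isUnbiased_replacement (noiseRate N)) (bitCorrelation_bit_replacement (noiseRate N)) hc
    h_variance (by omega : 0 < N)
  refine le_of_mul_le_mul_left ((h_sum.trans (add_le_add_left h_circle _)).trans_eq ?_) hN_pos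
  field_simp

lemma DegreeLE.noiseEnergy_le_of_influence_le_sq (hc : c.DegreeLE d) (hN : 4 ≤ N)
    (h_variance : c.variance = 1) {s : ℝ} (hs : 0 < s) (h_influence : ∀ i, c.influence i ≤ s ^ 2)
    {η ε : ℝ} (hη : 0 < η) (hε : 0 < ε) :
    c.noiseEnergy (noiseRate N)
      ≤ circleConst d * c.relVariance / N + 12 * 9 ^ d * (704 * (1 / η) ^ 3) * s * d
        + (2 * iidExpect uniformBit (fun x => if |c.evalCube x| ≤ ε then (1 : ℝ) else 0)
          + 2 * η ^ 2 / ε ^ 2) := by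
  have hw := noiseWeight_mem_stdSimplex (noiseRate_nonneg N) (noiseRate_le_one hN)
  refine (iidExpect_mono hw fun ω => relDistSq_le_sq_sub_div_add _ _ hη).trans ?_
  rw [iidExpect_add]
  refine add_le_add (hc.iidExpect_regularized_le hN h_variance hs h_influence hη) ?_
  rw [(isUnbiased_noisyFst _).iidExpect_comp hw fun x => 2 * η ^ 2 / (c.evalCube x ^ 2 + η ^ 2)]
  refine (iidExpect_mono uniformBit_mem_stdSimplex fun x =>
    two_mul_sq_div_le_indicator_add _ hη hε).trans_eq ?_
  rw [iidExpect_add, iidExpect_const_mul, iidExpect_const uniformBit_mem_stdSimplex]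

end CubePoly

lemma one_div_one_div_pow_cube_mul {x : ℝ} (hx : x ≠ 0) (m k : ℕ) :
    (1 / (1 / x ^ m)) ^ 3 * (1 / x ^ (3 * m + k)) = 1 / x ^ k := by
  rw [one_div_one_div, ← pow_mul, mul_comm m 3, pow_add]
  field_simp

/-- The constant in the anti-concentration bound for polynomials with small influences. -/
noncomputable def smallBallConst (d : ℕ) : ℝ :=
  (1 + 9 ^ d) * (48 * d + 1 + 12 * 9 ^ d * 176 * d)

lemma smallBallConst_nonneg (d : ℕ) : 0 ≤ smallBallConst d := by
  unfold smallBallConst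
  positivity

namespace CubePoly

lemma DegreeLE.iidExpect_abs_le_one_div_pow_le (hc : c.DegreeLE d) (hN : 4 ≤ N)
    (h_variance : c.variance = 1)
    (h_influence : ∀ i, c.influence i ≤ (1 / (N : ℝ) ^ (48 * d + 18)) ^ 2) :
    iidExpect uniformBit
        (fun x => if |c.evalCube x| ≤ 1 / (N : ℝ) ^ (16 * d + 3) then (1 : ℝ) else 0)
      ≤ smallBallConst d / N ^ 3 := by
  have hN_four : (4 : ℝ) ≤ N := by exact_mod_cast hN
  have h_le_half : 1 / (N : ℝ) ^ (16 * d + 3) ≤ 1 / 2 := by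
    refine one_div_le_one_div_of_le two_pos ?_
    linarith [le_self_pow₀ (by linarith : 1 ≤ (N : ℝ)) (by omega : 16 * d + 3 ≠ 0)]
  have h_ball := hc.iidExpect_abs_le_le h_variance (by positivity) h_influence (by positivity)
    h_le_half (N := N ^ 3) (by positivity)
  have h_far : 1 / (N : ℝ) ^ (16 * d + 3) * ((4 * (N ^ 3 : ℕ)) ^ (2 * d)) ^ 2
      ≤ 1 / (N : ℝ) ^ 3 := by
    have h_base : 4 * ((N ^ 3 : ℕ) : ℝ) ≤ (N : ℝ) ^ 4 := by
      push_cast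
      rw [pow_succ' _ 3]
      gcongr
    calc 1 / (N : ℝ) ^ (16 * d + 3) * ((4 * (N ^ 3 : ℕ)) ^ (2 * d)) ^ 2
        ≤ 1 / (N : ℝ) ^ (16 * d + 3) * (((N : ℝ) ^ 4) ^ (2 * d)) ^ 2 := by gcongr
      _ = 1 / (N : ℝ) ^ 3 := by
        rw [pow_add, ← pow_mul, ← pow_mul, show 4 * (2 * d * 2) = 16 * d by ring]
        field_simp
  have h_replace : 12 * 9 ^ d * (176 * (1 / (1 / (N : ℝ) ^ (16 * d + 3))) ^ 3)
      * (1 / N ^ (48 * d + 18)) * d ≤ 12 * 9 ^ d * 176 * d * (1 / N ^ 3) := by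
    have h_scale := one_div_one_div_pow_cube_mul (by linarith : (N : ℝ) ≠ 0) (16 * d + 3) 9
    rw [show 3 * (16 * d + 3) + 9 = 48 * d + 18 by ring] at h_scale
    calc _ = 12 * 9 ^ d * 176 * d * (1 / (N : ℝ) ^ 9) := by rw [← h_scale]; ring
      _ ≤ _ := by gcongr <;> linarith
  calc _ ≤ _ := h_ball
    _ ≤ (1 + 9 ^ d) * (48 * d / (N ^ 3 : ℕ) + 1 / N ^ 3 + 12 * 9 ^ d * 176 * d * (1 / N ^ 3)) := by
        gcongr
    _ = smallBallConst d / N ^ 3 := by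
        rw [smallBallConst]
        push_cast
        ring

end CubePoly

/-- The constant in the error term of the bound on the noise energy in the regular case. -/
noncomputable def regularErrorConst (d : ℕ) : ℝ := 12 * 9 ^ d * 704 * d + 2 * smallBallConst d + 2

lemma regularErrorConst_nonneg (d : ℕ) : 0 ≤ regularErrorConst d := by
  have := smallBallConst_nonneg d
  unfold regularErrorConst
  positivity

namespace CubePoly

lemma DegreeLE.noiseEnergy_le_of_variance_eq_one (hc : c.DegreeLE d) (hN : 4 ≤ N)
    (h_variance : c.variance = 1)
    (h_influence : ∀ i, c.influence i ≤ (1 / (N : ℝ) ^ (48 * d + 18)) ^ 2) :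
    c.noiseEnergy (noiseRate N)
      ≤ circleConst d * c.relVariance / N + regularErrorConst d / N ^ 3 := by
  have hN_four : (4 : ℝ) ≤ N := by exact_mod_cast hN
  have hN_ne : (N : ℝ) ≠ 0 := by linarith
  have h_energy := hc.noiseEnergy_le_of_influence_le_sq hN h_variance
    (s := 1 / (N : ℝ) ^ (48 * d + 18)) (by positivity) h_influence
    (η := 1 / (N : ℝ) ^ (16 * d + 5)) (ε := 1 / (N : ℝ) ^ (16 * d + 3)) (by positivity)
    (by positivity)
  have h_ball := hc.iidExpect_abs_le_one_div_pow_le hN h_variance h_influence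
  have h_scale := one_div_one_div_pow_cube_mul hN_ne (16 * d + 5) 3
  rw [show 3 * (16 * d + 5) + 3 = 48 * d + 18 by ring] at h_scale
  have h_replace : 12 * 9 ^ d * (704 * (1 / (1 / (N : ℝ) ^ (16 * d + 5))) ^ 3)
      * (1 / N ^ (48 * d + 18)) * d = 12 * 9 ^ d * 704 * d / N ^ 3 := by
    rw [div_eq_mul_one_div _ ((N : ℝ) ^ 3), ← h_scale]
    ring
  have h_regularize :
      2 * (1 / (N : ℝ) ^ (16 * d + 5)) ^ 2 / (1 / (N : ℝ) ^ (16 * d + 3)) ^ 2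
        ≤ 2 / (N : ℝ) ^ 3 := by
    calc 2 * (1 / (N : ℝ) ^ (16 * d + 5)) ^ 2 / (1 / (N : ℝ) ^ (16 * d + 3)) ^ 2
        = 2 / (N : ℝ) ^ 4 := by
          field_simp
          ring
      _ ≤ 2 / (N : ℝ) ^ 3 := by gcongr <;> linarith
  have h_total : regularErrorConst d / N ^ 3 = 12 * 9 ^ d * 704 * d / (N : ℝ) ^ 3
      + (2 * (smallBallConst d / N ^ 3) + 2 / N ^ 3) := by
    rw [regularErrorConst]
    ring
  rw [h_replace] at h_energy
  linarith

end CubePoly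

/-- The constant in the bound on the noise energy in the regular case. -/
noncomputable def regularConst (d : ℕ) : ℝ := circleConst d + 2 * regularErrorConst d

lemma regularConst_nonneg (d : ℕ) : 0 ≤ regularConst d := by
  have := circleConst_nonneg d
  have := regularErrorConst_nonneg d
  unfold regularConst
  positivity

namespace CubePoly

lemma relVariance_smul {t : ℝ} (ht : t ≠ 0) (c : CubePoly ι) :
    (t • c).relVariance = c.relVariance := by
  rw [relVariance, variance_smul, normSq_smul, mul_div_mul_left _ _ (pow_ne_zero 2 ht), relVariance]

lemma noiseEnergy_smul {t : ℝ} (ht : t ≠ 0) (c : CubePoly ι) (ε : ℝ) :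
    (t • c).noiseEnergy ε = c.noiseEnergy ε := by
  simp only [noiseEnergy, evalCube, eval_smul, relDistSq_mul_left ht]

lemma DegreeLE.noiseEnergy_le (hc : c.DegreeLE d) (hN : 4 ≤ N) (h_variance : 0 < c.variance)
    (h_mean : c ∅ ^ 2 ≤ N ^ 2 * c.variance)
    (h_influence : ∀ i, c.influence i ≤ (1 / (N : ℝ) ^ (48 * d + 18)) ^ 2 * c.variance) :
    c.noiseEnergy (noiseRate N) ≤ regularConst d / N * c.relVariance := by
  have hN_four : (4 : ℝ) ≤ N := by exact_mod_cast hN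
  set t : ℝ := 1 / √c.variance
  have ht : t ≠ 0 := one_div_ne_zero (Real.sqrt_pos.mpr h_variance).ne'
  have ht_sq : t ^ 2 * c.variance = 1 := by
    rw [div_pow, Real.sq_sqrt h_variance.le, one_pow, one_div_mul_cancel h_variance.ne']
  have h_normalized := (hc.smul t).noiseEnergy_le_of_variance_eq_one hN
    (by rw [variance_smul, ht_sq]) fun i => by
      calc (t • c).influence i = t ^ 2 * c.influence i := influence_smul ..
        _ ≤ t ^ 2 * ((1 / (N : ℝ) ^ (48 * d + 18)) ^ 2 * c.variance) := by
          gcongr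
          exact h_influence i
        _ = (1 / (N : ℝ) ^ (48 * d + 18)) ^ 2 := by rw [mul_left_comm, ht_sq, mul_one]
  rw [noiseEnergy_smul ht, relVariance_smul ht] at h_normalized
  have h_relVariance : 1 ≤ 2 * N ^ 2 * c.relVariance := by
    rw [relVariance, mul_div_assoc', normSq_eq_variance_add, le_div_iff₀ (by positivity)]
    nlinarith
  have h_error : regularErrorConst d / N ^ 3 ≤ 2 * regularErrorConst d / N * c.relVariance := by
    calc regularErrorConst d / N ^ 3
        ≤ regularErrorConst d / N ^ 3 * (2 * N ^ 2 * c.relVariance) :=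
          le_mul_of_one_le_right (div_nonneg (regularErrorConst_nonneg d) (by positivity))
            h_relVariance
      _ = 2 * regularErrorConst d / N * c.relVariance := by field_simp
  calc c.noiseEnergy (noiseRate N)
      ≤ circleConst d * c.relVariance / N + regularErrorConst d / N ^ 3 := h_normalized
    _ ≤ circleConst d * c.relVariance / N + 2 * regularErrorConst d / N * c.relVariance := by gcongr
    _ = regularConst d / N * c.relVariance := by rw [regularConst]; ring

end CubePoly

end RegularCase
section RandomSubset

variable {ι : Type*} [Fintype ι] [DecidableEq ι] {ε : ℝ}

lemma iidExpect_noiseBit (hε : 0 ≤ ε) (hε_le : ε ≤ 1) (i : ι) :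
    iidExpect (noiseBit ε) (fun r => if r i then (1 : ℝ) else 0) = ε := by
  have hw := noiseBit_mem_stdSimplex hε hε_le
  have h_indep := iidExpect_mul_of_indep hw i (fun b => if b then (1 : ℝ) else 0) (fun _ => 1)
    fun _ _ => rfl
  simpa [iidExpect_const hw, noiseBit] using h_indep

lemma iidExpect_noiseBit_mul_noiseBit_le (hε : 0 ≤ ε) (hε_le : ε ≤ 1) (i j : ι) :
    iidExpect (noiseBit ε) (fun r => (if r i then (1 : ℝ) else 0) * if r j then 1 else 0)
      ≤ ε ^ 2 + if i = j then ε else 0 := by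
  split_ifs with hij
  · subst hij
    simp only [mul_ite, mul_one, mul_zero, ← ite_and, and_self]
    rw [iidExpect_noiseBit hε hε_le]
    exact le_add_of_nonneg_left (sq_nonneg ε)
  · rw [iidExpect_mul_of_indep (noiseBit_mem_stdSimplex hε hε_le) i
      (fun b => if b then (1 : ℝ) else 0) (fun r => if r j then 1 else 0)
      (fun ω u => by rw [Function.update_of_ne (Ne.symm hij)]), iidExpect_noiseBit hε hε_le]
    simp [noiseBit, sq]

lemma iidExpect_card_filter (hε : 0 ≤ ε) (hε_le : ε ≤ 1) (A : Finset ι) :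
    iidExpect (noiseBit ε) (fun r => (#{i ∈ A | r i} : ℝ)) = ε * #A := by
  simp only [← sum_boole]
  rw [iidExpect_sum, sum_congr rfl fun i _ => iidExpect_noiseBit hε hε_le i, sum_const,
    nsmul_eq_mul, mul_comm]

lemma iidExpect_sq_card_filter_le (hε : 0 ≤ ε) (hε_le : ε ≤ 1) (A : Finset ι) :
    iidExpect (noiseBit ε) (fun r => (#{i ∈ A | r i} : ℝ) ^ 2) ≤ (ε * #A) ^ 2 + ε * #A := by
  simp only [← sum_boole, sq (∑ _ ∈ A, _), sum_mul_sum, iidExpect_sum]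
  calc ∑ i ∈ A, ∑ j ∈ A, iidExpect (noiseBit ε)
        (fun r => (if r i then (1 : ℝ) else 0) * if r j then 1 else 0)
      ≤ ∑ i ∈ A, ∑ j ∈ A, (ε ^ 2 + if i = j then ε else 0) :=
        sum_le_sum fun i _ => sum_le_sum fun j _ =>
          iidExpect_noiseBit_mul_noiseBit_le hε hε_le i j
    _ = (ε * #A) ^ 2 + ε * #A := by
        simp only [sum_add_distrib, sum_const, nsmul_eq_mul, sum_ite_eq, sum_ite_mem, inter_self]
        ring

/-- The two sides touch at `v = a ^ 2`. -/
lemma le_sqrt_of_pos {a v : ℝ} (ha : 0 < a) (hv : 0 ≤ v) :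
    3 / (2 * a) * v - 1 / (2 * a ^ 3) * v ^ 2 ≤ √v := by
  obtain ⟨t, ht, rfl⟩ : ∃ t, 0 ≤ t ∧ t ^ 2 = v := ⟨√v, Real.sqrt_nonneg v, Real.sq_sqrt hv⟩
  have h_gap : t - (3 / (2 * a) * t ^ 2 - 1 / (2 * a ^ 3) * (t ^ 2) ^ 2)
      = t * (t - a) ^ 2 * (t + 2 * a) / (2 * a ^ 3) := by
    field_simp
    ring
  have h_gap_nonneg : 0 ≤ t * (t - a) ^ 2 * (t + 2 * a) / (2 * a ^ 3) := by positivity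
  rw [Real.sqrt_sq ht]
  linarith

lemma sqrt_le_two_mul_iidExpect_sqrt_card (hε : 0 ≤ ε) (hε_le : ε ≤ 1) {A : Finset ι}
    (hA : 1 ≤ ε * #A) :
    √(ε * #A) ≤ 2 * iidExpect (noiseBit ε) (fun r => √(#{i ∈ A | r i} : ℝ)) := by
  have hw := noiseBit_mem_stdSimplex hε hε_le
  set a := √(ε * #A)
  have ha_sq : a ^ 2 = ε * #A := Real.sq_sqrt (zero_le_one.trans hA)
  have ha_one : 1 ≤ a := Real.one_le_sqrt.mpr hA
  have ha : 0 < a := one_pos.trans_le ha_one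
  have h_tangent := iidExpect_mono (ι := ι) hw fun r =>
    le_sqrt_of_pos ha (Nat.cast_nonneg #{i ∈ A | r i})
  rw [iidExpect_sub, iidExpect_const_mul, iidExpect_const_mul, iidExpect_card_filter hε hε_le,
    ← ha_sq] at h_tangent
  have h_second : 1 / (2 * a ^ 3) * iidExpect (noiseBit ε) (fun r => (#{i ∈ A | r i} : ℝ) ^ 2)
      ≤ 1 / (2 * a ^ 3) * ((a ^ 2) ^ 2 + a ^ 2) := by
    rw [ha_sq]
    gcongr
    exact iidExpect_sq_card_filter_le hε hε_le A
  have h_value : 3 / (2 * a) * a ^ 2 - 1 / (2 * a ^ 3) * ((a ^ 2) ^ 2 + a ^ 2)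
      = a - 1 / (2 * a) := by
    field_simp
    ring
  have h_inv : 1 / (2 * a) ≤ a / 2 := by
    rw [div_le_div_iff₀ (by positivity) two_pos]
    nlinarith
  linarith

lemma sqrt_card_le_add_iidExpect_sqrt_card (hε : 0 < ε) (hε_le : ε ≤ 1) (A : Finset ι) :
    √(#A : ℝ)
      ≤ 1 / √ε + 2 / √ε * iidExpect (noiseBit ε) (fun r => √(#{i ∈ A | r i} : ℝ)) := by
  set E := iidExpect (noiseBit ε) fun r => √(#{i ∈ A | r i} : ℝ)
  have hE : 0 ≤ E :=
    iidExpect_nonneg (noiseBit_mem_stdSimplex hε.le hε_le) fun _ => Real.sqrt_nonneg _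
  have h_scale : √(#A : ℝ) = √(ε * #A) / √ε := by
    rw [Real.sqrt_mul hε.le, mul_div_cancel_left₀ _ (Real.sqrt_pos.mpr hε).ne']
  have h_max : √(ε * #A) ≤ 1 + 2 * E := by
    rcases lt_or_ge (ε * #A) 1 with h_small | h_large
    · linarith [Real.sqrt_le_one.mpr h_small.le]
    · linarith [sqrt_le_two_mul_iidExpect_sqrt_card hε.le hε_le h_large]
  calc √(#A : ℝ) = √(ε * #A) / √ε := h_scale
    _ ≤ (1 + 2 * E) / √ε := by gcongr
    _ = 1 / √ε + 2 / √ε * E := by ring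

lemma iidExpect_two_pow_card_filter (J : Finset ι) :
    iidExpect (noiseBit ε) (fun r => (2 : ℝ) ^ #{i ∈ J | r i}) = (1 + ε) ^ #J := by
  have h_prod (r : ι → Bool) :
      (2 : ℝ) ^ #{i ∈ J | r i} = ∏ i, if i ∈ J ∧ r i then (2 : ℝ) else 1 := by
    rw [← prod_filter, prod_const, ← filter_filter, filter_mem_eq_inter, univ_inter]
  have h_factor (i : ι) : (∑ u, noiseBit ε u * if i ∈ J ∧ u then (2 : ℝ) else 1)
      = if i ∈ J then 1 + ε else 1 := by
    by_cases hi : i ∈ J <;> simp [noiseBit, hi]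
    ring
  simp only [h_prod]
  rw [iidExpect_prod fun i (b : Bool) => if i ∈ J ∧ b then (2 : ℝ) else 1]
  simp only [h_factor, prod_ite_mem, univ_inter, prod_const]

lemma iidExpect_lt_card_filter_le (hε : 0 ≤ ε) (hε_le : ε ≤ 1) (J : Finset ι) (m : ℕ) :
    iidExpect (noiseBit ε) (fun r => if m < #{i ∈ J | r i} then (1 : ℝ) else 0)
      ≤ (1 + ε) ^ #J / 2 ^ m := by
  rw [← iidExpect_two_pow_card_filter, ← iidExpect_div_const]
  refine iidExpect_mono (noiseBit_mem_stdSimplex hε hε_le) fun r => ?_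
  split_ifs with h
  · rw [le_div_iff₀ (by positivity), one_mul]
    exact pow_le_pow_right₀ one_le_two h.le
  · positivity

end RandomSubset

section BlockDecomposition

variable {ι : Type*}

/-- The point `x` with the coordinates selected by `r` replaced by those of `y`. -/
def mixPoint (r x y : ι → Bool) : ι → Bool := fun i => if r i then y i else x i

lemma mixPoint_flip [DecidableEq ι] {r : ι → Bool} {i : ι} (hi : r i) (x y : ι → Bool) :
    mixPoint r x (Function.update y i (!y i))
      = Function.update (mixPoint r x y) i (!mixPoint r x y i) := by
  ext j
  rcases eq_or_ne j i with rfl | hji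
  · simp [mixPoint, hi]
  · simp [mixPoint, Function.update_of_ne hji]

variable [Fintype ι] [DecidableEq ι]

lemma iidExpect_mixPoint (ε : ℝ) (F : (ι → Bool) → (ι → Bool) → ℝ) :
    iidExpect (noiseBit ε) (fun r => iidExpect uniformBit fun x =>
        iidExpect uniformBit fun y => F r (mixPoint r x y))
      = iidExpect (noiseBit ε) (fun r => iidExpect uniformBit (F r)) := by
  have h_map := iidExpect_comp_map (ι := ι)
    (w := prodWeight (noiseBit ε) (prodWeight uniformBit uniformBit))
    (w' := prodWeight (noiseBit ε) uniformBit)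
    (φ := fun u => (u.1, if u.1 then u.2.2 else u.2.1)) (by
      rintro ⟨a, b⟩
      rw [sum_filter]
      cases a <;> cases b <;>
        simp [noiseBit, prodWeight, uniformBit, Fintype.sum_prod_type] <;> ring)
    fun ω => F (fun i => (ω i).1) (fun i => (ω i).2)
  rw [iidExpect_prod_type, iidExpect_prod_type] at h_map
  simp only [iidExpect_prod_type (w := uniformBit)] at h_map
  exact h_map

namespace CubePoly

lemma noiseEnergy_eq (c : CubePoly ι) (ε : ℝ) :
    c.noiseEnergy ε = iidExpect (noiseBit ε) (fun r => iidExpect uniformBit fun x =>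
      iidExpect uniformBit fun y => iidExpect uniformBit fun y' =>
        relDistSq (c.evalCube (mixPoint r x y)) (c.evalCube (mixPoint r x y'))) := by
  simp only [noiseEnergy, noiseWeight, iidExpect_prod_type]
  rfl

variable {c : CubePoly ι} {d m : ℕ} {J : Finset ι} {ε M : ℝ}

omit [DecidableEq ι] in
lemma exists_evalCube_eq_mixPoint (hd : c.DegreeLE d) (hJ : c.SupportedOn J) (r x : ι → Bool) :
    ∃ c' : CubePoly ι, c'.DegreeLE d ∧ c'.SupportedOn {i ∈ J | r i} ∧
      ∀ y, c'.evalCube y = c.evalCube (mixPoint r x y) := by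
  obtain ⟨c', h_degree, h_supported, h_eval⟩ :=
    exists_restrict_finset hd hJ {i | r i = false} fun i => chi (x i)
  refine ⟨c', h_degree, ?_, fun y => ?_⟩
  · convert h_supported using 1
    ext i
    simp
  · rw [evalCube, h_eval, evalCube]
    congr 1
    ext i
    cases hr : r i <;> simp [mixPoint, hr]

/-- The number of sign changes of `c` at `x` along the directions selected by `r`. -/
noncomputable def selectedSignChanges (c : CubePoly ι) (r x : ι → Bool) : ℕ :=
  #{i ∈ ({i | c.evalCube x * c.evalCube (Function.update x i (!x i)) < 0} : Finset ι) | r i}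

lemma surfaceArea_le_selectedSignChanges (c : CubePoly ι) (hε : 0 < ε) (hε_le : ε ≤ 1) :
    c.surfaceArea ≤ 1 / √ε + 2 / √ε * iidExpect (noiseBit ε) (fun r =>
      iidExpect uniformBit fun x => √(c.selectedSignChanges r x : ℝ)) := by
  rw [iidExpect_comm, ← iidExpect_const_mul,
    ← iidExpect_const (ι := ι) uniformBit_mem_stdSimplex (1 / √ε), ← iidExpect_add]
  exact iidExpect_mono uniformBit_mem_stdSimplex fun x =>
    sqrt_card_le_add_iidExpect_sqrt_card hε hε_le _

variable (ι) in
/-- Surface area is at most `M` times the relative variance for all polynomials of degree at most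
`d` depending on at most `m` variables. The proof propagates such bounds from `m` to larger `m`. -/
def HasAreaBound (d m : ℕ) (M : ℝ) : Prop :=
  ∀ (c : CubePoly ι) (J : Finset ι), c.DegreeLE d → c.SupportedOn J → #J ≤ m →
    c.surfaceArea ≤ M * c.relVariance

lemma iidExpect_sqrt_selectedSignChanges_le (hd : c.DegreeLE d) (hJ : c.SupportedOn J)
    (hM : 0 ≤ M) (h_area : HasAreaBound ι d m M) (r x : ι → Bool) :
    iidExpect uniformBit (fun y => √(c.selectedSignChanges r (mixPoint r x y) : ℝ))
      ≤ M * (2 * 9 ^ d * iidExpect uniformBit fun y => iidExpect uniformBit fun y' =>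
          relDistSq (c.evalCube (mixPoint r x y)) (c.evalCube (mixPoint r x y')))
        + Fintype.card ι * if m < #{i ∈ J | r i} then (1 : ℝ) else 0 := by
  obtain ⟨c', h_degree, h_supported, h_eval⟩ := exists_evalCube_eq_mixPoint hd hJ r x
  have h_restrict : iidExpect uniformBit
      (fun y => √(c.selectedSignChanges r (mixPoint r x y) : ℝ)) ≤ c'.surfaceArea := by
    refine iidExpect_mono uniformBit_mem_stdSimplex fun y =>
      Real.sqrt_le_sqrt (Nat.cast_le.mpr (card_le_card fun i hi => ?_))
    rw [mem_filter, mem_filter_univ] at hi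
    rw [mem_filter_univ, h_eval, h_eval, mixPoint_flip hi.2]
    exact hi.1
  have h_energy := h_degree.relVariance_le_iidExpect_relDistSq
  simp only [h_eval] at h_energy
  have h_energy_mul := mul_le_mul_of_nonneg_left h_energy hM
  refine h_restrict.trans ?_
  split_ifs with hm
  · have h_card : (#{i ∈ J | r i} : ℝ) ≤ Fintype.card ι := Nat.cast_le.mpr (card_le_univ _)
    linarith [h_supported.surfaceArea_le_card, mul_nonneg hM c'.relVariance_nonneg]
  · linarith [h_area c' _ h_degree h_supported (not_lt.mp hm)]

lemma DegreeLE.surfaceArea_le_noiseEnergy (hd : c.DegreeLE d) (hJ : c.SupportedOn J)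
    (hε : 0 < ε) (hε_le : ε ≤ 1) (hM : 0 ≤ M) (h_area : HasAreaBound ι d m M) :
    c.surfaceArea ≤ 1 / √ε + 2 / √ε * (M * (2 * 9 ^ d * c.noiseEnergy ε)
      + Fintype.card ι * ((1 + ε) ^ #J / 2 ^ m)) := by
  have hw := noiseBit_mem_stdSimplex hε.le hε_le
  refine (c.surfaceArea_le_selectedSignChanges hε hε_le).trans ?_
  gcongr
  rw [← iidExpect_mixPoint, noiseEnergy_eq]
  refine (iidExpect_mono hw fun r => iidExpect_mono uniformBit_mem_stdSimplex fun x =>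
    iidExpect_sqrt_selectedSignChanges_le hd hJ hM h_area r x).trans ?_
  simp only [iidExpect_add, iidExpect_const_mul, iidExpect_const uniformBit_mem_stdSimplex]
  gcongr
  exact iidExpect_lt_card_filter_le hε.le hε_le J m

end CubePoly

end BlockDecomposition
section ScaleReduction

lemma real_exp_twenty_le : Real.exp 20 ≤ 2 ^ 30 := by
  calc Real.exp 20 = Real.exp 1 ^ 20 := by
        rw [← Real.exp_nat_mul]
        norm_num
    _ ≤ 2.7182818286 ^ 20 := by
        gcongr
        exact Real.exp_one_lt_d9.le
    _ ≤ 2 ^ 30 := by norm_num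

lemma one_add_noiseRate_pow_le (N : ℕ) {k m : ℕ} (hm : m ≤ N ^ (k + 2)) :
    (1 + noiseRate N) ^ m ≤ 2 ^ (30 * N ^ k) := by
  have h_rate := noiseRate_nonneg N
  have h_mean : (m : ℝ) * noiseRate N ≤ 20 * N ^ k := by
    calc (m : ℝ) * noiseRate N ≤ N ^ (k + 2) * noiseRate N := by
          gcongr
          exact_mod_cast hm
      _ = N ^ k * (N ^ 2 * noiseRate N) := by ring
      _ ≤ N ^ k * 20 := by
          gcongr
          exact sq_mul_noiseRate_le N
      _ = 20 * N ^ k := mul_comm _ _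
  calc (1 + noiseRate N) ^ m ≤ Real.exp (noiseRate N) ^ m := by
        gcongr
        linarith [Real.add_one_le_exp (noiseRate N)]
    _ = Real.exp (m * noiseRate N) := (Real.exp_nat_mul _ _).symm
    _ ≤ Real.exp (20 * N ^ k) := Real.exp_le_exp.mpr h_mean
    _ = Real.exp 20 ^ N ^ k := by
        rw [← Real.exp_nat_mul]
        push_cast
        rw [mul_comm]
    _ ≤ (2 ^ 30) ^ N ^ k := by
        gcongr
        exact real_exp_twenty_le
    _ = 2 ^ (30 * N ^ k) := (pow_mul _ _ _).symm

variable {β N n k m : ℕ}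

lemma sixty_four_le_of_eq_four_pow (hβ : 3 ≤ β) (hN : N = 4 ^ β) : 64 ≤ N := by
  calc 64 = 4 ^ 3 := by norm_num
    _ ≤ 4 ^ β := Nat.pow_le_pow_right (by norm_num) hβ
    _ = N := hN.symm

lemma sq_le_of_eq_four_pow (hN : N = 4 ^ β) : β ^ 2 ≤ N := by
  rw [hN, show 4 = 2 ^ 2 by norm_num, ← pow_mul, mul_comm, pow_mul]
  exact Nat.pow_le_pow_left Nat.lt_two_pow_self.le 2

lemma pow_eq_two_pow_of_eq_four_pow (hN : N = 4 ^ β) : (N : ℝ) ^ β = 2 ^ (2 * β ^ 2) := by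
  rw [hN, Nat.cast_pow, Nat.cast_ofNat, show (4 : ℝ) = 2 ^ 2 by norm_num, ← pow_mul, ← pow_mul,
    sq β]

lemma card_mul_tail_le_one (hβ : 3 ≤ β) (hN : N = 4 ^ β) (hn : n ≤ N ^ β)
    (hm : m ≤ N ^ (k + 3)) :
    (n : ℝ) * ((1 + noiseRate N) ^ m / 2 ^ N ^ (k + 2)) ≤ 1 := by
  have hN_ge := sixty_four_le_of_eq_four_pow hβ hN
  have h_dim : (n : ℝ) ≤ 2 ^ (2 * β ^ 2) := by
    rw [← pow_eq_two_pow_of_eq_four_pow hN]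
    exact_mod_cast hn
  have h_exponent : 2 * β ^ 2 + 30 * N ^ (k + 1) ≤ N ^ (k + 2) := by
    have h_sq := sq_le_of_eq_four_pow hN
    have : N ≤ N ^ (k + 1) := Nat.le_self_pow k.succ_ne_zero N
    rw [pow_succ N (k + 1)]
    nlinarith
  rw [← mul_div_assoc, div_le_one (by positivity)]
  calc (n : ℝ) * (1 + noiseRate N) ^ m ≤ 2 ^ (2 * β ^ 2) * 2 ^ (30 * N ^ (k + 1)) := by
        have h_rate := noiseRate_nonneg N
        gcongr
        exact one_add_noiseRate_pow_le N hm
    _ = 2 ^ (2 * β ^ 2 + 30 * N ^ (k + 1)) := (pow_add _ _ _).symm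
    _ ≤ 2 ^ N ^ (k + 2) := pow_le_pow_right₀ one_le_two h_exponent

lemma noiseRate_pos (hN : 2 ≤ N) : 0 < noiseRate N :=
  pos_of_mul_pos_right (by linarith [eight_le_sq_mul_noiseRate hN]) (sq_nonneg (N : ℝ))

lemma one_div_sqrt_noiseRate_le (hN : 2 ≤ N) : 1 / √(noiseRate N) ≤ N := by
  rw [div_le_iff₀ (Real.sqrt_pos.mpr (noiseRate_pos hN)), ← Real.sqrt_sq (Nat.cast_nonneg N),
    ← Real.sqrt_mul (sq_nonneg _), Real.one_le_sqrt]
  linarith [eight_le_sq_mul_noiseRate hN]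

variable {ι : Type*} [Fintype ι] [DecidableEq ι] {c : CubePoly ι} {d : ℕ} {J : Finset ι} {M : ℝ}

namespace CubePoly

lemma DegreeLE.surfaceArea_le_of_small_influences (hβ : 3 ≤ β) (hN : N = 4 ^ β)
    (h_dim : Fintype.card ι ≤ N ^ β) (hc : c.DegreeLE d) (hJ : c.SupportedOn J)
    (h_card : #J ≤ N ^ (k + 3)) (h_variance : 0 < c.variance)
    (h_mean : c ∅ ^ 2 ≤ N ^ 2 * c.variance)
    (h_influence : ∀ i, c.influence i ≤ (1 / (N : ℝ) ^ (48 * d + 18)) ^ 2 * c.variance)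
    (hM : 0 ≤ M) (h_area : HasAreaBound ι d (N ^ (k + 2)) M) :
    c.surfaceArea ≤ 4 * 9 ^ d * regularConst d * M * c.relVariance + 3 * N := by
  have hN_ge := sixty_four_le_of_eq_four_pow hβ hN
  have h_blocks := hc.surfaceArea_le_noiseEnergy hJ (noiseRate_pos (by omega : 2 ≤ N))
    (noiseRate_le_one (by omega)) hM h_area
  have h_energy := hc.noiseEnergy_le (by omega) h_variance h_mean h_influence
  have h_tail := card_mul_tail_le_one hβ hN h_dim h_card
  have h_scale := one_div_sqrt_noiseRate_le (by omega : 2 ≤ N)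
  have h_const := regularConst_nonneg d
  have h_relVariance := c.relVariance_nonneg
  calc c.surfaceArea
      ≤ 1 / √(noiseRate N) + 2 * (1 / √(noiseRate N))
        * (M * (2 * 9 ^ d * c.noiseEnergy (noiseRate N))
          + Fintype.card ι * ((1 + noiseRate N) ^ #J / 2 ^ N ^ (k + 2))) := by
        rwa [mul_one_div]
    _ ≤ 1 / √(noiseRate N) + 2 * (1 / √(noiseRate N))
        * (M * (2 * 9 ^ d * (regularConst d / N * c.relVariance)) + 1) := by gcongr
    _ ≤ N + 2 * N * (M * (2 * 9 ^ d * (regularConst d / N * c.relVariance)) + 1) := by gcongr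
    _ = 4 * 9 ^ d * regularConst d * M * c.relVariance + 3 * N := by
        field_simp
        ring

end CubePoly

end ScaleReduction

namespace CubePoly

section TreeAverage

variable {ι : Type*} {rule : CubePoly ι → Option ι} {c : CubePoly ι} {i : ι}

/-- Indicator that `rule` queries a further variable at `c`. -/
noncomputable def queryIndicator (rule : CubePoly ι → Option ι) (c : CubePoly ι) : ℝ :=
  if rule c = none then 0 else 1

lemma queryIndicator_of_eq_none (h : rule c = none) : queryIndicator rule c = 0 := if_pos h

lemma queryIndicator_of_eq_some (h : rule c = some i) : queryIndicator rule c = 1 := by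
  simp [queryIndicator, h]

lemma queryIndicator_le_one (rule : CubePoly ι → Option ι) (c : CubePoly ι) :
    queryIndicator rule c ≤ 1 := by
  unfold queryIndicator
  split_ifs <;> norm_num

variable [DecidableEq ι]

/-- The expected value of `G` at the leaf reached by a random path in the decision tree of depth at
most `t` which queries `rule c` at the node holding `c`, and stops when `rule c = none`. -/
noncomputable def treeAverage (rule : CubePoly ι → Option ι) :
    ℕ → (CubePoly ι → ℝ) → CubePoly ι → ℝ
  | 0, G, c => G c
  | t + 1, G, c =>
    match rule c with
    | none => G c
    | some i =>
      (treeAverage rule t G (c.restrict i 1) + treeAverage rule t G (c.restrict i (-1))) / 2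

/-- Functionals of a polynomial which equal their average over the two restrictions of any
variable; such functionals are preserved by `treeAverage`. -/
def IsHarmonic (H : CubePoly ι → ℝ) : Prop :=
  ∀ i c, (H (c.restrict i 1) + H (c.restrict i (-1))) / 2 = H c

lemma treeAverage_of_eq_none (h : rule c = none) (t : ℕ) (G : CubePoly ι → ℝ) :
    treeAverage rule t G c = G c := by
  cases t with
  | zero => rfl
  | succ t => simp only [treeAverage, h]

lemma treeAverage_succ_of_eq_some (h : rule c = some i) (t : ℕ) (G : CubePoly ι → ℝ) :
    treeAverage rule (t + 1) G c
      = (treeAverage rule t G (c.restrict i 1) + treeAverage rule t G (c.restrict i (-1))) / 2 := by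
  simp only [treeAverage, h]

lemma treeAverage_mono {P : CubePoly ι → Prop} (hP : ∀ c i a, P c → P (c.restrict i a))
    {G H : CubePoly ι → ℝ} (h : ∀ c, P c → G c ≤ H c) (t : ℕ) (hc : P c) :
    treeAverage rule t G c ≤ treeAverage rule t H c := by
  induction t generalizing c with
  | zero => exact h c hc
  | succ t ih =>
    rcases h_rule : rule c with _ | i
    · simpa only [treeAverage_of_eq_none h_rule] using h c hc
    · simp only [treeAverage_succ_of_eq_some h_rule]
      linarith [ih (hP c i 1 hc), ih (hP c i (-1) hc)]

lemma treeAverage_add_depth (s t : ℕ) (G : CubePoly ι → ℝ) (c : CubePoly ι) :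
    treeAverage rule (s + t) G c = treeAverage rule s (treeAverage rule t G) c := by
  induction s generalizing c with
  | zero => rw [Nat.zero_add, treeAverage]
  | succ s ih =>
    rcases h_rule : rule c with _ | i
    · simp only [treeAverage_of_eq_none h_rule]
    · rw [Nat.add_right_comm, treeAverage_succ_of_eq_some h_rule,
        treeAverage_succ_of_eq_some h_rule, ih, ih]

lemma treeAverage_add (t : ℕ) (G H : CubePoly ι → ℝ) (c : CubePoly ι) :
    treeAverage rule t (fun c => G c + H c) c
      = treeAverage rule t G c + treeAverage rule t H c := by
  induction t generalizing c with
  | zero => rfl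
  | succ t ih =>
    rcases h_rule : rule c with _ | i
    · simp only [treeAverage_of_eq_none h_rule]
    · simp only [treeAverage_succ_of_eq_some h_rule, ih]
      ring

lemma treeAverage_const_mul (t : ℕ) (a : ℝ) (G : CubePoly ι → ℝ) (c : CubePoly ι) :
    treeAverage rule t (fun c => a * G c) c = a * treeAverage rule t G c := by
  induction t generalizing c with
  | zero => rfl
  | succ t ih =>
    rcases h_rule : rule c with _ | i
    · simp only [treeAverage_of_eq_none h_rule]
    · simp only [treeAverage_succ_of_eq_some h_rule, ih]
      ring

lemma IsHarmonic.treeAverage_eq {H : CubePoly ι → ℝ} (h : IsHarmonic H) (t : ℕ) (c : CubePoly ι) :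
    treeAverage rule t H c = H c := by
  induction t generalizing c with
  | zero => rfl
  | succ t ih =>
    rcases h_rule : rule c with _ | i
    · rw [treeAverage_of_eq_none h_rule]
    · rw [treeAverage_succ_of_eq_some h_rule, ih, ih, h]

lemma isHarmonic_const (a : ℝ) : IsHarmonic fun _ : CubePoly ι => a := fun _ _ => by ring

lemma treeAverage_queryIndicator_le_pow {d L : ℕ} {ρ : ℝ} (hρ : 0 ≤ ρ)
    (h : ∀ c, DegreeLE c d →
      treeAverage rule L (queryIndicator rule) c ≤ ρ * queryIndicator rule c)
    (k : ℕ) (hc : c.DegreeLE d) : treeAverage rule (k * L) (queryIndicator rule) c ≤ ρ ^ k := by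
  suffices h_iter : ∀ c, DegreeLE c d →
      treeAverage rule (k * L) (queryIndicator rule) c ≤ ρ ^ k * queryIndicator rule c from
    (h_iter c hc).trans (mul_le_of_le_one_right (by positivity) (queryIndicator_le_one rule c))
  induction k with
  | zero => simp [treeAverage]
  | succ k ih =>
    intro c hc
    calc treeAverage rule ((k + 1) * L) (queryIndicator rule) c
        = treeAverage rule L (treeAverage rule (k * L) (queryIndicator rule)) c := by
          rw [add_one_mul, add_comm, treeAverage_add_depth]
      _ ≤ treeAverage rule L (fun c => ρ ^ k * queryIndicator rule c) c :=
          treeAverage_mono (fun _ i a h => h.restrict i a) ih L hc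
      _ = ρ ^ k * treeAverage rule L (queryIndicator rule) c := treeAverage_const_mul _ _ _ _
      _ ≤ ρ ^ k * (ρ * queryIndicator rule c) := by
          gcongr
          exact h c hc
      _ = ρ ^ (k + 1) * queryIndicator rule c := by rw [pow_succ, mul_assoc]

end TreeAverage

section TreeDecomposition

variable {ι : Type*} [Fintype ι] [DecidableEq ι] {rule : CubePoly ι → Option ι} {c : CubePoly ι}
  {d : ℕ} {θ R : ℝ}

lemma signChanges_restrict_update (c : CubePoly ι) (i : ι) (u v : Bool) (x : ι → Bool) :
    (c.restrict i (chi u)).signChanges (Function.update x i v)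
      = (c.restrict i (chi u)).signChanges x := by
  have h_flip (j : ι) : Function.update (Function.update (Function.update x i v) j
      (!Function.update x i v j)) i u = Function.update (Function.update x j (!x j)) i u := by
    rcases eq_or_ne j i with rfl | h
    · simp only [Function.update_idem]
    · rw [Function.update_of_ne h, Function.update_comm h, Function.update_idem,
        Function.update_comm h]
  simp only [signChanges, evalCube_restrict, Function.update_idem, h_flip]

lemma signChanges_le_restrict (c : CubePoly ι) (i : ι) (x : ι → Bool) :
    c.signChanges x ≤ (c.restrict i (chi (x i))).signChanges x + 1 := by
  refine (card_le_card fun j hj => ?_).trans (card_insert_le i _)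
  rw [mem_insert]
  refine or_iff_not_imp_left.mpr fun h => ?_
  rwa [mem_filter_univ, evalCube_restrict, evalCube_restrict, Function.update_eq_self,
    Function.update_comm h, Function.update_eq_self, ← mem_filter_univ (p := fun j =>
      c.evalCube x * c.evalCube (Function.update x j (!x j)) < 0)]

lemma surfaceArea_le_restrict_average (c : CubePoly ι) (i : ι) :
    c.surfaceArea
      ≤ 1 + ((c.restrict i 1).surfaceArea + (c.restrict i (-1)).surfaceArea) / 2 := by
  have hw := uniformBit_mem_stdSimplex
  have h_sqrt (x : ι → Bool) :
      √(c.signChanges x : ℝ) ≤ 1 + √((c.restrict i (chi (x i))).signChanges x : ℝ) := by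
    have h_step : (c.signChanges x : ℝ) ≤ (c.restrict i (chi (x i))).signChanges x + 1 :=
      mod_cast c.signChanges_le_restrict i x
    refine Real.sqrt_le_iff.mpr ⟨by positivity, h_step.trans ?_⟩
    rw [add_sq, Real.sq_sqrt (Nat.cast_nonneg _)]
    linarith [Real.sqrt_nonneg ((c.restrict i (chi (x i))).signChanges x : ℝ)]
  refine (iidExpect_mono hw h_sqrt).trans_eq ?_
  rw [iidExpect_add, iidExpect_const hw,
    iidExpect_resample hw i fun x => √((c.restrict i (chi (x i))).signChanges x : ℝ)]
  simp only [Function.update_self, signChanges_restrict_update, surfaceArea]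
  rw [← iidExpect_add, ← iidExpect_div_const]
  congr 2
  ext x
  simp only [uniformBit, Fintype.sum_bool, chi, if_true, Bool.false_eq_true, if_false]
  ring

lemma surfaceArea_le_add_treeAverage (t : ℕ) (c : CubePoly ι) :
    c.surfaceArea ≤ t + treeAverage rule t surfaceArea c := by
  induction t generalizing c with
  | zero => simp [treeAverage]
  | succ t ih =>
    rcases h_rule : rule c with _ | i
    · rw [treeAverage_of_eq_none h_rule]
      exact le_add_of_nonneg_left (Nat.cast_nonneg _)
    · rw [treeAverage_succ_of_eq_some h_rule]
      push_cast
      linarith [ih (c.restrict i 1), ih (c.restrict i (-1)), c.surfaceArea_le_restrict_average i]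

lemma treeAverage_relVariance_le (t : ℕ) (hc : 0 < c.normSq) :
    treeAverage rule t relVariance c ≤ 5 * c.relVariance := by
  have h_average {H : CubePoly ι → ℝ} (hH : IsHarmonic H) (h : ∀ c, relVariance c ≤ H c) :
      treeAverage rule t relVariance c ≤ H c :=
    (treeAverage_mono (P := fun _ => True) (fun _ _ _ _ => trivial) (fun c _ => h c) t
      trivial).trans_eq (hH.treeAverage_eq t c)
  refine le_five_mul_relVariance hc (h_average (isHarmonic_const 1) relVariance_le_one) fun h => ?_
  have h_harmonic : IsHarmonic fun c' : CubePoly ι =>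
      4 * (c'.normSq - 2 * c ∅ * c' ∅ + c ∅ ^ 2) / c ∅ ^ 2 := fun i c' => by
    beta_reduce
    rw [← normSq_restrict_average c' i, ← restrict_empty_average c' i]
    ring
  refine (h_average h_harmonic fun c' => c'.relVariance_le_normSq_sub h).trans_eq ?_
  rw [normSq_eq_variance_add]
  ring

lemma treeAverage_sum_influence_le (hθ : θ ≤ 1)
    (h_greedy : ∀ c i, DegreeLE c d → rule c = some i → θ * ∑ j, c.influence j ≤ c.influence i)
    (t : ℕ) (hc : c.DegreeLE d) :
    treeAverage rule t (fun c => queryIndicator rule c * ∑ j, c.influence j) c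
      ≤ (1 - θ) ^ t * ∑ j, c.influence j := by
  have h_nonneg (c : CubePoly ι) : 0 ≤ ∑ j, c.influence j :=
    sum_nonneg fun j _ => c.influence_nonneg j
  have : 0 ≤ 1 - θ := sub_nonneg.mpr hθ
  induction t generalizing c with
  | zero =>
    rw [treeAverage, pow_zero]
    exact mul_le_mul_of_nonneg_right (queryIndicator_le_one rule c) (h_nonneg c)
  | succ t ih =>
    rcases h_rule : rule c with _ | i
    · rw [treeAverage_of_eq_none h_rule, queryIndicator_of_eq_none h_rule, zero_mul]
      exact mul_nonneg (by positivity) (h_nonneg c)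
    · rw [treeAverage_succ_of_eq_some h_rule]
      calc _ ≤ ((1 - θ) ^ t * ∑ j, (c.restrict i 1).influence j
            + (1 - θ) ^ t * ∑ j, (c.restrict i (-1)).influence j) / 2 := by
            linarith [ih (hc.restrict i 1), ih (hc.restrict i (-1))]
        _ = (1 - θ) ^ t * (∑ j, c.influence j - c.influence i) := by
            rw [← mul_add, mul_div_assoc, sum_influence_restrict_average]
        _ ≤ (1 - θ) ^ t * (∑ j, c.influence j - θ * ∑ j, c.influence j) := by
            gcongr
            exact h_greedy c i hc h_rule
        _ = (1 - θ) ^ (t + 1) * ∑ j, c.influence j := by ring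

lemma normSq_sq_le_iidExpect_evalCube_pow_four (c : CubePoly ι) :
    c.normSq ^ 2 ≤ iidExpect uniformBit fun x => c.evalCube x ^ 4 := by
  have h := sq_iidExpect_le_mul uniformBit_mem_stdSimplex (F := fun x => c.evalCube x ^ 4)
    (G := fun _ => 1) (H := fun x => c.evalCube x ^ 2) (fun x => by positivity)
    (fun _ => zero_le_one) fun x => le_of_eq (by ring)
  rwa [iidExpect_const uniformBit_mem_stdSimplex, mul_one, iidExpect_evalCube_sq] at h

lemma normSq_le_of_sq_le_mul_variance (h : c ∅ ^ 2 < R * c.variance) :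
    c.normSq ≤ (1 + R) * ∑ j, c.influence j := by
  have hR : 0 < R := pos_of_mul_pos_left ((sq_nonneg _).trans_lt h) c.variance_nonneg
  calc c.normSq ≤ (1 + R) * c.variance := by linarith [c.normSq_eq_variance_add]
    _ ≤ (1 + R) * ∑ j, c.influence j := by
      gcongr
      exact c.variance_le_sum_influence

/-- Young's inequality `s ≤ l + s ^ 2 / (4 * l)` handles the nodes where the tree has stopped. -/
lemma normSq_le_add_queryIndicator
    (h_mean : ∀ c i, rule c = some i → c ∅ ^ 2 < R * c.variance) {l : ℝ} (hl : 0 < l)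
    (c : CubePoly ι) :
    c.normSq ≤ l + -l * queryIndicator rule c
      + (1 / (4 * l) * iidExpect uniformBit (fun x => c.evalCube x ^ 4)
        + (1 + R) * (queryIndicator rule c * ∑ j, c.influence j)) := by
  have h_fourth := c.normSq_sq_le_iidExpect_evalCube_pow_four
  rcases h_rule : rule c with _ | i
  · have h_young : c.normSq ≤ l + 1 / (4 * l) * c.normSq ^ 2 := by
      rw [← sub_nonneg]
      have h_square : l + 1 / (4 * l) * c.normSq ^ 2 - c.normSq
          = (2 * l - c.normSq) ^ 2 / (4 * l) := by
        field_simp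
        ring
      rw [h_square]
      positivity
    rw [queryIndicator_of_eq_none h_rule, mul_zero, add_zero, zero_mul, mul_zero, add_zero]
    refine h_young.trans ?_
    gcongr
  · have h_nonneg : 0 ≤ 1 / (4 * l) * iidExpect uniformBit (fun x => c.evalCube x ^ 4) :=
      mul_nonneg (by positivity) ((sq_nonneg _).trans h_fourth)
    rw [queryIndicator_of_eq_some h_rule]
    linarith [normSq_le_of_sq_le_mul_variance (h_mean c i h_rule)]

lemma DegreeLE.normSq_le_treeAverage (hc : c.DegreeLE d)
    (h_mean : ∀ c i, rule c = some i → c ∅ ^ 2 < R * c.variance) {l : ℝ} (hl : 0 < l) (t : ℕ) :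
    c.normSq ≤ l * (1 - treeAverage rule t (queryIndicator rule) c)
      + 1 / (4 * l) * (9 ^ d * c.normSq ^ 2)
      + (1 + R) * treeAverage rule t (fun c => queryIndicator rule c * ∑ j, c.influence j) c := by
  have h_fourth : IsHarmonic fun c : CubePoly ι => iidExpect uniformBit fun x => c.evalCube x ^ 4 :=
    fun i c => c.iidExpect_restrict_average i 4
  have h_normSq : IsHarmonic fun c : CubePoly ι => c.normSq :=
    fun i c => c.normSq_restrict_average i
  have h_average := treeAverage_mono (rule := rule) (c := c) (P := fun _ => True)
    (fun _ _ _ _ => trivial) (fun c _ => normSq_le_add_queryIndicator h_mean hl c) t trivial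
  simp only [treeAverage_add, treeAverage_const_mul, h_fourth.treeAverage_eq,
    h_normSq.treeAverage_eq, (isHarmonic_const l).treeAverage_eq] at h_average
  have h_hyper : 1 / (4 * l) * iidExpect uniformBit (fun x => c.evalCube x ^ 4)
      ≤ 1 / (4 * l) * (9 ^ d * c.normSq ^ 2) := by
    gcongr
    exact hc.iidExpect_evalCube_pow_four_le
  linarith

lemma DegreeLE.treeAverage_queryIndicator_le {L : ℕ} (hc : c.DegreeLE d) (hθ : θ ≤ 1)
    (h_greedy : ∀ c i, DegreeLE c d → rule c = some i → θ * ∑ j, c.influence j ≤ c.influence i)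
    (h_mean : ∀ c i, rule c = some i → c ∅ ^ 2 < R * c.variance)
    (hL : (1 + R) * d * (1 - θ) ^ L ≤ 1 / 2) :
    treeAverage rule L (queryIndicator rule) c
      ≤ (1 - 1 / (4 * 9 ^ d)) * queryIndicator rule c := by
  rcases h_rule : rule c with _ | i
  · rw [treeAverage_of_eq_none h_rule, queryIndicator_of_eq_none h_rule, mul_zero]
  rw [queryIndicator_of_eq_some h_rule, mul_one]
  have h_variance : 0 < R * c.variance := (sq_nonneg _).trans_lt (h_mean c i h_rule)
  have hR : 0 < R := pos_of_mul_pos_left h_variance c.variance_nonneg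
  have h_normSq : 0 < c.normSq :=
    (pos_of_mul_pos_right h_variance hR.le).trans_le c.variance_le_normSq
  have h_split := hc.normSq_le_treeAverage h_mean (l := 9 ^ d * c.normSq) (by positivity) L
  have h_fourth : 1 / (4 * (9 ^ d * c.normSq)) * (9 ^ d * c.normSq ^ 2) = c.normSq / 4 := by
    field_simp
  have h_influence : (1 + R) * treeAverage rule L
      (fun c => queryIndicator rule c * ∑ j, c.influence j) c ≤ c.normSq / 2 := by
    have : 0 ≤ 1 - θ := sub_nonneg.mpr hθ
    calc _ ≤ (1 + R) * ((1 - θ) ^ L * ∑ j, c.influence j) := by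
          gcongr
          exact treeAverage_sum_influence_le hθ h_greedy L hc
      _ ≤ (1 + R) * ((1 - θ) ^ L * (d * c.normSq)) := by
          gcongr
          exact hc.sum_influence_le.trans (by gcongr; exact c.variance_le_normSq)
      _ = (1 + R) * d * (1 - θ) ^ L * c.normSq := by ring
      _ ≤ 1 / 2 * c.normSq := by gcongr
      _ = c.normSq / 2 := by ring
  rw [le_sub_comm, div_le_iff₀ (by positivity)]
  refine le_of_mul_le_mul_right ?_ h_normSq
  linarith

lemma SupportedOn.surfaceArea_le_of_tree {L : ℕ} {ρ A B W : ℝ} {J : Finset ι}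
    (hJ : c.SupportedOn J) (hc : c.DegreeLE d) (h_normSq : 0 < c.normSq)
    (hρ : 0 ≤ ρ) (hA : 0 ≤ A) (hW : 0 ≤ W)
    (h_query : ∀ c, DegreeLE c d →
      treeAverage rule L (queryIndicator rule) c ≤ ρ * queryIndicator rule c)
    (h_leaf : ∀ c, DegreeLE c d → SupportedOn c J →
      c.surfaceArea ≤ A * c.relVariance + (B + W * queryIndicator rule c)) (k : ℕ) :
    c.surfaceArea ≤ (k * L : ℕ) + (A * (5 * c.relVariance) + (B + W * ρ ^ k)) := by
  calc c.surfaceArea ≤ (k * L : ℕ) + treeAverage rule (k * L) surfaceArea c :=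
        surfaceArea_le_add_treeAverage _ c
    _ ≤ (k * L : ℕ) + treeAverage rule (k * L)
          (fun c => A * c.relVariance + (B + W * queryIndicator rule c)) c := by
        gcongr
        exact treeAverage_mono (P := fun c => c.DegreeLE d ∧ c.SupportedOn J)
          (fun _ i a h => ⟨h.1.restrict i a, (h.2.restrict i a).mono (erase_subset _ _)⟩)
          (fun c h => h_leaf c h.1 h.2) _ ⟨hc, hJ⟩
    _ = (k * L : ℕ) + (A * treeAverage rule (k * L) relVariance c
          + (B + W * treeAverage rule (k * L) (queryIndicator rule) c)) := by
        simp only [treeAverage_add, treeAverage_const_mul, (isHarmonic_const B).treeAverage_eq]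
    _ ≤ (k * L : ℕ) + (A * (5 * c.relVariance) + (B + W * ρ ^ k)) := by
        gcongr
        · exact treeAverage_relVariance_le _ h_normSq
        · exact treeAverage_queryIndicator_le_pow hρ h_query k hc

end TreeDecomposition

end CubePoly

section ScaleStep

lemma one_sub_pow_le_exp_neg {θ : ℝ} (hθ : θ ≤ 1) (n : ℕ) : (1 - θ) ^ n ≤ Real.exp (-(n * θ)) := by
  rw [← mul_neg, Real.exp_nat_mul]
  exact pow_le_pow_left₀ (sub_nonneg.mpr hθ) (Real.one_sub_le_exp_neg θ) n

lemma one_sub_pow_le_one_div {θ y : ℝ} {n : ℕ} (hθ : θ ≤ 1) (hy : 0 < y) (h : n * θ = y) :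
    (1 - θ) ^ n ≤ 1 / y := by
  calc (1 - θ) ^ n ≤ Real.exp (-y) := h ▸ one_sub_pow_le_exp_neg hθ n
    _ = 1 / Real.exp y := by rw [Real.exp_neg, one_div]
    _ ≤ 1 / y := one_div_le_one_div_of_le hy (by linarith [Real.add_one_le_exp y])

variable {β N n d j k : ℕ}

lemma card_mul_one_sub_pow_le_one (hN : N = 4 ^ β) (hn : n ≤ N ^ β) :
    (n : ℝ) * (1 - 1 / (4 * 9 ^ d)) ^ (4 * 9 ^ d * (2 * β ^ 2)) ≤ 1 := by
  have h_rate : (1 : ℝ) / (4 * 9 ^ d) ≤ 1 := by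
    rw [div_le_one (by positivity)]
    linarith [one_le_pow₀ (by norm_num : (1 : ℝ) ≤ 9) (n := d)]
  have h_dim : (n : ℝ) ≤ Real.exp (2 * β ^ 2) := by
    calc (n : ℝ) ≤ (N : ℝ) ^ β := by exact_mod_cast hn
      _ = 2 ^ (2 * β ^ 2) := pow_eq_two_pow_of_eq_four_pow hN
      _ ≤ Real.exp 1 ^ (2 * β ^ 2) := by
        gcongr
        linarith [Real.add_one_le_exp (1 : ℝ)]
      _ = Real.exp (2 * β ^ 2) := by
        rw [← Real.exp_nat_mul]
        push_cast
        rw [mul_one]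
  calc (n : ℝ) * (1 - 1 / (4 * 9 ^ d)) ^ (4 * 9 ^ d * (2 * β ^ 2))
      ≤ Real.exp (2 * β ^ 2) * Real.exp (-(2 * β ^ 2)) := by
        gcongr
        refine (one_sub_pow_le_exp_neg h_rate _).trans_eq ?_
        push_cast
        field_simp
    _ = 1 := by rw [← Real.exp_add, add_neg_cancel, Real.exp_zero]

/-- The depth after which the average of `queryIndicator` has dropped by a constant factor. -/
def phaseDepth (d N : ℕ) : ℕ := 2 * d * (1 + N ^ 2) * (d * N ^ (96 * d + 36))

lemma one_sub_pow_phaseDepth_le (hd : 1 ≤ d) (hN : 1 ≤ N) :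
    (1 + (N : ℝ) ^ 2) * d * (1 - 1 / (d * (N : ℝ) ^ (96 * d + 36))) ^ phaseDepth d N ≤ 1 / 2 := by
  have hd' : (1 : ℝ) ≤ d := by exact_mod_cast hd
  have hN' : (1 : ℝ) ≤ N := by exact_mod_cast hN
  have h_rate : 1 / (d * (N : ℝ) ^ (96 * d + 36)) ≤ 1 := by
    rw [div_le_one (by positivity)]
    exact one_le_mul_of_one_le_of_one_le hd' (one_le_pow₀ hN')
  calc _ ≤ (1 + (N : ℝ) ^ 2) * d * (1 / (2 * d * (1 + (N : ℝ) ^ 2))) := by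
        gcongr
        refine one_sub_pow_le_one_div h_rate (by positivity) ?_
        rw [phaseDepth]
        push_cast
        field_simp
    _ = 1 / 2 := by field_simp

lemma totalDepth_le (hN : N = 4 ^ β) :
    ((4 * 9 ^ d * (2 * β ^ 2) * phaseDepth d N : ℕ) : ℝ)
      ≤ 32 * 9 ^ d * d ^ 2 * (N : ℝ) ^ (96 * d + 39) := by
  have hN_one : (1 : ℝ) ≤ N := by
    rw [hN]
    push_cast
    exact one_le_pow₀ (by norm_num)
  have h_sq : (β : ℝ) ^ 2 ≤ N := by exact_mod_cast sq_le_of_eq_four_pow hN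
  calc ((4 * 9 ^ d * (2 * β ^ 2) * phaseDepth d N : ℕ) : ℝ)
      = 16 * 9 ^ d * d ^ 2 * (β ^ 2 * (1 + (N : ℝ) ^ 2) * (N : ℝ) ^ (96 * d + 36)) := by
        rw [phaseDepth]
        push_cast
        ring
    _ ≤ 16 * 9 ^ d * d ^ 2 * (N * (2 * (N : ℝ) ^ 2) * (N : ℝ) ^ (96 * d + 36)) := by
        gcongr
        nlinarith
    _ = 32 * 9 ^ d * d ^ 2 * (N : ℝ) ^ (96 * d + 39) := by ring

/-- The factor by which `HasAreaBound` deteriorates when the number of variables grows by a factor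
`N`. -/
noncomputable def scaleFactor (d : ℕ) : ℝ := 5 * (4 * 9 ^ d * regularConst d + 4)

/-- The coefficient of the additive deterioration of `HasAreaBound` when the number of variables
grows by a factor `N`. -/
noncomputable def scaleError (d : ℕ) : ℝ := 2 * (32 * 9 ^ d * d ^ 2 + 4)

lemma four_le_scaleFactor (d : ℕ) : 4 ≤ scaleFactor d := by
  have := regularConst_nonneg d
  have : 0 ≤ 4 * 9 ^ d * regularConst d := by positivity
  unfold scaleFactor
  linarith

lemma one_le_scaleError (d : ℕ) : 1 ≤ scaleError d := by
  have : 0 ≤ (32 : ℝ) * 9 ^ d * d ^ 2 := by positivity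
  unfold scaleError
  linarith

namespace CubePoly

variable {ι : Type*} [Fintype ι] [DecidableEq ι] {c : CubePoly ι} {J : Finset ι} {i : ι}
  {M θ τ R depth residue : ℝ}

/-- Query a variable whose influence exceeds `τ` times the variance, as long as there is one and the
squared mean is less than `R` times the variance. -/
noncomputable def regularityRule (τ R : ℝ) (c : CubePoly ι) : Option ι :=
  if h : c ∅ ^ 2 < R * c.variance ∧ ∃ i, τ * c.variance < c.influence i then some h.2.choose
  else none

lemma lt_of_regularityRule_eq_some (h : regularityRule τ R c = some i) :
    c ∅ ^ 2 < R * c.variance ∧ τ * c.variance < c.influence i := by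
  unfold regularityRule at h
  split_ifs at h with h_exists
  exact ⟨h_exists.1, Option.some.inj h ▸ h_exists.2.choose_spec⟩

lemma le_of_regularityRule_eq_none (h : regularityRule τ R c = none) :
    R * c.variance ≤ c ∅ ^ 2 ∨ ∀ i, c.influence i ≤ τ * c.variance := by
  unfold regularityRule at h
  split_ifs at h with h_exists
  simpa only [not_and_or, not_exists, not_lt] using h_exists

lemma DegreeLE.mul_sum_influence_le_of_regularityRule (hc : c.DegreeLE d) (hθ : 0 ≤ θ)
    (h_threshold : θ * d = τ) (h : regularityRule τ R c = some i) :
    θ * ∑ j, c.influence j ≤ c.influence i := by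
  calc θ * ∑ j, c.influence j ≤ θ * (d * c.variance) := by
        gcongr
        exact hc.sum_influence_le
    _ = τ * c.variance := by rw [← mul_assoc, h_threshold]
    _ ≤ c.influence i := (lt_of_regularityRule_eq_some h).2.le

lemma DegreeLE.surfaceArea_le_four_mul_relVariance (hc : c.DegreeLE d) (hN : N = 4 ^ β)
    (h_dim : Fintype.card ι ≤ N ^ β) (h_degree : (9 : ℝ) ^ (d * j) ≤ 2 ^ β) (hj : β + 2 ≤ 2 ^ j)
    (h_mean : N ^ 2 * c.variance ≤ c ∅ ^ 2) : c.surfaceArea ≤ 4 * c.relVariance := by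
  have h_scale : (N : ℝ) ^ 2 = (2 ^ β) ^ 4 := by
    rw [hN, Nat.cast_pow, ← pow_mul, ← pow_mul, show ((4 : ℕ) : ℝ) = 2 ^ 2 by norm_num, ← pow_mul]
    congr 1
    ring
  rcases eq_or_ne (c ∅) 0 with h_zero | h_ne
  · have h_normSq : c.normSq = 0 := by
      rw [h_scale, h_zero, sq 0, zero_mul] at h_mean
      rw [normSq_eq_variance_add, h_zero, sq 0, zero_mul, add_zero]
      exact le_antisymm (nonpos_of_mul_nonpos_right h_mean (by positivity)) c.variance_nonneg
    rw [normSq_eq_zero.mp h_normSq, surfaceArea_zero]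
    exact mul_nonneg zero_le_four (relVariance_nonneg _)
  · refine c.supportedOn_univ.surfaceArea_le_of_large_mean hc h_ne ?_ h_degree hj ?_
    · rwa [← h_scale, mul_comm]
    · rw [card_univ, ← pow_mul, mul_left_comm, ← sq, ← pow_eq_two_pow_of_eq_four_pow hN]
      exact_mod_cast h_dim

lemma DegreeLE.surfaceArea_le_of_regularityRule_eq_none (hβ : 3 ≤ β) (hN : N = 4 ^ β)
    (h_dim : Fintype.card ι ≤ N ^ β) (h_degree : (9 : ℝ) ^ (d * j) ≤ 2 ^ β) (hj : β + 2 ≤ 2 ^ j)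
    (hM : 1 ≤ M) (h_area : HasAreaBound ι d (N ^ (k + 2)) M) (hc : c.DegreeLE d)
    (hJ : c.SupportedOn J) (h_card : #J ≤ N ^ (k + 3))
    (h_rule : regularityRule ((1 / (N : ℝ) ^ (48 * d + 18)) ^ 2) (N ^ 2) c = none) :
    c.surfaceArea ≤ (4 * 9 ^ d * regularConst d + 4) * M * c.relVariance + 3 * N := by
  have h_const := regularConst_nonneg d
  have h_relVariance := c.relVariance_nonneg
  rcases le_or_gt (N ^ 2 * c.variance) (c ∅ ^ 2) with h_large | h_small
  · calc c.surfaceArea ≤ 4 * 1 * c.relVariance + 0 := by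
          rw [mul_one, add_zero]
          exact hc.surfaceArea_le_four_mul_relVariance hN h_dim h_degree hj h_large
      _ ≤ (4 * 9 ^ d * regularConst d + 4) * M * c.relVariance + 3 * N := by
          gcongr
          · exact le_add_of_nonneg_left (by positivity)
          · positivity
  · have h_variance : 0 < c.variance :=
      pos_of_mul_pos_right ((sq_nonneg _).trans_lt h_small) (by positivity)
    calc c.surfaceArea ≤ 4 * 9 ^ d * regularConst d * M * c.relVariance + 3 * N :=
          hc.surfaceArea_le_of_small_influences hβ hN h_dim hJ h_card h_variance h_small.le
            ((le_of_regularityRule_eq_none h_rule).resolve_left h_small.not_ge)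
            (zero_le_one.trans hM) h_area
      _ ≤ (4 * 9 ^ d * regularConst d + 4) * M * c.relVariance + 3 * N := by
          gcongr
          exact le_add_of_nonneg_right zero_le_four

lemma DegreeLE.surfaceArea_le_add_queryIndicator (hβ : 3 ≤ β) (hN : N = 4 ^ β)
    (h_dim : Fintype.card ι ≤ N ^ β) (h_degree : (9 : ℝ) ^ (d * j) ≤ 2 ^ β) (hj : β + 2 ≤ 2 ^ j)
    (hM : 1 ≤ M) (h_area : HasAreaBound ι d (N ^ (k + 2)) M) (hc : c.DegreeLE d)
    (hJ : c.SupportedOn J) (h_card : #J ≤ N ^ (k + 3)) :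
    c.surfaceArea ≤ (4 * 9 ^ d * regularConst d + 4) * M * c.relVariance
      + (3 * N + Fintype.card ι
        * queryIndicator (regularityRule ((1 / (N : ℝ) ^ (48 * d + 18)) ^ 2) (N ^ 2)) c) := by
  rcases h_rule : regularityRule ((1 / (N : ℝ) ^ (48 * d + 18)) ^ 2) (N ^ 2) c with _ | i
  · rw [queryIndicator_of_eq_none h_rule, mul_zero, add_zero]
    exact hc.surfaceArea_le_of_regularityRule_eq_none hβ hN h_dim h_degree hj hM h_area hJ h_card
      h_rule
  · have h_const := regularConst_nonneg d
    have h_relVariance := c.relVariance_nonneg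
    rw [queryIndicator_of_eq_some h_rule, mul_one]
    calc c.surfaceArea ≤ #J := hJ.surfaceArea_le_card
      _ ≤ Fintype.card ι := by exact_mod_cast card_le_univ J
      _ ≤ _ := by
        rw [← add_assoc]
        exact le_add_of_nonneg_left (by positivity)

lemma DegreeLE.treeAverage_regularityRule_le (hd : 1 ≤ d) (hN : 1 ≤ N) (hc : c.DegreeLE d) :
    treeAverage (regularityRule ((1 / (N : ℝ) ^ (48 * d + 18)) ^ 2) (N ^ 2)) (phaseDepth d N)
        (queryIndicator (regularityRule ((1 / (N : ℝ) ^ (48 * d + 18)) ^ 2) (N ^ 2))) c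
      ≤ (1 - 1 / (4 * 9 ^ d))
        * queryIndicator (regularityRule ((1 / (N : ℝ) ^ (48 * d + 18)) ^ 2) (N ^ 2)) c := by
  have hd' : (1 : ℝ) ≤ d := by exact_mod_cast hd
  have hN' : (1 : ℝ) ≤ N := by exact_mod_cast hN
  refine hc.treeAverage_queryIndicator_le (θ := 1 / (d * (N : ℝ) ^ (96 * d + 36))) ?_
    (fun c i hc h => hc.mul_sum_influence_le_of_regularityRule (by positivity) ?_ h)
    (fun c i h => (lt_of_regularityRule_eq_some h).1) (one_sub_pow_phaseDepth_le hd hN)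
  · rw [div_le_one (by positivity)]
    exact one_le_mul_of_one_le_of_one_le hd' (one_le_pow₀ hN')
  · field_simp
    ring

lemma one_le_two_mul_mul_relVariance (hR : 1 ≤ R) (h_mean : c ∅ ^ 2 < R * c.variance) :
    1 ≤ 2 * R * c.relVariance := by
  have h_variance : 0 < c.variance :=
    pos_of_mul_pos_right ((sq_nonneg _).trans_lt h_mean) (zero_le_one.trans hR)
  rw [relVariance, ← mul_div_assoc, one_le_div (h_variance.trans_le c.variance_le_normSq),
    normSq_eq_variance_add]
  nlinarith

lemma errorTerms_le (hN : 1 ≤ N) (h_depth : depth ≤ 32 * 9 ^ d * d ^ 2 * (N : ℝ) ^ (96 * d + 39))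
    (h_residue : residue ≤ 1) (h_mean : c ∅ ^ 2 < N ^ 2 * c.variance) :
    depth + (3 * N + residue) ≤ scaleError d * N ^ (96 * d + 41) * c.relVariance := by
  have hN' : (1 : ℝ) ≤ N := by exact_mod_cast hN
  have h_one : (1 : ℝ) ≤ N ^ (96 * d + 39) := one_le_pow₀ hN'
  have h_self : (N : ℝ) ≤ N ^ (96 * d + 39) := le_self_pow₀ hN' (by omega)
  calc depth + (3 * N + residue) ≤ (32 * 9 ^ d * d ^ 2 + 4) * (N : ℝ) ^ (96 * d + 39) * 1 := by
        linarith
    _ ≤ (32 * 9 ^ d * d ^ 2 + 4) * (N : ℝ) ^ (96 * d + 39) * (2 * N ^ 2 * c.relVariance) := by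
        gcongr
        exact one_le_two_mul_mul_relVariance (one_le_pow₀ hN') h_mean
    _ = scaleError d * N ^ (96 * d + 41) * c.relVariance := by
        rw [scaleError]
        ring

lemma DegreeLE.surfaceArea_le_of_small_mean (hd : 1 ≤ d) (hβ : 3 ≤ β) (hN : N = 4 ^ β)
    (h_dim : Fintype.card ι ≤ N ^ β) (h_degree : (9 : ℝ) ^ (d * j) ≤ 2 ^ β) (hj : β + 2 ≤ 2 ^ j)
    (hM : 1 ≤ M) (h_area : HasAreaBound ι d (N ^ (k + 2)) M) (hc : c.DegreeLE d)
    (hJ : c.SupportedOn J) (h_card : #J ≤ N ^ (k + 3)) (h_mean : c ∅ ^ 2 < N ^ 2 * c.variance) :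
    c.surfaceArea ≤ (scaleFactor d * M + scaleError d * N ^ (96 * d + 41)) * c.relVariance := by
  have h_normSq : 0 < c.normSq :=
    (pos_of_mul_pos_right ((sq_nonneg _).trans_lt h_mean) (by positivity)).trans_le
      c.variance_le_normSq
  have h_rate : 0 ≤ 1 - 1 / (4 * 9 ^ d : ℝ) := by
    rw [sub_nonneg, div_le_one (by positivity)]
    linarith [one_le_pow₀ (by norm_num : (1 : ℝ) ≤ 9) (n := d)]
  have h_const := regularConst_nonneg d
  have hN_one : 1 ≤ N := le_trans (by norm_num) (sixty_four_le_of_eq_four_pow hβ hN)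
  have h_tree := hJ.surfaceArea_le_of_tree hc h_normSq h_rate (by positivity) (by positivity)
    (fun _ hc => hc.treeAverage_regularityRule_le hd hN_one)
    (fun _ hc hJ => hc.surfaceArea_le_add_queryIndicator hβ hN h_dim h_degree hj hM h_area hJ
      h_card) (4 * 9 ^ d * (2 * β ^ 2))
  have h_errors := errorTerms_le hN_one (totalDepth_le hN (d := d))
    (card_mul_one_sub_pow_le_one hN h_dim (d := d)) h_mean
  have h_main : (4 * 9 ^ d * regularConst d + 4) * M * (5 * c.relVariance)
      = scaleFactor d * M * c.relVariance := by
    rw [scaleFactor]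
    ring
  rw [add_mul]
  linarith

lemma HasAreaBound.succ (hd : 1 ≤ d) (hβ : 3 ≤ β) (hN : N = 4 ^ β)
    (h_dim : Fintype.card ι ≤ N ^ β) (h_degree : (9 : ℝ) ^ (d * j) ≤ 2 ^ β) (hj : β + 2 ≤ 2 ^ j)
    (hM : 1 ≤ M) (h_area : HasAreaBound ι d (N ^ (k + 2)) M) :
    HasAreaBound ι d (N ^ (k + 3)) (scaleFactor d * M + scaleError d * N ^ (96 * d + 41)) := by
  intro c J hc hJ h_card
  rcases le_or_gt (N ^ 2 * c.variance) (c ∅ ^ 2) with h_large | h_small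
  · refine (hc.surfaceArea_le_four_mul_relVariance hN h_dim h_degree hj h_large).trans ?_
    have h_error := one_le_scaleError d
    have h_factor := four_le_scaleFactor d
    gcongr
    · exact c.relVariance_nonneg
    · calc (4 : ℝ) ≤ scaleFactor d * M := by nlinarith
        _ ≤ _ := le_add_of_nonneg_right (by positivity)
  · exact hc.surfaceArea_le_of_small_mean hd hβ hN h_dim h_degree hj hM h_area hJ h_card h_small

end CubePoly

end ScaleStep

section Iteration

variable {β N d j n u : ℕ}

/-- The constant in the bound `exp (exponentConst d * β)` obtained after `β` scale steps. -/
noncomputable def exponentConst (d : ℕ) : ℝ :=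
  Real.log (scaleFactor d + scaleError d) + (96 * d + 42) * Real.log 4

lemma exponentConst_pos (d : ℕ) : 0 < exponentConst d := by
  have h_log : 0 ≤ Real.log (scaleFactor d + scaleError d) :=
    Real.log_nonneg (by linarith [four_le_scaleFactor d, one_le_scaleError d])
  have : 0 < Real.log 4 := Real.log_pos (by norm_num)
  unfold exponentConst
  positivity

lemma exp_exponentConst_mul (d β : ℕ) :
    Real.exp (exponentConst d * β)
      = (scaleFactor d + scaleError d) ^ β * ((4 : ℝ) ^ β) ^ (96 * d + 42) := by
  have h_pos : 0 < scaleFactor d + scaleError d := by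
    linarith [four_le_scaleFactor d, one_le_scaleError d]
  have h_log : exponentConst d * β = β * Real.log (scaleFactor d + scaleError d)
      + (β * (96 * d + 42) : ℕ) * Real.log 4 := by
    rw [exponentConst]
    push_cast
    ring
  rw [h_log, Real.exp_add, Real.exp_nat_mul, Real.exp_nat_mul, Real.exp_log h_pos,
    Real.exp_log four_pos, ← pow_mul]

lemma le_four_pow_pow_of_sqrt_log_le (hn : n ≠ 0) (h : √(Real.log n) ≤ β) : n ≤ (4 ^ β) ^ β := by
  have h_log : Real.log n ≤ (β * β : ℕ) := by
    push_cast
    rw [← sq]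
    exact (Real.sqrt_le_left (Nat.cast_nonneg β)).mp h
  have h_cast : (n : ℝ) ≤ 4 ^ (β * β) := by
    calc (n : ℝ) = Real.exp (Real.log n) := (Real.exp_log (by positivity)).symm
      _ ≤ Real.exp (β * β : ℕ) := Real.exp_le_exp.mpr h_log
      _ = Real.exp 1 ^ (β * β) := (Real.exp_one_pow _).symm
      _ ≤ 4 ^ (β * β) := by
        gcongr
        linarith [Real.exp_one_lt_d9]
  rw [← pow_mul]
  exact_mod_cast h_cast

lemma nine_pow_le_two_pow (d u : ℕ) : (9 : ℝ) ^ (d * (2 * u)) ≤ 2 ^ (8 * d * u) := by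
  calc (9 : ℝ) ^ (d * (2 * u)) ≤ (2 ^ 4) ^ (d * (2 * u)) := by
        gcongr
        norm_num
    _ = 2 ^ (8 * d * u) := by
        rw [← pow_mul]
        congr 1
        ring

lemma mul_add_two_le_two_pow (hd : 1 ≤ d) (hu : 8 * d ≤ u) : 8 * d * u + 2 ≤ 2 ^ (2 * u) := by
  calc 8 * d * u + 2 ≤ (u + 1) ^ 2 := by nlinarith
    _ ≤ (2 ^ u) ^ 2 := by
        gcongr
        exact Nat.lt_two_pow_self
    _ = 2 ^ (2 * u) := by rw [← pow_mul, mul_comm]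

lemma half_le_sqrt_log (hn : 2 ≤ n) : 1 / 2 ≤ √(Real.log n) := by
  refine Real.le_sqrt_of_sq_le ?_
  calc (1 / 2 : ℝ) ^ 2 ≤ Real.log 2 := by linarith [Real.log_two_gt_d9]
    _ ≤ Real.log n := Real.log_le_log two_pos (by exact_mod_cast hn)

lemma exists_scale (d : ℕ) (hn : 2 ≤ n) :
    ∃ u : ℕ, 8 * d ≤ u ∧ √(Real.log n) ≤ u ∧ u ≤ (3 + 16 * d) * √(Real.log n) := by
  refine ⟨⌈√(Real.log n)⌉₊ + 8 * d, Nat.le_add_left _ _, ?_, ?_⟩ <;> push_cast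
  · exact (Nat.le_ceil _).trans (le_add_of_nonneg_right (by positivity))
  · have h_ceil := Nat.ceil_lt_add_one (Real.sqrt_nonneg (Real.log n))
    have h_degree := mul_le_mul_of_nonneg_left (half_le_sqrt_log hn) (Nat.cast_nonneg (α := ℝ) d)
    linarith [half_le_sqrt_log hn]

namespace CubePoly

variable {ι : Type*} [Fintype ι] [DecidableEq ι] {c : CubePoly ι}

lemma hasAreaBound_pow (hd : 1 ≤ d) (hβ : 3 ≤ β) (hN : N = 4 ^ β)
    (h_dim : Fintype.card ι ≤ N ^ β) (h_degree : (9 : ℝ) ^ (d * j) ≤ 2 ^ β) (hj : β + 2 ≤ 2 ^ j)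
    (k : ℕ) :
    HasAreaBound ι d (N ^ (k + 2))
      ((scaleFactor d + scaleError d) ^ k * (4 * (N : ℝ) ^ (96 * d + 41))) := by
  have hN_one : (1 : ℝ) ≤ N := by
    exact_mod_cast le_trans (by norm_num) (sixty_four_le_of_eq_four_pow hβ hN)
  have h_factor := four_le_scaleFactor d
  have h_error := one_le_scaleError d
  induction k with
  | zero =>
    intro c J _ hJ h_card
    refine hJ.surfaceArea_le_card_mul_relVariance.trans ?_
    rw [pow_zero, one_mul]
    gcongr
    · exact c.relVariance_nonneg
    · calc (#J : ℝ) ≤ (N : ℝ) ^ 2 := by exact_mod_cast h_card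
        _ ≤ N ^ (96 * d + 41) := pow_le_pow_right₀ hN_one (by omega)
  | succ k ih =>
    set M := (scaleFactor d + scaleError d) ^ k * (4 * (N : ℝ) ^ (96 * d + 41))
    have h_pow : (1 : ℝ) ≤ N ^ (96 * d + 41) := one_le_pow₀ hN_one
    have hM : (N : ℝ) ^ (96 * d + 41) ≤ M := by
      calc (N : ℝ) ^ (96 * d + 41) ≤ 4 * (N : ℝ) ^ (96 * d + 41) := by linarith
        _ ≤ M := le_mul_of_one_le_left (by positivity) (one_le_pow₀ (by linarith))
    intro c J hc hJ h_card
    refine (ih.succ hd hβ hN h_dim h_degree hj (h_pow.trans hM) c J hc hJ h_card).trans ?_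
    gcongr
    · exact c.relVariance_nonneg
    · calc scaleFactor d * M + scaleError d * (N : ℝ) ^ (96 * d + 41)
          ≤ scaleFactor d * M + scaleError d * M := by gcongr
        _ = _ := by
          rw [pow_succ]
          ring

lemma DegreeLE.surfaceArea_le_exp_mul (hd : 1 ≤ d) (hβ : 3 ≤ β)
    (h_dim : Fintype.card ι ≤ (4 ^ β) ^ β) (h_degree : (9 : ℝ) ^ (d * j) ≤ 2 ^ β)
    (hj : β + 2 ≤ 2 ^ j) (hc : c.DegreeLE d) :
    c.surfaceArea ≤ Real.exp (exponentConst d * β) := by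
  have h_card : #(univ : Finset ι) ≤ (4 ^ β) ^ (β + 2) := by
    rw [card_univ]
    exact h_dim.trans (Nat.pow_le_pow_right (by positivity) (by omega))
  have h_pos : 0 ≤ scaleFactor d + scaleError d := by
    linarith [four_le_scaleFactor d, one_le_scaleError d]
  have h_four : (4 : ℝ) ≤ 4 ^ β := le_self_pow₀ (by norm_num) (by omega)
  calc c.surfaceArea
      ≤ (scaleFactor d + scaleError d) ^ β * (4 * ((4 ^ β : ℕ) : ℝ) ^ (96 * d + 41))
          * c.relVariance :=
        hasAreaBound_pow hd hβ rfl h_dim h_degree hj β c univ hc c.supportedOn_univ h_card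
    _ ≤ (scaleFactor d + scaleError d) ^ β * (4 * ((4 ^ β : ℕ) : ℝ) ^ (96 * d + 41)) :=
        mul_le_of_le_one_right (by positivity) c.relVariance_le_one
    _ ≤ (scaleFactor d + scaleError d) ^ β * (4 ^ β * (4 ^ β) ^ (96 * d + 41)) := by
        push_cast
        gcongr
    _ = Real.exp (exponentConst d * β) := by rw [exp_exponentConst_mul, ← pow_succ']

lemma DegreeLE.surfaceArea_le_exp_sqrt_log (hd : 1 ≤ d) (h_dim : 2 ≤ Fintype.card ι)
    (hc : c.DegreeLE d) :
    c.surfaceArea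
      ≤ Real.exp (exponentConst d * (8 * d * (3 + 16 * d)) * √(Real.log (Fintype.card ι))) := by
  obtain ⟨u, h_degree, h_lower, h_upper⟩ := exists_scale d h_dim
  have h_scale : u ≤ 8 * d * u := Nat.le_mul_of_pos_left u (by omega)
  have h_card : Fintype.card ι ≤ (4 ^ (8 * d * u)) ^ (8 * d * u) :=
    le_four_pow_pow_of_sqrt_log_le (by omega) (h_lower.trans (by exact_mod_cast h_scale))
  refine (hc.surfaceArea_le_exp_mul hd (by omega) h_card (nine_pow_le_two_pow d u)
    (mul_add_two_le_two_pow hd h_degree)).trans (Real.exp_le_exp.mpr ?_)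
  have h_const := exponentConst_pos d
  calc exponentConst d * (8 * d * u : ℕ) = exponentConst d * (8 * d) * u := by
        push_cast
        ring
    _ ≤ exponentConst d * (8 * d) * ((3 + 16 * d) * √(Real.log (Fintype.card ι))) := by gcongr
    _ = exponentConst d * (8 * d * (3 + 16 * d)) * √(Real.log (Fintype.card ι)) := by ring

end CubePoly

end Iteration

section ThresholdFunctions

variable {ι : Type*} [DecidableEq ι] {p : MvPolynomial ι ℝ} {d : ℕ}

lemma sign_ne_sign_iff_mul_neg {a b : ℝ} (ha : a ≠ 0) (hb : b ≠ 0) :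
    Real.sign b ≠ Real.sign a ↔ a * b < 0 := by
  rcases ha.lt_or_gt with ha | ha <;> rcases hb.lt_or_gt with hb | hb <;>
    norm_num [Real.sign, ha, hb, ha.not_gt, hb.not_gt, mul_neg_iff]

lemma toFinsupp_support_val {m : ι →₀ ℕ} (h : ∀ i, m i ≤ 1) :
    Multiset.toFinsupp m.support.val = m := by
  ext i
  rw [Multiset.toFinsupp_apply, Multiset.count_eq_of_nodup m.support.nodup]
  have := h i
  split_ifs with hi <;> simp only [mem_val, Finsupp.mem_support_iff] at hi <;> omega

namespace CubePoly

/-- The coefficients of the square-free monomials of `p`. -/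
noncomputable def ofMvPolynomial (p : MvPolynomial ι ℝ) : CubePoly ι :=
  fun S => p.coeff (Multiset.toFinsupp S.val)

lemma eval_ofMvPolynomial [Fintype ι] (h : ∀ m ∈ p.support, ∀ i, m i ≤ 1) (y : ι → ℝ) :
    (ofMvPolynomial p).eval y = MvPolynomial.eval y p := by
  rw [MvPolynomial.eval_eq, eval]
  symm
  refine sum_of_injOn Finsupp.support (fun m hm m' hm' h_eq => ?_)
    (fun m _ => mem_coe.mpr (mem_univ _)) (fun S _ hS => ?_) fun m hm => ?_
  · rw [← toFinsupp_support_val (h m hm), h_eq, toFinsupp_support_val (h m' hm')]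
  · rw [ofMvPolynomial, MvPolynomial.notMem_support_iff.mp, zero_mul]
    exact fun h_mem => hS ⟨_, h_mem, by rw [Multiset.toFinsupp_support, val_toFinset]⟩
  · rw [ofMvPolynomial, toFinsupp_support_val (h m hm)]
    congr 1
    refine prod_congr rfl fun i hi => ?_
    have := h m hm i
    rw [show m i = 1 by have := Finsupp.mem_support_iff.mp hi; omega, pow_one]

lemma degreeLE_ofMvPolynomial (h : p.totalDegree ≤ d) : (ofMvPolynomial p).DegreeLE d := by
  intro S hS
  by_contra h_ne
  have h_le := MvPolynomial.le_totalDegree (MvPolynomial.mem_support_iff.mpr h_ne)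
  have h_card := Multiset.toFinsupp_sum_eq S.val
  rw [card_val] at h_card
  exact absurd (h_card.symm.trans_le (h_le.trans h)) hS.not_ge

end CubePoly

lemma IsPTF.exists_BSA_eq_surfaceArea {n d : ℕ} {f : (Fin n → Bool) → ℝ} (hf : IsPTF d f) :
    ∃ c : CubePoly (Fin n), c.DegreeLE d ∧ BSA f = c.surfaceArea := by
  obtain ⟨p, h_multilinear, h_degree, h_sign⟩ := hf
  refine ⟨CubePoly.ofMvPolynomial p, CubePoly.degreeLE_ofMvPolynomial h_degree, ?_⟩
  have h_pev (x : Fin n → Bool) : (CubePoly.ofMvPolynomial p).evalCube x = pev p x :=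
    CubePoly.eval_ofMvPolynomial h_multilinear _
  have h_sens (x : Fin n → Bool) : sens f x = (CubePoly.ofMvPolynomial p).signChanges x := by
    rw [sens, CubePoly.signChanges]
    refine congrArg card (filter_congr fun i _ => ?_)
    rw [(h_sign x).2, (h_sign _).2, sign_ne_sign_iff_mul_neg (h_sign x).1 (h_sign _).1, h_pev,
      h_pev, flipAt]
  simp only [BSA, CubePoly.surfaceArea, iidExpect, uniformBit, h_sens, prod_const, card_univ,
    Fintype.card_fin, ← mul_sum, one_div, inv_pow, div_eq_inv_mul _ ((2 : ℝ) ^ n)]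

end ThresholdFunctions

/-- The weaker bound: every degree-`d` PTF has Boolean surface area at most
`exp(C_d √(log n))`. -/
theorem bsa_ptf_weak_bound (d : ℕ) (hd : 1 ≤ d) :
    ∃ C : ℝ, 0 < C ∧ ∀ n : ℕ, 2 ≤ n → ∀ f : (Fin n → Bool) → ℝ, IsPTF d f →
      BSA f ≤ Real.exp (C * Real.sqrt (Real.log n)) := by
  have h_const := exponentConst_pos d
  refine ⟨exponentConst d * (8 * d * (3 + 16 * d)), by positivity, fun n hn f hf => ?_⟩
  obtain ⟨c, hc, h_eq⟩ := hf.exists_BSA_eq_surfaceArea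
  simpa only [h_eq, Fintype.card_fin] using
    hc.surfaceArea_le_exp_sqrt_log hd (hn.trans_eq (Fintype.card_fin n).symm)
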